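/- arXiv:1308.5695 — 3 statements merged into one kernel-verified Lean document; each statement's English description precedes it below -/
import Mathlib

section
/- Let n ≥ 1, p ∈ (0, ∞), and let q satisfy 1/q = 1/p + n. Let w : ℝⁿ → [0,∞) be measurable, p-concave and p-homogeneous, and let μ be the measure with density w with respect to Lebesgue measure. Let A, B ⊆ ℝⁿ be two convex sets with μ(A), μ(B) ∈ (0,∞), and assume μ⁺_B(A) = (1/q)·μ(B)^q·μ(A)^{1−q}. Then there exist m > 0, b ∈ ℝⁿ and c > 0 such that A coincides with mB+b up to a set of zero μ-measure, and w(mx+b) = c·w(x) for Lebesgue-almost all x ∈ B. -/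
open MeasureTheory Set Filter
open scoped Pointwise ENNReal Topology

/-- The (outer) Minkowski boundary measure of `A` with respect to `B`:
`μ⁺_B(A) := liminf_{ε → 0⁺} μ((A + εB) \ A) / ε`. -/
noncomputable def mBoundary {n : ℕ} (μ : Measure (Fin n → ℝ)) (B A : Set (Fin n → ℝ)) :
    ℝ≥0∞ :=
  Filter.liminf (fun ε : ℝ => μ ((A + ε • B) \ A) / ENNReal.ofReal ε) (𝓝[>] (0 : ℝ))

/-!
Since `w ^ p` is superadditive on the support of `w`, the Borell–Brascamp–Lieb inequality gives the
Brunn–Minkowski inequality with exponent `q` for `μ` and convex sets. It makes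
`ε ↦ μ (A + ε • B) ^ q` lie above its chords from `0`, so equality for the boundary measure
forces this function to have the slope `μ B ^ q` of the Brunn–Minkowski lower bound. After `B` is
dilated to the mass of `A`, the two sets therefore achieve equality in the Brunn–Minkowski
inequality, and so do the open convex sets `A₀`, `B₀` on which the weight is positive. By the
one-dimensional case of Borell–Brascamp–Lieb and its equality case, proved by monotone transport,
the marginals of `μ` restricted to `A₀` and to `B₀` in any direction are translates of each other;
by Cramér–Wold the restricted measures themselves are translates by some vector `b`. Finally, if
`z ∈ B` has `w (z + b) > 0`, then `B₀ + z + b` lies in the support of `w`, hence in `A₀ + B₀` by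
equality, so `B₀` is stable under taking midpoints with `z` and `z` lies in the closure of `B₀`.
-/

section BrunnMinkowski

lemma volume_add_volume_le_of_isCompact {K L : Set ℝ} (hK : IsCompact K) (hL : IsCompact L)
    (hK0 : K.Nonempty) (hL0 : L.Nonempty) : volume K + volume L ≤ volume (K + L) := by
  -- The translates of `K` by `min L` and of `L` by `max K` lie in `K + L` and share one point.
  have ha := hK.sSup_mem hK0
  have hb := hL.sInf_mem hL0
  set a := sSup K
  set b := sInf L
  have hsub : (· + b) '' K ∪ (a + ·) '' L ⊆ K + L := by
    rintro _ (⟨x, hx, rfl⟩ | ⟨x, hx, rfl⟩)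
    · exact add_mem_add hx hb
    · exact add_mem_add ha hx
  have hinter : (· + b) '' K ∩ (a + ·) '' L ⊆ {a + b} := by
    rintro z ⟨⟨x, hx, hxz⟩, ⟨y, hy, hyz⟩⟩
    have hxa : x ≤ a := le_csSup hK.bddAbove hx
    have hby : b ≤ y := csInf_le hL.bddBelow hy
    simp only at hxz hyz
    rw [mem_singleton_iff]
    linarith
  have hdisj : AEDisjoint volume ((· + b) '' K) ((a + ·) '' L) :=
    measure_mono_null hinter (by simp)
  have hmeas : MeasurableSet ((a + ·) '' L) := (hL.image (by fun_prop)).measurableSet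
  calc volume K + volume L
      = volume ((· + b) '' K) + volume ((a + ·) '' L) := by
        rw [image_add_right, image_add_left, measure_preimage_add_right, measure_preimage_add]
    _ = volume ((· + b) '' K ∪ (a + ·) '' L) :=
        (measure_union₀ hmeas.nullMeasurableSet hdisj).symm
    _ ≤ volume (K + L) := measure_mono hsub

lemma volume_add_volume_le {X Y : Set ℝ} (hX : MeasurableSet X) (hY : MeasurableSet Y)
    (hX0 : X.Nonempty) (hY0 : Y.Nonempty) : volume X + volume Y ≤ volume (X + Y) := by
  obtain ⟨x, hx⟩ := hX0
  obtain ⟨y, hy⟩ := hY0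
  have hcompact : ∀ K ⊆ X, IsCompact K → ∀ L ⊆ Y, IsCompact L →
      volume K + volume L ≤ volume (X + Y) := by
    intro K hKX hK L hLY hL
    calc volume K + volume L ≤ volume (insert x K) + volume (insert y L) := by
          gcongr <;> exact subset_insert _ _
      _ ≤ volume (insert x K + insert y L) :=
          volume_add_volume_le_of_isCompact (hK.insert x) (hL.insert y)
            (insert_nonempty _ _) (insert_nonempty _ _)
      _ ≤ volume (X + Y) :=
          measure_mono (add_subset_add (insert_subset hx hKX) (insert_subset hy hLY))
  rw [hX.measure_eq_iSup_isCompact, hY.measure_eq_iSup_isCompact]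
  simp only [iSup_and', iSup_subtype']
  have : Nonempty {K : Set ℝ // K ⊆ X ∧ IsCompact K} := ⟨⟨∅, empty_subset _, isCompact_empty⟩⟩
  have : Nonempty {K : Set ℝ // K ⊆ Y ∧ IsCompact K} := ⟨⟨∅, empty_subset _, isCompact_empty⟩⟩
  exact ENNReal.iSup_add_iSup_le fun K L => hcompact K.1 K.2.1 K.2.2 L.1 L.2.1 L.2.2

lemma lintegral_eq_lintegral_meas_ofReal_lt {α : Type*} [MeasurableSpace α] (μ : Measure α)
    {f : α → ℝ≥0∞} (hf : Measurable f) (hfin : ∀ x, f x ≠ ⊤) :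
    ∫⁻ x, f x ∂μ = ∫⁻ t in Ioi (0 : ℝ), μ {x | ENNReal.ofReal t < f x} := by
  have h := lintegral_eq_lintegral_meas_lt (f := fun x => (f x).toReal) μ
    (Eventually.of_forall fun x => ENNReal.toReal_nonneg) hf.ennreal_toReal.aemeasurable
  simp only [ENNReal.ofReal_toReal (hfin _)] at h
  rw [h]
  refine setLIntegral_congr_fun measurableSet_Ioi fun t ht => ?_
  simp only [ENNReal.ofReal_lt_iff_lt_toReal (le_of_lt (mem_Ioi.1 ht)) (hfin _)]

lemma lintegral_add_lintegral_le_of_min_le {f g h : ℝ → ℝ≥0∞} (hf : Measurable f)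
    (hg : Measurable g) (hh : Measurable h) (hf1 : ⨆ s, f s = 1) (hg1 : ⨆ s, g s = 1)
    (hmin : ∀ s t, min (f s) (g t) ≤ h (s + t)) :
    (∫⁻ s, f s) + ∫⁻ s, g s ≤ ∫⁻ s, h s := by
  have hfle : ∀ s, f s ≤ 1 := fun s => hf1 ▸ le_iSup f s
  have hgle : ∀ s, g s ≤ 1 := fun s => hg1 ▸ le_iSup g s
  have hne_top : ∀ {u : ℝ → ℝ≥0∞}, (∀ s, u s ≤ 1) → ∀ s, u s ≠ ⊤ :=
    fun hu s => ((hu s).trans_lt ENNReal.one_lt_top).ne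
  have hlevel : Measurable fun t : ℝ => volume {s | ENNReal.ofReal t < f s} :=
    Antitone.measurable fun a b hab => measure_mono fun s hs =>
      (ENNReal.ofReal_le_ofReal hab).trans_lt hs
  refine le_trans ?_ (lintegral_mono fun s => min_le_left (h s) 1)
  rw [lintegral_eq_lintegral_meas_ofReal_lt _ hf (hne_top hfle),
    lintegral_eq_lintegral_meas_ofReal_lt _ hg (hne_top hgle),
    lintegral_eq_lintegral_meas_ofReal_lt _ (hh.min measurable_const)
      (hne_top fun s => min_le_right (h s) 1),
    ← lintegral_add_left' hlevel.aemeasurable]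
  refine lintegral_mono fun t => ?_
  rcases le_or_gt 1 (ENNReal.ofReal t) with ht | ht
  · simp [((hfle _).trans ht).not_gt, ((hgle _).trans ht).not_gt]
  · refine (volume_add_volume_le (measurableSet_lt measurable_const hf)
      (measurableSet_lt measurable_const hg) (lt_iSup_iff.1 (ht.trans_eq hf1.symm))
      (lt_iSup_iff.1 (ht.trans_eq hg1.symm))).trans (measure_mono ?_)
    rintro _ ⟨s, hs, u, hu, rfl⟩
    exact lt_min ((lt_min hs hu).trans_le (hmin s u)) ht

/-- The pointwise hypothesis of the Borell–Brascamp–Lieb inequality of order `p`, in additive form: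
`h (x + y)` dominates the `ℓᵖ` sum of `f x` and `g y` wherever both are nonzero. -/
def RpowSuperadditive {E : Type*} [Add E] (p : ℝ) (f g h : E → ℝ≥0∞) : Prop :=
  ∀ x y, f x ≠ 0 → g y ≠ 0 → (f x ^ p + g y ^ p) ^ p⁻¹ ≤ h (x + y)

lemma rpow_add_rpow_rpow_inv_ne_zero {a b : ℝ≥0∞} {p : ℝ} (hp : 0 < p) (ha : a ≠ 0) :
    (a ^ p + b ^ p) ^ p⁻¹ ≠ 0 := by
  simp [ENNReal.rpow_eq_zero_iff, hp, hp.not_gt, ha]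

lemma rpow_add_rpow_rpow_inv_ne_top {a b : ℝ≥0∞} {p : ℝ} (hp : 0 < p) (ha : a ≠ ⊤)
    (hb : b ≠ ⊤) : (a ^ p + b ^ p) ^ p⁻¹ ≠ ⊤ :=
  ENNReal.rpow_ne_top_of_nonneg (inv_nonneg.2 hp.le) (ENNReal.add_ne_top.2
    ⟨ENNReal.rpow_ne_top_of_nonneg hp.le ha, ENNReal.rpow_ne_top_of_nonneg hp.le hb⟩)

lemma mul_rpow_add_mul_rpow_rpow_inv {p : ℝ} (hp : 0 < p) (c a b : ℝ≥0∞) :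
    ((c * a) ^ p + (c * b) ^ p) ^ p⁻¹ = c * (a ^ p + b ^ p) ^ p⁻¹ := by
  rw [ENNReal.mul_rpow_of_nonneg _ _ hp.le, ENNReal.mul_rpow_of_nonneg _ _ hp.le, ← mul_add,
    ENNReal.mul_rpow_of_nonneg _ _ (inv_nonneg.2 hp.le), ENNReal.rpow_rpow_inv hp.ne']

namespace RpowSuperadditive

lemma mono {E : Type*} [Add E] {p : ℝ} (hp : 0 ≤ p) {f g h f' g' : E → ℝ≥0∞}
    (H : RpowSuperadditive p f g h) (hf : ∀ x, f' x ≤ f x) (hg : ∀ x, g' x ≤ g x) :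
    RpowSuperadditive p f' g' h := by
  intro x y hx hy
  refine le_trans ?_ (H x y ((pos_iff_ne_zero.2 hx).trans_le (hf x)).ne'
    ((pos_iff_ne_zero.2 hy).trans_le (hg y)).ne')
  gcongr
  exacts [hf x, hg y]

lemma min_div_le_div {E : Type*} [Add E] {p : ℝ} (hp : 0 < p) {f g h : E → ℝ≥0∞}
    (H : RpowSuperadditive p f g h) {a b : ℝ≥0∞} (ha0 : a ≠ 0) (ha : a ≠ ⊤) (hb0 : b ≠ 0)
    (hb : b ≠ ⊤) (x y : E) :
    min (f x / a) (g y / b) ≤ h (x + y) / (a ^ p + b ^ p) ^ p⁻¹ := by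
  set r := min (f x / a) (g y / b)
  rcases eq_or_ne r 0 with hr | hr
  · simp [hr]
  have hrf : r * a ≤ f x :=
    (ENNReal.le_div_iff_mul_le (Or.inl ha0) (Or.inl ha)).1 (min_le_left _ _)
  have hrg : r * b ≤ g y :=
    (ENNReal.le_div_iff_mul_le (Or.inl hb0) (Or.inl hb)).1 (min_le_right _ _)
  rw [ENNReal.le_div_iff_mul_le (Or.inl (rpow_add_rpow_rpow_inv_ne_zero hp ha0))
    (Or.inl (rpow_add_rpow_rpow_inv_ne_top hp ha hb)), ← mul_rpow_add_mul_rpow_rpow_inv hp]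
  refine le_trans ?_ (H x y ((pos_iff_ne_zero.2 (mul_ne_zero hr ha0)).trans_le hrf).ne'
    ((pos_iff_ne_zero.2 (mul_ne_zero hr hb0)).trans_le hrg).ne')
  gcongr

lemma iSup_mul_lintegral_div_add_le {p : ℝ} (hp : 0 < p) {f g h : ℝ → ℝ≥0∞}
    (H : RpowSuperadditive p f g h) (hf : Measurable f) (hg : Measurable g) (hh : Measurable h)
    (hf0 : ⨆ s, f s ≠ 0) (hft : ⨆ s, f s ≠ ⊤) (hg0 : ⨆ s, g s ≠ 0) (hgt : ⨆ s, g s ≠ ⊤) :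
    ((⨆ s, f s) ^ p + (⨆ s, g s) ^ p) ^ p⁻¹ *
      ((∫⁻ s, f s) / (⨆ s, f s) + (∫⁻ s, g s) / ⨆ s, g s) ≤ ∫⁻ s, h s := by
  have hdiv := lintegral_add_lintegral_le_of_min_le (hf.div_const _) (hg.div_const _)
    (hh.div_const _) (by rw [← ENNReal.iSup_div, ENNReal.div_self hf0 hft])
    (by rw [← ENNReal.iSup_div, ENNReal.div_self hg0 hgt])
    (H.min_div_le_div hp hf0 hft hg0 hgt)
  simp only [div_eq_mul_inv] at hdiv ⊢
  rwa [lintegral_mul_const _ hf, lintegral_mul_const _ hg, lintegral_mul_const _ hh,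
    ← div_eq_mul_inv (∫⁻ s, h s), ENNReal.le_div_iff_mul_le
      (Or.inl (rpow_add_rpow_rpow_inv_ne_zero hp hf0))
      (Or.inl (rpow_add_rpow_rpow_inv_ne_top hp hft hgt)), mul_comm] at hdiv

end RpowSuperadditive

lemma rpow_add_rpow_rpow_inv_le_mul_div_add_div {a b I J : ℝ≥0∞} (ha0 : a ≠ 0) (ha : a ≠ ⊤)
    (hb0 : b ≠ 0) (hb : b ≠ ⊤) {p q : ℝ} (hp : 0 < p) (hq : 0 < q) (hpq : q⁻¹ = p⁻¹ + 1) :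
    (I ^ q + J ^ q) ^ q⁻¹ ≤ (a ^ p + b ^ p) ^ p⁻¹ * (I / a + J / b) := by
  -- Hölder's inequality on two points for the exponents `p / q` and `q⁻¹`.
  have hsum : q / p + q = 1 := by field_simp at hpq ⊢; linarith
  have hconj : (p / q).HolderConjugate q⁻¹ := by
    rw [Real.holderConjugate_iff, inv_div, inv_inv]
    refine ⟨?_, hsum⟩
    rw [lt_div_iff₀ hq, one_mul, ← div_lt_one hp]
    linarith
  have hholder := ENNReal.inner_le_Lp_mul_Lq (Finset.univ : Finset (Fin 2)) ![a ^ q, b ^ q]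
    ![(I / a) ^ q, (J / b) ^ q] hconj
  have hcancel : ∀ x y : ℝ≥0∞, x ≠ 0 → x ≠ ⊤ → x ^ q * (y / x) ^ q = y ^ q := by
    intro x y hx0 hx
    rw [← ENNReal.mul_rpow_of_nonneg _ _ hq.le, ENNReal.mul_div_cancel hx0 hx]
  simp only [Fin.sum_univ_two, Matrix.cons_val_zero, Matrix.cons_val_one, hcancel a I ha0 ha,
    hcancel b J hb0 hb, ← ENNReal.rpow_mul, mul_div_cancel₀ p hq.ne', mul_inv_cancel₀ hq.ne',
    ENNReal.rpow_one] at hholder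
  calc (I ^ q + J ^ q) ^ q⁻¹
      ≤ ((a ^ p + b ^ p) ^ (1 / (p / q)) * (I / a + J / b) ^ (1 / q⁻¹)) ^ q⁻¹ := by gcongr
    _ = (a ^ p + b ^ p) ^ p⁻¹ * (I / a + J / b) := by
      rw [ENNReal.mul_rpow_of_nonneg _ _ (inv_nonneg.2 hq.le), ← ENNReal.rpow_mul,
        ← ENNReal.rpow_mul, show 1 / (p / q) * q⁻¹ = p⁻¹ by field_simp,
        show 1 / q⁻¹ * q⁻¹ = 1 by field_simp, ENNReal.rpow_one]

lemma tendsto_lintegral_min_natCast {α : Type*} [MeasurableSpace α] (μ : Measure α)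
    {f : α → ℝ≥0∞} (hf : Measurable f) :
    Tendsto (fun k : ℕ => ∫⁻ x, min (f x) k ∂μ) atTop (𝓝 (∫⁻ x, f x ∂μ)) := by
  refine lintegral_tendsto_of_tendsto_of_monotone (fun k => (hf.min measurable_const).aemeasurable)
    (Eventually.of_forall fun x i j hij => by dsimp only; gcongr) (Eventually.of_forall fun x => ?_)
  have h := (continuous_const (y := f x)).min continuous_id |>.tendsto (⊤ : ℝ≥0∞)
  simpa [Function.comp_def] using h.comp ENNReal.tendsto_nat_nhds_top

lemma iSup_min_natCast_ne_zero {f : ℝ → ℝ≥0∞} (hf : ∫⁻ s, f s ≠ 0) {k : ℕ} (hk : 0 < k) :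
    ⨆ s, min (f s) k ≠ 0 := by
  contrapose! hf
  have hzero : ∀ s, f s = 0 := fun s => by
    simpa [hk.ne'] using min_eq_bot.1 (ENNReal.iSup_eq_zero.1 hf s)
  simp [hzero]

lemma RpowSuperadditive.lintegral_rpow_add_le_of_real {p q : ℝ} (hp : 0 < p) (hq : 0 < q)
    (hpq : q⁻¹ = p⁻¹ + 1) {f g h : ℝ → ℝ≥0∞} (H : RpowSuperadditive p f g h) (hf : Measurable f)
    (hg : Measurable g) (hh : Measurable h) (hf0 : ∫⁻ s, f s ≠ 0) (hg0 : ∫⁻ s, g s ≠ 0) :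
    ((∫⁻ s, f s) ^ q + (∫⁻ s, g s) ^ q) ^ q⁻¹ ≤ ∫⁻ s, h s := by
  have hlim : Tendsto (fun k : ℕ => ((∫⁻ s, min (f s) k) ^ q + (∫⁻ s, min (g s) k) ^ q) ^ q⁻¹)
      atTop (𝓝 (((∫⁻ s, f s) ^ q + (∫⁻ s, g s) ^ q) ^ q⁻¹)) :=
    (ENNReal.continuous_rpow_const.tendsto _).comp
      (((ENNReal.continuous_rpow_const.tendsto _).comp (tendsto_lintegral_min_natCast _ hf)).add
        ((ENNReal.continuous_rpow_const.tendsto _).comp (tendsto_lintegral_min_natCast _ hg)))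
  have hne_top : ∀ (u : ℝ → ℝ≥0∞) (k : ℕ), ⨆ s, min (u s) k ≠ ⊤ := fun u k =>
    ((iSup_le fun s => min_le_right _ _).trans_lt (ENNReal.natCast_lt_top k)).ne
  refine le_of_tendsto hlim ?_
  filter_upwards [eventually_gt_atTop 0] with k hk
  have hf0' := iSup_min_natCast_ne_zero hf0 hk
  have hg0' := iSup_min_natCast_ne_zero hg0 hk
  exact (rpow_add_rpow_rpow_inv_le_mul_div_add_div hf0' (hne_top f k) hg0' (hne_top g k)
    hp hq hpq).trans ((H.mono hp.le (fun s => min_le_left (f s) k)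
      fun s => min_le_left (g s) k).iSup_mul_lintegral_div_add_le hp (hf.min measurable_const)
        (hg.min measurable_const) hh hf0' (hne_top f k) hg0' (hne_top g k))

/-- The marginal of a function on `ℝᵏ⁺¹` along the first coordinate. -/
noncomputable def finMarginal {k : ℕ} (f : (Fin (k + 1) → ℝ) → ℝ≥0∞) (s : ℝ) : ℝ≥0∞ :=
  ∫⁻ y : Fin k → ℝ, f (Fin.cons s y)

lemma measurable_finCons {k : ℕ} :
    Measurable fun z : ℝ × (Fin k → ℝ) => (Fin.cons z.1 z.2 : Fin (k + 1) → ℝ) := by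
  refine measurable_pi_iff.2 (Fin.cases ?_ fun j => ?_)
  · simpa using measurable_fst
  · simpa [Function.comp_def] using (measurable_pi_apply j).comp measurable_snd

lemma measurable_finCons_right {k : ℕ} (s : ℝ) :
    Measurable fun y : Fin k → ℝ => (Fin.cons s y : Fin (k + 1) → ℝ) :=
  measurable_finCons.comp measurable_prodMk_left

lemma finCons_add_finCons {k : ℕ} (s t : ℝ) (x y : Fin k → ℝ) :
    (Fin.cons s x + Fin.cons t y : Fin (k + 1) → ℝ) = Fin.cons (s + t) (x + y) := by
  ext i
  refine Fin.cases ?_ (fun j => ?_) i <;> simp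

lemma measurable_finMarginal {k : ℕ} {f : (Fin (k + 1) → ℝ) → ℝ≥0∞} (hf : Measurable f) :
    Measurable (finMarginal f) :=
  (hf.comp measurable_finCons).lintegral_prod_right'

lemma lintegral_finMarginal {k : ℕ} {f : (Fin (k + 1) → ℝ) → ℝ≥0∞} (hf : Measurable f) :
    ∫⁻ s, finMarginal f s = ∫⁻ x, f x := by
  have h := (volume_preserving_piFinSuccAbove (fun _ : Fin (k + 1) => ℝ) 0).symm
  rw [← h.lintegral_comp hf, Measure.volume_eq_prod, lintegral_prod]
  · simp [finMarginal, MeasurableEquiv.piFinSuccAbove, Fin.insertNthEquiv]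
  · exact (hf.comp (MeasurableEquiv.measurable _)).aemeasurable

lemma RpowSuperadditive.finCons {k : ℕ} {p : ℝ} {f g h : (Fin (k + 1) → ℝ) → ℝ≥0∞}
    (H : RpowSuperadditive p f g h) (s t : ℝ) :
    RpowSuperadditive p (fun y : Fin k → ℝ => f (Fin.cons s y)) (fun y => g (Fin.cons t y))
      fun y => h (Fin.cons (s + t) y) := fun x y hx hy => by
  simpa only [finCons_add_finCons] using H _ _ hx hy

/-- The **Borell–Brascamp–Lieb inequality** in additive form. -/
theorem RpowSuperadditive.lintegral_rpow_add_le {p : ℝ} (hp : 0 < p) {n : ℕ}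
    {f g h : (Fin n → ℝ) → ℝ≥0∞} (H : RpowSuperadditive p f g h) (hf : Measurable f)
    (hg : Measurable g) (hh : Measurable h) (hf0 : ∫⁻ x, f x ≠ 0) (hg0 : ∫⁻ x, g x ≠ 0) :
    ((∫⁻ x, f x) ^ (p⁻¹ + n)⁻¹ + (∫⁻ x, g x) ^ (p⁻¹ + n)⁻¹) ^ (p⁻¹ + (n : ℝ)) ≤ ∫⁻ x, h x := by
  induction n with
  | zero =>
    have heval : ∀ u : (Fin 0 → ℝ) → ℝ≥0∞, ∫⁻ x, u x = u 0 := fun u => by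
      rw [volume_pi, Measure.pi_of_empty, lintegral_dirac]
      exact congrArg u (Subsingleton.elim _ _)
    simp only [heval] at hf0 hg0 ⊢
    simpa using H 0 0 hf0 hg0
  | succ k ih =>
    have hN : 0 < p⁻¹ + k := by positivity
    have hmarginal : RpowSuperadditive (p⁻¹ + k)⁻¹ (finMarginal f) (finMarginal g)
        (finMarginal h) := fun s t hs ht => by
      simpa only [finMarginal, inv_inv] using ih (H.finCons s t)
        (hf.comp (measurable_finCons_right _)) (hg.comp (measurable_finCons_right _))
        (hh.comp (measurable_finCons_right _)) hs ht
    rw [← lintegral_finMarginal hf] at hf0 ⊢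
    rw [← lintegral_finMarginal hg] at hg0 ⊢
    rw [← lintegral_finMarginal hh]
    simpa only [inv_inv] using hmarginal.lintegral_rpow_add_le_of_real (inv_pos.2 hN)
      (q := (p⁻¹ + (k + 1 : ℕ))⁻¹) (by positivity) (by rw [inv_inv, inv_inv]; push_cast; ring)
      (measurable_finMarginal hf) (measurable_finMarginal hg) (measurable_finMarginal hh) hf0 hg0

end BrunnMinkowski

section Transport

/-- An integrable density on the line which is positive and continuous on the open interval `I`
and vanishes off `I`. -/
structure IsIntervalDensity (F : ℝ → ℝ) (I : Set ℝ) : Prop where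
  isOpen : IsOpen I
  ordConnected : I.OrdConnected
  continuousOn : ContinuousOn F I
  pos : ∀ s ∈ I, 0 < F s
  eq_zero : ∀ s, s ∉ I → F s = 0
  integrable : Integrable F

namespace IsIntervalDensity

variable {F : ℝ → ℝ} {I : Set ℝ}

lemma nonneg (h : IsIntervalDensity F I) (s : ℝ) : 0 ≤ F s := by
  by_cases hs : s ∈ I
  · exact (h.pos s hs).le
  · exact (h.eq_zero s hs).ge

lemma cdf_sub (h : IsIntervalDensity F I) (s t : ℝ) :
    (∫ x in Iic t, F x) - ∫ x in Iic s, F x = ∫ x in s..t, F x :=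
  intervalIntegral.integral_Iic_sub_Iic h.integrable.integrableOn h.integrable.integrableOn

lemma cdf_eq_add (h : IsIntervalDensity F I) (s : ℝ) :
    (fun t => ∫ x in Iic t, F x) = fun t => (∫ x in s..t, F x) + ∫ x in Iic s, F x := by
  ext t
  rw [← h.cdf_sub s t, sub_add_cancel]

lemma hasDerivAt_cdf (h : IsIntervalDensity F I) {s : ℝ} (hs : s ∈ I) :
    HasDerivAt (fun t => ∫ x in Iic t, F x) (F s) s := by
  rw [h.cdf_eq_add s]
  exact (intervalIntegral.integral_hasDerivAt_right h.integrable.intervalIntegrable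
    h.integrable.aestronglyMeasurable.stronglyMeasurableAtFilter
    (h.continuousOn.continuousAt (h.isOpen.mem_nhds hs))).add_const _

lemma continuous_cdf (h : IsIntervalDensity F I) : Continuous fun t => ∫ x in Iic t, F x := by
  rw [h.cdf_eq_add 0]
  exact (intervalIntegral.continuous_primitive
    (fun a b => h.integrable.intervalIntegrable) 0).add continuous_const

lemma strictMonoOn_cdf (h : IsIntervalDensity F I) :
    StrictMonoOn (fun t => ∫ x in Iic t, F x) I := by
  intro s hs t ht hst
  rw [← sub_pos, h.cdf_sub]
  exact intervalIntegral.intervalIntegral_pos_of_pos_on h.integrable.intervalIntegrable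
    (fun x hx => h.pos x (h.ordConnected.out hs ht (Ioo_subset_Icc_self hx))) hst

lemma cdf_mem_Ioo (h : IsIntervalDensity F I) {s : ℝ} (hs : s ∈ I) :
    ∫ x in Iic s, F x ∈ Ioo 0 (∫ x, F x) := by
  obtain ⟨l, u, hlu, hsub⟩ := mem_nhds_iff_exists_Ioo_subset.1 (h.isOpen.mem_nhds hs)
  obtain ⟨s₁, hs₁⟩ := exists_between hlu.1
  obtain ⟨s₂, hs₂⟩ := exists_between hlu.2
  constructor
  · exact (integral_nonneg fun x => h.nonneg x).trans_lt
      (h.strictMonoOn_cdf (hsub ⟨hs₁.1, hs₁.2.trans hlu.2⟩) hs hs₁.2)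
  · exact (h.strictMonoOn_cdf hs (hsub ⟨hlu.1.trans hs₂.1, hs₂.2⟩) hs₂.1).trans_le
      (setIntegral_le_integral h.integrable (Eventually.of_forall h.nonneg))

lemma tendsto_cdf_atTop (h : IsIntervalDensity F I) :
    Tendsto (fun t => ∫ x in Iic t, F x) atTop (𝓝 (∫ x, F x)) :=
  (aecover_Iic tendsto_id).integral_tendsto_of_countably_generated h.integrable

lemma cdf_add_Ioi (h : IsIntervalDensity F I) (s : ℝ) :
    (∫ x in Iic s, F x) + ∫ x in Ioi s, F x = ∫ x, F x :=
  intervalIntegral.integral_Iic_add_Ioi h.integrable.integrableOn h.integrable.integrableOn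

lemma tendsto_cdf_atBot (h : IsIntervalDensity F I) :
    Tendsto (fun t => ∫ x in Iic t, F x) atBot (𝓝 0) := by
  have htail : Tendsto (fun t => ∫ x in Ioi t, F x) atBot (𝓝 (∫ x, F x)) :=
    (aecover_Ioi tendsto_id).integral_tendsto_of_countably_generated h.integrable
  have hsub := (tendsto_const_nhds (x := ∫ x, F x)).sub htail
  rw [sub_self] at hsub
  exact hsub.congr fun t => sub_eq_of_eq_add (h.cdf_add_Ioi t).symm

lemma mem_of_cdf_mem_Ioo (h : IsIntervalDensity F I) {s : ℝ}
    (hs : ∫ x in Iic s, F x ∈ Ioo 0 (∫ x, F x)) : s ∈ I := by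
  by_contra hsI
  by_cases hlow : ∃ x ∈ I, x ≤ s
  · obtain ⟨x, hx, hxs⟩ := hlow
    have htail : ∫ y in Ioi s, F y = 0 :=
      setIntegral_eq_zero_of_forall_eq_zero fun y hy => h.eq_zero y fun hyI => hsI <|
        h.ordConnected.out hx hyI ⟨hxs, le_of_lt hy⟩
    have hadd := h.cdf_add_Ioi s
    rw [htail, add_zero] at hadd
    exact hs.2.ne hadd
  · push Not at hlow
    exact hs.1.ne' (setIntegral_eq_zero_of_forall_eq_zero fun y hy =>
      h.eq_zero y fun hyI => (hlow y hyI).not_ge hy)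

lemma exists_cdf_eq (h : IsIntervalDensity F I) {θ : ℝ} (hθ : θ ∈ Ioo 0 (∫ x, F x)) :
    ∃ s ∈ I, ∫ x in Iic s, F x = θ := by
  obtain ⟨s₀, hs₀⟩ := (h.tendsto_cdf_atBot.eventually (gt_mem_nhds hθ.1)).exists
  obtain ⟨s₁, hs₁⟩ := (h.tendsto_cdf_atTop.eventually (lt_mem_nhds hθ.2)).exists
  obtain ⟨s, hs⟩ := mem_range_of_exists_le_of_exists_ge h.continuous_cdf ⟨s₀, hs₀.le⟩ ⟨s₁, hs₁.le⟩
  simp only at hs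
  exact ⟨s, h.mem_of_cdf_mem_Ioo (hs.symm ▸ hθ), hs⟩

end IsIntervalDensity

/-- `a` is a quantile function of the interval density `F`: on the open interval from `0` to the
total mass of `F` it inverts the distribution function. -/
structure IsQuantile (F : ℝ → ℝ) (I : Set ℝ) (a : ℝ → ℝ) : Prop where
  mem : ∀ θ ∈ Ioo 0 (∫ x, F x), a θ ∈ I
  cdf_eq : ∀ θ ∈ Ioo 0 (∫ x, F x), ∫ x in Iic (a θ), F x = θ

lemma IsIntervalDensity.exists_isQuantile {F : ℝ → ℝ} {I : Set ℝ} (hF : IsIntervalDensity F I) :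
    ∃ a, IsQuantile F I a := by
  choose! a ha using fun θ => hF.exists_cdf_eq (θ := θ)
  exact ⟨a, fun θ hθ => (ha θ hθ).1, fun θ hθ => (ha θ hθ).2⟩

namespace IsQuantile

variable {F : ℝ → ℝ} {I : Set ℝ} {a : ℝ → ℝ}

lemma apply_cdf (ha : IsQuantile F I a) (hF : IsIntervalDensity F I) {s : ℝ} (hs : s ∈ I) :
    a (∫ x in Iic s, F x) = s :=
  hF.strictMonoOn_cdf.injOn (ha.mem _ (hF.cdf_mem_Ioo hs)) hs (ha.cdf_eq _ (hF.cdf_mem_Ioo hs))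

lemma strictMonoOn (ha : IsQuantile F I a) (hF : IsIntervalDensity F I) :
    StrictMonoOn a (Ioo 0 (∫ x, F x)) := by
  intro θ hθ θ' hθ' hlt
  rw [← hF.strictMonoOn_cdf.lt_iff_lt (ha.mem θ hθ) (ha.mem θ' hθ')]
  simpa only [ha.cdf_eq θ hθ, ha.cdf_eq θ' hθ'] using hlt

lemma hasDerivAt (ha : IsQuantile F I a) (hF : IsIntervalDensity F I) {θ : ℝ}
    (hθ : θ ∈ Ioo 0 (∫ x, F x)) : HasDerivAt a (F (a θ))⁻¹ θ := by
  have hcont : ContinuousAt a θ :=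
    (ha.strictMonoOn hF).continuousAt_of_image_mem_nhds (isOpen_Ioo.mem_nhds hθ)
      (mem_of_superset (hF.isOpen.mem_nhds (ha.mem θ hθ)) fun s hs =>
        ⟨_, hF.cdf_mem_Ioo hs, ha.apply_cdf hF hs⟩)
  refine HasDerivAt.of_local_left_inverse hcont (hF.hasDerivAt_cdf (ha.mem θ hθ))
    (hF.pos _ (ha.mem θ hθ)).ne' ?_
  filter_upwards [isOpen_Ioo.mem_nhds hθ] with θ' hθ' using ha.cdf_eq θ' hθ'

lemma continuousOn_comp (ha : IsQuantile F I a) (hF : IsIntervalDensity F I) :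
    ContinuousOn (fun θ => F (a θ)) (Ioo 0 (∫ x, F x)) :=
  hF.continuousOn.comp (fun _ hθ => (ha.hasDerivAt hF hθ).continuousAt.continuousWithinAt) ha.mem

end IsQuantile

section NumericInequality

variable {a b r : ℝ}

lemma two_rpow_inv_mul_sqrt_le (ha : 0 ≤ a) (hb : 0 ≤ b) (hr : 0 < r) :
    2 ^ r⁻¹ * √(a * b) ≤ (a ^ r + b ^ r) ^ r⁻¹ := by
  have hamgm : 2 * √(a * b) ^ r ≤ a ^ r + b ^ r := by
    rw [Real.sqrt_mul ha, Real.mul_rpow (Real.sqrt_nonneg a) (Real.sqrt_nonneg b)]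
    have hsq : ∀ x : ℝ, 0 ≤ x → x ^ r = (√x ^ r) ^ 2 := fun x hx => by
      rw [← Real.rpow_natCast, ← Real.rpow_mul (Real.sqrt_nonneg x), mul_comm,
        Real.rpow_mul (Real.sqrt_nonneg x), Real.rpow_natCast, Real.sq_sqrt hx]
    rw [hsq a ha, hsq b hb]
    linarith [two_mul_le_add_sq (√a ^ r) (√b ^ r)]
  calc 2 ^ r⁻¹ * √(a * b) = (2 * √(a * b) ^ r) ^ r⁻¹ := by
        rw [Real.mul_rpow zero_le_two (by positivity), Real.rpow_rpow_inv (by positivity) hr.ne']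
    _ ≤ (a ^ r + b ^ r) ^ r⁻¹ := by gcongr

lemma two_rpow_inv_mul_add_div_sqrt_le (ha : 0 < a) (hb : 0 < b) (hr : 0 < r) :
    2 ^ r⁻¹ * ((a + b) / √(a * b)) ≤ (a ^ r + b ^ r) ^ r⁻¹ * (a⁻¹ + b⁻¹) := by
  have hab : (a + b) / √(a * b) = √(a * b) * (a⁻¹ + b⁻¹) := by
    rw [div_eq_iff (by positivity), mul_right_comm, Real.mul_self_sqrt (by positivity)]
    field_simp
    ring
  rw [hab, ← mul_assoc]
  gcongr
  exact two_rpow_inv_mul_sqrt_le ha.le hb.le hr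

lemma two_rpow_le_rpow_mul_inv_add_inv (ha : 0 < a) (hb : 0 < b) (hr : 0 < r) :
    2 ^ (r⁻¹ + 1) ≤ (a ^ r + b ^ r) ^ r⁻¹ * (a⁻¹ + b⁻¹) := by
  refine le_trans ?_ (two_rpow_inv_mul_add_div_sqrt_le ha hb hr)
  rw [Real.rpow_add_one two_ne_zero]
  gcongr
  rw [le_div_iff₀ (by positivity), Real.sqrt_mul ha.le]
  have := two_mul_le_add_sq (√a) (√b)
  rwa [Real.sq_sqrt ha.le, Real.sq_sqrt hb.le, mul_assoc] at this

lemma eq_of_rpow_mul_inv_add_inv_le_two_rpow (ha : 0 < a) (hb : 0 < b) (hr : 0 < r)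
    (h : (a ^ r + b ^ r) ^ r⁻¹ * (a⁻¹ + b⁻¹) ≤ 2 ^ (r⁻¹ + 1)) : a = b := by
  have hle := (two_rpow_inv_mul_add_div_sqrt_le ha hb hr).trans h
  rw [Real.rpow_add_one two_ne_zero] at hle
  replace hle := le_of_mul_le_mul_left hle (by positivity)
  rw [div_le_iff₀ (by positivity), Real.sqrt_mul ha.le] at hle
  have hsqrt : √a = √b := by
    nlinarith [sq_nonneg (√a - √b), Real.sq_sqrt ha.le, Real.sq_sqrt hb.le]
  rwa [Real.sqrt_inj ha.le hb.le] at hsqrt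

end NumericInequality

variable {F G : ℝ → ℝ} {I J : Set ℝ} {a b : ℝ → ℝ}

lemma setLIntegral_rpow_mul_inv_add_inv_le (hF : IsIntervalDensity F I)
    (hG : IsIntervalDensity G J) (hFG : ∫ x, F x = ∫ x, G x) (ha : IsQuantile F I a)
    (hb : IsQuantile G J b) {r : ℝ} {H : ℝ → ℝ≥0∞}
    (hH : RpowSuperadditive r (fun s => ENNReal.ofReal (F s)) (fun s => ENNReal.ofReal (G s)) H) :
    ∫⁻ θ in Ioo 0 (∫ x, F x), ENNReal.ofReal
      ((F (a θ) ^ r + G (b θ) ^ r) ^ r⁻¹ * ((F (a θ))⁻¹ + (G (b θ))⁻¹)) ≤ ∫⁻ s, H s := by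
  have hderiv : ∀ θ ∈ Ioo 0 (∫ x, F x), HasDerivWithinAt (fun θ => a θ + b θ)
      ((F (a θ))⁻¹ + (G (b θ))⁻¹) (Ioo 0 (∫ x, F x)) θ := fun θ hθ =>
    ((ha.hasDerivAt hF hθ).add (hb.hasDerivAt hG (hFG ▸ hθ))).hasDerivWithinAt
  have hinj : InjOn (fun θ => a θ + b θ) (Ioo 0 (∫ x, F x)) :=
    ((ha.strictMonoOn hF).add (hFG ▸ hb.strictMonoOn hG)).injOn
  calc ∫⁻ θ in Ioo 0 (∫ x, F x), ENNReal.ofReal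
        ((F (a θ) ^ r + G (b θ) ^ r) ^ r⁻¹ * ((F (a θ))⁻¹ + (G (b θ))⁻¹))
      ≤ ∫⁻ θ in Ioo 0 (∫ x, F x), ENNReal.ofReal |(F (a θ))⁻¹ + (G (b θ))⁻¹| * H (a θ + b θ) := by
        refine setLIntegral_mono' measurableSet_Ioo fun θ hθ => ?_
        have hFpos := hF.pos _ (ha.mem θ hθ)
        have hGpos := hG.pos _ (hb.mem θ (hFG ▸ hθ))
        rw [abs_of_pos (by positivity), mul_comm, ENNReal.ofReal_mul (by positivity),
          ← ENNReal.ofReal_rpow_of_pos (by positivity),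
          ENNReal.ofReal_add (p := F (a θ) ^ r) (by positivity) (by positivity),
          ← ENNReal.ofReal_rpow_of_pos hFpos, ← ENNReal.ofReal_rpow_of_pos hGpos]
        gcongr
        exact hH _ _ (by simpa using hFpos) (by simpa using hGpos)
    _ = ∫⁻ s in (fun θ => a θ + b θ) '' Ioo 0 (∫ x, F x), H s :=
        (lintegral_image_eq_lintegral_abs_deriv_mul measurableSet_Ioo hderiv hinj H).symm
    _ ≤ ∫⁻ s, H s := setLIntegral_le_lintegral _ _

lemma apply_quantile_eq_of_lintegral_le (hF : IsIntervalDensity F I) (hG : IsIntervalDensity G J)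
    (hFG : ∫ x, F x = ∫ x, G x) (ha : IsQuantile F I a) (hb : IsQuantile G J b) {r : ℝ}
    (hr : 0 < r) {H : ℝ → ℝ≥0∞}
    (hH : RpowSuperadditive r (fun s => ENNReal.ofReal (F s)) (fun s => ENNReal.ofReal (G s)) H)
    (hle : ∫⁻ s, H s ≤ 2 ^ (r⁻¹ + 1) * ENNReal.ofReal (∫ x, F x)) {θ : ℝ}
    (hθ : θ ∈ Ioo 0 (∫ x, F x)) : F (a θ) = G (b θ) := by
  set D := Ioo 0 (∫ x, F x)
  set φ : ℝ → ℝ := fun θ => (F (a θ) ^ r + G (b θ) ^ r) ^ r⁻¹ * ((F (a θ))⁻¹ + (G (b θ))⁻¹)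
  have hFpos : ∀ θ ∈ D, 0 < F (a θ) := fun θ hθ => hF.pos _ (ha.mem θ hθ)
  have hGpos : ∀ θ ∈ D, 0 < G (b θ) := fun θ hθ => hG.pos _ (hb.mem θ (hFG ▸ hθ))
  have hFc : ContinuousOn (fun θ => F (a θ)) D := ha.continuousOn_comp hF
  have hGc : ContinuousOn (fun θ => G (b θ)) D :=
    (hb.continuousOn_comp hG).mono fun θ hθ => hFG ▸ hθ
  have hφc : ContinuousOn φ D :=
    ((hFc.rpow_const fun _ _ => Or.inr hr.le).add
      (hGc.rpow_const fun _ _ => Or.inr hr.le)).rpow_const (fun _ _ => Or.inr (by positivity))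
      |>.mul ((hFc.inv₀ fun θ hθ => (hFpos θ hθ).ne').add (hGc.inv₀ fun θ hθ => (hGpos θ hθ).ne'))
  have hae : (fun _ => (2 : ℝ) ^ (r⁻¹ + 1)) =ᵐ[volume.restrict D] φ := by
    have hofReal : (fun _ => ENNReal.ofReal (2 ^ (r⁻¹ + 1))) =ᵐ[volume.restrict D]
        fun θ => ENNReal.ofReal (φ θ) := by
      refine ae_eq_of_ae_le_of_lintegral_le ?_ ?_
        (hφc.aemeasurable measurableSet_Ioo).ennreal_ofReal ?_
      · filter_upwards [ae_restrict_mem measurableSet_Ioo] with θ hθ using ENNReal.ofReal_le_ofReal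
          (two_rpow_le_rpow_mul_inv_add_inv (hFpos θ hθ) (hGpos θ hθ) hr)
      · simpa [D] using ENNReal.mul_ne_top ENNReal.ofReal_ne_top ENNReal.ofReal_ne_top
      · refine (setLIntegral_rpow_mul_inv_add_inv_le hF hG hFG ha hb hH).trans (hle.trans_eq ?_)
        simp [D, ← ENNReal.ofReal_rpow_of_pos]
    filter_upwards [hofReal, ae_restrict_mem measurableSet_Ioo] with θ hθ hθD
    have := hFpos θ hθD
    have := hGpos θ hθD
    exact (ENNReal.ofReal_eq_ofReal_iff (by positivity) (by positivity)).1 hθ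
  exact eq_of_rpow_mul_inv_add_inv_le_two_rpow (hFpos θ hθ) (hGpos θ hθ) hr
    (Measure.eqOn_open_of_ae_eq hae isOpen_Ioo continuousOn_const hφc hθ).ge

-- At equal quantiles the two densities agree, so the two quantile functions have equal derivatives.
lemma exists_translate_of_lintegral_le (hF : IsIntervalDensity F I) (hG : IsIntervalDensity G J)
    (hFG : ∫ x, F x = ∫ x, G x) {r : ℝ} (hr : 0 < r) {H : ℝ → ℝ≥0∞}
    (hH : RpowSuperadditive r (fun s => ENNReal.ofReal (F s)) (fun s => ENNReal.ofReal (G s)) H)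
    (hle : ∫⁻ s, H s ≤ 2 ^ (r⁻¹ + 1) * ENNReal.ofReal (∫ x, F x)) :
    ∃ c, ∀ s, F (s + c) = G s := by
  obtain ⟨a, ha⟩ := hF.exists_isQuantile
  obtain ⟨b, hb⟩ := hG.exists_isQuantile
  have heq : ∀ θ ∈ Ioo 0 (∫ x, F x), F (a θ) = G (b θ) := fun θ hθ =>
    apply_quantile_eq_of_lintegral_le hF hG hFG ha hb hr hH hle hθ
  have hderiv : ∀ θ ∈ Ioo 0 (∫ x, F x), HasDerivAt (fun θ => a θ - b θ) 0 θ := by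
    intro θ hθ
    have := (ha.hasDerivAt hF hθ).sub (hb.hasDerivAt hG (hFG ▸ hθ))
    rwa [heq θ hθ, sub_self] at this
  obtain ⟨c, hc⟩ : ∃ c, ∀ θ ∈ Ioo 0 (∫ x, F x), a θ - b θ = c :=
    isOpen_Ioo.exists_is_const_of_deriv_eq_zero isPreconnected_Ioo
      (fun θ hθ => (hderiv θ hθ).differentiableAt.differentiableWithinAt)
      (fun θ hθ => (hderiv θ hθ).deriv)
  refine ⟨c, fun s => ?_⟩
  by_cases hs : s ∈ J
  · have hθ : ∫ x in Iic s, G x ∈ Ioo 0 (∫ x, F x) := hFG ▸ hG.cdf_mem_Ioo hs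
    have hFa := heq _ hθ
    rwa [sub_eq_iff_eq_add.1 (hc _ hθ), hb.apply_cdf hG hs, add_comm] at hFa
  · rw [hG.eq_zero s hs]
    refine hF.eq_zero _ fun hsc => hs ?_
    have hθ := hF.cdf_mem_Ioo hsc
    have hbs : b (∫ x in Iic (s + c), F x) = s := by linarith [hc _ hθ, ha.apply_cdf hF hsc]
    exact hbs ▸ hb.mem _ (hFG ▸ hθ)

end Transport

section Concave

/-- The function `f ^ p` is concave on the support of `f`. -/
def RpowConcave {E : Type*} [AddCommMonoid E] [Module ℝ E] (p : ℝ) (f : E → ℝ≥0∞) : Prop :=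
  ∀ ⦃x y⦄, f x ≠ 0 → f y ≠ 0 → ∀ ⦃a b : ℝ⦄, 0 < a → 0 < b → a + b = 1 →
    ENNReal.ofReal a * f x ^ p + ENNReal.ofReal b * f y ^ p ≤ f (a • x + b • y) ^ p

namespace RpowConcave

variable {p : ℝ} {f : ℝ → ℝ≥0∞}

lemma convex_support {E : Type*} [AddCommMonoid E] [Module ℝ E] {f : E → ℝ≥0∞}
    (hf : RpowConcave p f) (hp : 0 < p) : Convex ℝ {x | f x ≠ 0} := by
  refine convex_iff_forall_pos.2 fun x hx y hy a b ha hb hab h0 => ?_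
  have h := hf hx hy ha hb hab
  rw [h0, ENNReal.zero_rpow_of_pos hp, nonpos_iff_eq_zero, add_eq_zero, mul_eq_zero] at h
  rcases h.1 with h | h
  · exact (ENNReal.ofReal_pos.2 ha).ne' h
  · exact hx ((ENNReal.rpow_eq_zero_iff_of_pos hp).1 h)

lemma mul_rpow_le_of_lt_of_lt (hf : RpowConcave p f) {s r t : ℝ} (hsr : s < r) (hrt : r < t)
    (hs : f s ≠ 0) (ht : f t ≠ 0) :
    ENNReal.ofReal ((t - r) / (t - s)) * f s ^ p ≤ f r ^ p := by
  have hst : 0 < t - s := by linarith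
  have h := hf hs ht (a := (t - r) / (t - s)) (b := (r - s) / (t - s))
    (div_pos (by linarith) hst) (div_pos (by linarith) hst) (by field_simp; ring)
  have hr : ((t - r) / (t - s)) • s + ((r - s) / (t - s)) • t = r := by
    simp only [smul_eq_mul]
    field_simp
    ring
  rw [hr] at h
  exact le_self_add.trans h

lemma ne_top (hf : RpowConcave p f) (hp : 0 < p) (hopen : IsOpen {s | f s ≠ 0})
    (hfin : ∫⁻ s, f s ≠ ⊤) (s : ℝ) : f s ≠ ⊤ := by
  intro htop
  have hs : f s ≠ 0 := by simp [htop]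
  obtain ⟨u, hsu, hsub⟩ := exists_Ico_subset_of_mem_nhds (hopen.mem_nhds hs) (exists_gt s)
  obtain ⟨t, hst, htu⟩ := exists_between hsu
  refine hfin (top_le_iff.1 ?_)
  calc (⊤ : ℝ≥0∞) = ∫⁻ _ in Ioo s t, ⊤ := by simp [ENNReal.top_mul, hst]
    _ ≤ ∫⁻ r in Ioo s t, f r := by
      refine setLIntegral_mono' measurableSet_Ioo fun r hr => ?_
      have h := hf.mul_rpow_le_of_lt_of_lt hr.1 hr.2 hs (hsub ⟨hst.le, htu⟩)
      rwa [htop, ENNReal.top_rpow_of_pos hp, ENNReal.mul_top (ENNReal.ofReal_pos.2 (div_pos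
        (sub_pos.2 hr.2) (sub_pos.2 hst))).ne', top_le_iff, ENNReal.rpow_eq_top_iff_of_pos hp,
        ← top_le_iff] at h
    _ ≤ ∫⁻ r, f r := setLIntegral_le_lintegral _ _

lemma bddAbove_support (hf : RpowConcave p f) (hp : 0 < p) (hfin : ∫⁻ s, f s ≠ ⊤) :
    BddAbove {s | f s ≠ 0} := by
  by_contra hb
  obtain ⟨s, hs, -⟩ := not_bddAbove_iff.1 hb 0
  have hc : (ENNReal.ofReal (1 / 2) * f s ^ p) ^ p⁻¹ ≠ 0 := by
    rw [Ne, ENNReal.rpow_eq_zero_iff_of_pos (inv_pos.2 hp), mul_eq_zero,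
      ENNReal.rpow_eq_zero_iff_of_pos hp]
    simpa using hs
  refine hfin (top_le_iff.1 ?_)
  calc (⊤ : ℝ≥0∞) = ∫⁻ _ in Ioi s, (ENNReal.ofReal (1 / 2) * f s ^ p) ^ p⁻¹ := by
        rw [setLIntegral_const, Real.volume_Ioi, ENNReal.mul_top hc]
    _ ≤ ∫⁻ r in Ioi s, f r := by
        refine setLIntegral_mono' measurableSet_Ioi fun r hr => ?_
        rw [mem_Ioi] at hr
        obtain ⟨t, ht, hrt⟩ := not_bddAbove_iff.1 hb (2 * r - s)
        rw [ENNReal.rpow_inv_le_iff hp]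
        refine le_trans ?_ (hf.mul_rpow_le_of_lt_of_lt hr (by linarith) hs ht)
        refine mul_le_mul' (ENNReal.ofReal_le_ofReal ?_) le_rfl
        rw [div_le_div_iff₀ two_pos (by linarith)]
        linarith
    _ ≤ ∫⁻ r, f r := setLIntegral_le_lintegral _ _

lemma concaveOn_toReal (hf : RpowConcave p f) (hp : 0 < p) (hfin : ∀ s, f s ≠ ⊤) :
    ConcaveOn ℝ {s | f s ≠ 0} fun s => (f s).toReal ^ p := by
  refine concaveOn_iff_forall_pos.2 ⟨hf.convex_support hp, fun s hs t ht a b ha hb hab => ?_⟩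
  have hfin' : ∀ r, f r ^ p ≠ ⊤ := fun r => ENNReal.rpow_ne_top_of_nonneg hp.le (hfin r)
  have h := ENNReal.toReal_mono (hfin' _) (hf hs ht ha hb hab)
  rwa [ENNReal.toReal_add (ENNReal.mul_ne_top ENNReal.ofReal_ne_top (hfin' s))
    (ENNReal.mul_ne_top ENNReal.ofReal_ne_top (hfin' t)), ENNReal.toReal_mul, ENNReal.toReal_mul,
    ENNReal.toReal_ofReal ha.le, ENNReal.toReal_ofReal hb.le, ← ENNReal.toReal_rpow,
    ← ENNReal.toReal_rpow, ← ENNReal.toReal_rpow] at h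

lemma isIntervalDensity (hf : RpowConcave p f) (hp : 0 < p) (hmeas : Measurable f)
    (hopen : IsOpen {s | f s ≠ 0}) (hfin : ∫⁻ s, f s ≠ ⊤) :
    IsIntervalDensity (fun s => (f s).toReal) {s | f s ≠ 0} where
  isOpen := hopen
  ordConnected := (hf.convex_support hp).ordConnected
  continuousOn := by
    have hcont := ((hf.concaveOn_toReal hp (hf.ne_top hp hopen hfin)).continuousOn
      hopen).rpow_const (p := p⁻¹) fun _ _ => Or.inr (inv_nonneg.2 hp.le)
    exact hcont.congr fun s _ => (Real.rpow_rpow_inv ENNReal.toReal_nonneg hp.ne').symm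
  pos s hs := ENNReal.toReal_pos hs (hf.ne_top hp hopen hfin s)
  eq_zero s hs := by simp [not_not.1 hs]
  integrable := integrable_toReal_of_lintegral_ne_top hmeas.aemeasurable hfin

end RpowConcave

lemma setLIntegral_image_linearEquiv {E : Type*} [NormedAddCommGroup E] [NormedSpace ℝ E]
    [MeasurableSpace E] [BorelSpace E] [FiniteDimensional ℝ E] (μ : Measure E)
    [μ.IsAddHaarMeasure] (e : E ≃ₗ[ℝ] E) (f : E → ℝ≥0∞) (S : Set E) :
    ∫⁻ y in e '' S, f y ∂μ =
      ENNReal.ofReal |LinearMap.det (e : E →ₗ[ℝ] E)| * ∫⁻ x in S, f (e x) ∂μ := by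
  have hdet : LinearMap.det (e : E →ₗ[ℝ] E) ≠ 0 := (LinearEquiv.isUnit_det' e).ne_zero
  have hemb : MeasurableEmbedding e :=
    e.toContinuousLinearEquiv.toHomeomorph.measurableEmbedding
  have hmap : μ.map e = ENNReal.ofReal |(LinearMap.det (e : E →ₗ[ℝ] E))⁻¹| • μ :=
    Measure.map_linearMap_addHaar_eq_smul_addHaar μ hdet
  have hcancel : ENNReal.ofReal |LinearMap.det (e : E →ₗ[ℝ] E)| *
      ENNReal.ofReal |(LinearMap.det (e : E →ₗ[ℝ] E))⁻¹| = 1 := by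
    rw [← ENNReal.ofReal_mul (abs_nonneg _), ← abs_mul, mul_inv_cancel₀ hdet, abs_one,
      ENNReal.ofReal_one]
  rw [← preimage_image_eq S e.injective, ← hemb.lintegral_map, ← hemb.restrict_map,
    preimage_image_eq S e.injective, hmap, Measure.restrict_smul, lintegral_smul_measure,
    smul_eq_mul, ← mul_assoc, hcancel, one_mul]

lemma setLIntegral_smul_set {E : Type*} [NormedAddCommGroup E] [NormedSpace ℝ E]
    [MeasurableSpace E] [BorelSpace E] [FiniteDimensional ℝ E] (μ : Measure E)
    [μ.IsAddHaarMeasure] {c : ℝ} (hc : 0 < c) (f : E → ℝ≥0∞) (S : Set E) :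
    ∫⁻ y in c • S, f y ∂μ =
      ENNReal.ofReal c ^ (Module.finrank ℝ E : ℝ) * ∫⁻ x in S, f (c • x) ∂μ := by
  have h := setLIntegral_image_linearEquiv μ (LinearEquiv.smulOfNeZero ℝ E c hc.ne') f S
  have hdet : LinearMap.det (LinearEquiv.smulOfNeZero ℝ E c hc.ne' : E →ₗ[ℝ] E) =
      c ^ Module.finrank ℝ E := by
    rw [show (LinearEquiv.smulOfNeZero ℝ E c hc.ne' : E →ₗ[ℝ] E) = c • LinearMap.id from rfl,
      LinearMap.det_smul, LinearMap.det_id, mul_one]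
  rwa [hdet, abs_of_pos (by positivity), ENNReal.ofReal_pow hc.le, ← ENNReal.rpow_natCast] at h

lemma RpowSuperadditive.finMarginal {p : ℝ} (hp : 0 < p) {k : ℕ}
    {f g h : (Fin (k + 1) → ℝ) → ℝ≥0∞} (H : RpowSuperadditive p f g h) (hf : Measurable f)
    (hg : Measurable g) (hh : Measurable h) :
    RpowSuperadditive (p⁻¹ + k)⁻¹ (finMarginal f) (finMarginal g) (finMarginal h) :=
  fun s t hs ht => by
    simpa only [_root_.finMarginal, inv_inv] using (H.finCons s t).lintegral_rpow_add_le hp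
      (hf.comp (measurable_finCons_right s)) (hg.comp (measurable_finCons_right t))
      (hh.comp (measurable_finCons_right (s + t))) hs ht

/-- The function whose `p`-th power is the perspective `a * f (x / a) ^ p` of `f ^ p`; it turns
concavity of `f ^ p` into superadditivity. -/
noncomputable def rpowPerspective {E : Type*} [AddCommMonoid E] [Module ℝ E] (p a : ℝ)
    (f : E → ℝ≥0∞) (x : E) : ℝ≥0∞ :=
  ENNReal.ofReal a ^ p⁻¹ * f (a⁻¹ • x)

section Perspective

variable {E : Type*} [AddCommGroup E] [Module ℝ E] {p a b : ℝ} {f : E → ℝ≥0∞}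

lemma rpowPerspective_rpow (hp : 0 < p) (a : ℝ) (f : E → ℝ≥0∞) (x : E) :
    rpowPerspective p a f x ^ p = ENNReal.ofReal a * f (a⁻¹ • x) ^ p := by
  rw [rpowPerspective, ENNReal.mul_rpow_of_nonneg _ _ hp.le, ENNReal.rpow_inv_rpow hp.ne']

lemma rpowPerspective_smul_ne_zero (ha : 0 < a) {x : E} (hx : f x ≠ 0) :
    rpowPerspective p a f (a • x) ≠ 0 := by
  rw [rpowPerspective, inv_smul_smul₀ ha.ne']
  exact mul_ne_zero (ENNReal.rpow_pos (ENNReal.ofReal_pos.2 ha) ENNReal.ofReal_ne_top).ne' hx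

lemma RpowConcave.rpowSuperadditive (hf : RpowConcave p f) (hp : 0 < p) (ha : 0 < a)
    (hb : 0 < b) (hab : a + b = 1) :
    RpowSuperadditive p (rpowPerspective p a f) (rpowPerspective p b f) f := fun x y hx hy => by
  rw [rpowPerspective_rpow hp, rpowPerspective_rpow hp, ENNReal.rpow_inv_le_iff hp]
  simpa only [smul_inv_smul₀ ha.ne', smul_inv_smul₀ hb.ne'] using
    hf (right_ne_zero_of_mul hx) (right_ne_zero_of_mul hy) ha hb hab

lemma rpowConcave_of_rpowSuperadditive (hp : 0 < p)
    (h : ∀ a b : ℝ, 0 < a → 0 < b → a + b = 1 →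
      RpowSuperadditive p (rpowPerspective p a f) (rpowPerspective p b f) f) :
    RpowConcave p f := fun x y hx hy a b ha hb hab => by
  have hle := h a b ha hb hab (a • x) (b • y) (rpowPerspective_smul_ne_zero ha hx)
    (rpowPerspective_smul_ne_zero hb hy)
  rwa [rpowPerspective_rpow hp, rpowPerspective_rpow hp, ENNReal.rpow_inv_le_iff hp,
    inv_smul_smul₀ ha.ne', inv_smul_smul₀ hb.ne'] at hle

end Perspective

lemma finMarginal_rpowPerspective {k : ℕ} {a : ℝ} (ha : 0 < a) (p : ℝ)
    (f : (Fin (k + 1) → ℝ) → ℝ≥0∞) :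
    finMarginal (rpowPerspective p a f) = rpowPerspective (p⁻¹ + k)⁻¹ a (finMarginal f) := by
  have hcons : ∀ s (z : Fin k → ℝ),
      a⁻¹ • (Fin.cons s (a • z) : Fin (k + 1) → ℝ) = Fin.cons (a⁻¹ • s) z := fun s z => by
    ext i
    refine Fin.cases ?_ (fun j => ?_) i <;> simp [ha.ne']
  ext s
  have hscale := setLIntegral_smul_set volume ha
    (fun y : Fin k → ℝ => rpowPerspective p a f (Fin.cons s y)) univ
  simp only [smul_set_univ₀ ha.ne', Measure.restrict_univ, Module.finrank_fin_fun,
    rpowPerspective, hcons] at hscale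
  simp only [finMarginal, rpowPerspective, inv_inv]
  rw [hscale, lintegral_const_mul' _ _ (ENNReal.rpow_ne_top_of_ne_zero
    (ENNReal.ofReal_pos.2 ha).ne' ENNReal.ofReal_ne_top), ← mul_assoc,
    ENNReal.rpow_add _ _ (ENNReal.ofReal_pos.2 ha).ne' ENNReal.ofReal_ne_top, mul_comm (_ ^ p⁻¹)]

lemma RpowConcave.finMarginal {p : ℝ} (hp : 0 < p) {k : ℕ} {f : (Fin (k + 1) → ℝ) → ℝ≥0∞}
    (hf : RpowConcave p f) (hmeas : Measurable f) :
    RpowConcave (p⁻¹ + k)⁻¹ (finMarginal f) := by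
  have hpersp : ∀ a, Measurable (rpowPerspective p a f) := fun a =>
    (hmeas.comp (measurable_const_smul a⁻¹)).const_mul _
  refine rpowConcave_of_rpowSuperadditive (by positivity) fun a b ha hb hab => ?_
  rw [← finMarginal_rpowPerspective ha, ← finMarginal_rpowPerspective hb]
  exact (hf.rpowSuperadditive hp ha hb hab).finMarginal hp (hpersp a) (hpersp b) hmeas

lemma finMarginal_ne_zero_iff {k : ℕ} {f : (Fin (k + 1) → ℝ) → ℝ≥0∞} (hf : Measurable f)
    (hopen : IsOpen {x | f x ≠ 0}) (s : ℝ) :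
    finMarginal f s ≠ 0 ↔ s ∈ Function.eval 0 '' {x | f x ≠ 0} := by
  have hslice : IsOpen {y : Fin k → ℝ | f (Fin.cons s y) ≠ 0} :=
    hopen.preimage (by fun_prop)
  have hzero : finMarginal f s = 0 ↔ volume {y : Fin k → ℝ | f (Fin.cons s y) ≠ 0} = 0 :=
    lintegral_eq_zero_iff (hf.comp (measurable_finCons_right s))
  rw [Ne, hzero]
  constructor
  · intro h
    obtain ⟨y, hy⟩ := nonempty_of_measure_ne_zero h
    exact ⟨_, hy, by simp⟩
  · rintro ⟨x, hx, rfl⟩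
    exact (hslice.measure_pos volume ⟨Fin.tail x, by simpa using hx⟩).ne'

end Concave

section ConicWeight

/-- A finite measurable weight `W` such that `W ^ p` is superadditive on the support of `W` and
positively homogeneous of degree one. -/
structure IsConicWeight {E : Type*} [AddCommGroup E] [Module ℝ E] [MeasurableSpace E] (p : ℝ)
    (W : E → ℝ≥0∞) : Prop where
  pos : 0 < p
  measurable : Measurable W
  ne_top : ∀ x, W x ≠ ⊤
  superadd : RpowSuperadditive p W W W
  hom : ∀ c : ℝ, 0 < c → ∀ x, W (c • x) = ENNReal.ofReal c ^ p⁻¹ * W x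

lemma RpowSuperadditive.indicator {E : Type*} [Add E] {p : ℝ} {f g h : E → ℝ≥0∞}
    (H : RpowSuperadditive p f g h) (S T : Set E) :
    RpowSuperadditive p (S.indicator f) (T.indicator g) ((S + T).indicator h) := by
  intro x y hx hy
  have hxS := mem_of_indicator_ne_zero hx
  have hyT := mem_of_indicator_ne_zero hy
  rw [indicator_of_mem hxS] at hx ⊢
  rw [indicator_of_mem hyT] at hy ⊢
  rw [indicator_of_mem (add_mem_add hxS hyT)]
  exact H x y hx hy

namespace IsConicWeight

section Module

variable {E : Type*} [AddCommGroup E] [Module ℝ E] [MeasurableSpace E] {p : ℝ} {W : E → ℝ≥0∞}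

lemma exponent_pos (hW : IsConicWeight p W) (n : ℕ) : 0 < p⁻¹ + n := by
  have := hW.pos
  positivity

lemma add_ne_zero (hW : IsConicWeight p W) {x y : E} (hx : W x ≠ 0) (hy : W y ≠ 0) :
    W (x + y) ≠ 0 :=
  ((pos_iff_ne_zero.2 (rpow_add_rpow_rpow_inv_ne_zero hW.pos hx)).trans_le
    (hW.superadd x y hx hy)).ne'

lemma smul_ne_zero (hW : IsConicWeight p W) {c : ℝ} (hc : 0 < c) {x : E} (hx : W x ≠ 0) :
    W (c • x) ≠ 0 := by
  rw [hW.hom c hc]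
  exact mul_ne_zero (ENNReal.rpow_pos (ENNReal.ofReal_pos.2 hc) ENNReal.ofReal_ne_top).ne' hx

lemma rpow_smul (hW : IsConicWeight p W) {c : ℝ} (hc : 0 < c) (x : E) :
    W (c • x) ^ p = ENNReal.ofReal c * W x ^ p := by
  rw [hW.hom c hc, ENNReal.mul_rpow_of_nonneg _ _ hW.pos.le, ENNReal.rpow_inv_rpow hW.pos.ne']

lemma rpowConcave (hW : IsConicWeight p W) : RpowConcave p W := by
  intro x y hx hy a b ha hb _
  rw [← hW.rpow_smul ha, ← hW.rpow_smul hb, ← ENNReal.rpow_inv_le_iff hW.pos]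
  exact hW.superadd _ _ (hW.smul_ne_zero ha hx) (hW.smul_ne_zero hb hy)

lemma convex_support (hW : IsConicWeight p W) : Convex ℝ {x | W x ≠ 0} :=
  hW.rpowConcave.convex_support hW.pos

end Module

variable {p : ℝ} {n : ℕ} {W : (Fin n → ℝ) → ℝ≥0∞} {S T : Set (Fin n → ℝ)}

lemma withDensity_smul (hW : IsConicWeight p W) {c : ℝ} (hc : 0 < c) (S : Set (Fin n → ℝ)) :
    volume.withDensity W (c • S) = ENNReal.ofReal c ^ (p⁻¹ + n) * volume.withDensity W S := by
  have hc' := ENNReal.ofReal_pos.2 hc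
  simp only [withDensity_apply' W, setLIntegral_smul_set volume hc, hW.hom c hc,
    Module.finrank_fin_fun]
  rw [lintegral_const_mul' _ _ (ENNReal.rpow_ne_top_of_ne_zero hc'.ne' ENNReal.ofReal_ne_top),
    ← mul_assoc, mul_comm (_ ^ (n : ℝ)), ENNReal.rpow_add _ _ hc'.ne' ENNReal.ofReal_ne_top]

lemma withDensity_smul_rpow_inv (hW : IsConicWeight p W) {c : ℝ} (hc : 0 < c)
    (S : Set (Fin n → ℝ)) : volume.withDensity W (c • S) ^ (p⁻¹ + n)⁻¹ =
      ENNReal.ofReal c * volume.withDensity W S ^ (p⁻¹ + n)⁻¹ := by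
  have hN := hW.exponent_pos n
  rw [hW.withDensity_smul hc, ENNReal.mul_rpow_of_nonneg _ _ (inv_nonneg.2 hN.le),
    ENNReal.rpow_rpow_inv hN.ne']

lemma rpow_add_rpow_le_of_measurableSet (hW : IsConicWeight p W) (hS : MeasurableSet S)
    (hT : MeasurableSet T) (hST : MeasurableSet (S + T)) (hS0 : volume.withDensity W S ≠ 0)
    (hT0 : volume.withDensity W T ≠ 0) :
    volume.withDensity W S ^ (p⁻¹ + n)⁻¹ + volume.withDensity W T ^ (p⁻¹ + n)⁻¹ ≤
      volume.withDensity W (S + T) ^ (p⁻¹ + n)⁻¹ := by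
  rw [ENNReal.le_rpow_inv_iff (hW.exponent_pos n)]
  simp only [withDensity_apply' W, ← lintegral_indicator hS, ← lintegral_indicator hT,
    ← lintegral_indicator hST] at hS0 hT0 ⊢
  exact (hW.superadd.indicator S T).lintegral_rpow_add_le hW.pos (hW.measurable.indicator hS)
    (hW.measurable.indicator hT) (hW.measurable.indicator hST) hS0 hT0

lemma rpowConcave_indicator (hW : IsConicWeight p W) (hS : Convex ℝ S) :
    RpowConcave p (S.indicator W) := by
  intro x y hx hy a b ha hb hab
  have hxS := mem_of_indicator_ne_zero hx
  have hyS := mem_of_indicator_ne_zero hy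
  rw [indicator_of_mem hxS] at hx ⊢
  rw [indicator_of_mem hyS] at hy ⊢
  rw [indicator_of_mem (hS hxS hyS ha.le hb.le hab)]
  exact hW.rpowConcave hx hy ha hb hab

end IsConicWeight

/-- An open convex set of finite mass contained in the support of the weight. -/
structure IsConvexRegion {n : ℕ} (W : (Fin n → ℝ) → ℝ≥0∞) (S : Set (Fin n → ℝ)) : Prop where
  isOpen : IsOpen S
  convex : Convex ℝ S
  nonempty : S.Nonempty
  ne_zero : ∀ x ∈ S, W x ≠ 0
  ne_top : volume.withDensity W S ≠ ⊤

/-- Two regions of equal mass that achieve equality in the Brunn–Minkowski inequality. -/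
structure IsEqualityPair {n : ℕ} (p : ℝ) (W : (Fin n → ℝ) → ℝ≥0∞) (A B : Set (Fin n → ℝ)) :
    Prop where
  left : IsConvexRegion W A
  right : IsConvexRegion W B
  mass_eq : volume.withDensity W A = volume.withDensity W B
  mass_add_le : volume.withDensity W (A + B) ≤ 2 ^ (p⁻¹ + n) * volume.withDensity W A

section Marginal

variable {p : ℝ} {k : ℕ} {W : (Fin (k + 1) → ℝ) → ℝ≥0∞} {A B S : Set (Fin (k + 1) → ℝ)}

lemma lintegral_finMarginal_indicator (hW : Measurable W) (hS : MeasurableSet S) :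
    ∫⁻ s, finMarginal (S.indicator W) s = volume.withDensity W S := by
  rw [lintegral_finMarginal (hW.indicator hS), lintegral_indicator hS, withDensity_apply _ hS]

namespace IsConvexRegion

lemma support_indicator {n : ℕ} {W : (Fin n → ℝ) → ℝ≥0∞} {S : Set (Fin n → ℝ)}
    (hS : IsConvexRegion W S) : {x | S.indicator W x ≠ 0} = S := by
  ext x
  simpa using hS.ne_zero x

lemma support_finMarginal (hS : IsConvexRegion W S) (hW : Measurable W) :
    {s | finMarginal (S.indicator W) s ≠ 0} = Function.eval 0 '' S := by
  ext s
  have h := finMarginal_ne_zero_iff (hW.indicator hS.isOpen.measurableSet)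
    (by rw [hS.support_indicator]; exact hS.isOpen) s
  rwa [hS.support_indicator] at h

lemma lintegral_finMarginal_ne_top (hS : IsConvexRegion W S) (hW : Measurable W) :
    ∫⁻ s, finMarginal (S.indicator W) s ≠ ⊤ := by
  rw [lintegral_finMarginal_indicator hW hS.isOpen.measurableSet]
  exact hS.ne_top

lemma rpowConcave_finMarginal (hS : IsConvexRegion W S) (hW : IsConicWeight p W) :
    RpowConcave (p⁻¹ + k)⁻¹ (finMarginal (S.indicator W)) :=
  (hW.rpowConcave_indicator hS.convex).finMarginal hW.pos
    (hW.measurable.indicator hS.isOpen.measurableSet)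

lemma isOpen_support_finMarginal (hS : IsConvexRegion W S) (hW : Measurable W) :
    IsOpen {s | finMarginal (S.indicator W) s ≠ 0} := by
  rw [hS.support_finMarginal hW]
  exact isOpenMap_eval 0 S hS.isOpen

lemma bddAbove_image_eval (hS : IsConvexRegion W S) (hW : IsConicWeight p W) :
    BddAbove (Function.eval 0 '' S) := by
  rw [← hS.support_finMarginal hW.measurable]
  exact (hS.rpowConcave_finMarginal hW).bddAbove_support (inv_pos.2 (hW.exponent_pos k))
    (hS.lintegral_finMarginal_ne_top hW.measurable)

lemma finMarginal_ne_top (hS : IsConvexRegion W S) (hW : IsConicWeight p W) (s : ℝ) :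
    finMarginal (S.indicator W) s ≠ ⊤ :=
  (hS.rpowConcave_finMarginal hW).ne_top (inv_pos.2 (hW.exponent_pos k))
    (hS.isOpen_support_finMarginal hW.measurable) (hS.lintegral_finMarginal_ne_top hW.measurable) s

lemma isIntervalDensity (hS : IsConvexRegion W S) (hW : IsConicWeight p W) :
    IsIntervalDensity (fun s => (finMarginal (S.indicator W) s).toReal)
      {s | finMarginal (S.indicator W) s ≠ 0} :=
  (hS.rpowConcave_finMarginal hW).isIntervalDensity (inv_pos.2 (hW.exponent_pos k))
    (measurable_finMarginal (hW.measurable.indicator hS.isOpen.measurableSet))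
    (hS.isOpen_support_finMarginal hW.measurable) (hS.lintegral_finMarginal_ne_top hW.measurable)

lemma ofReal_integral_finMarginal (hS : IsConvexRegion W S) (hW : IsConicWeight p W) :
    ENNReal.ofReal (∫ s, (finMarginal (S.indicator W) s).toReal) = volume.withDensity W S := by
  have hmeas := hS.isOpen.measurableSet
  rw [integral_toReal (measurable_finMarginal (hW.measurable.indicator hmeas)).aemeasurable
    (Eventually.of_forall fun s => (hS.finMarginal_ne_top hW s).lt_top),
    lintegral_finMarginal_indicator hW.measurable hmeas, ENNReal.ofReal_toReal hS.ne_top]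

end IsConvexRegion

lemma IsEqualityPair.exists_finMarginal_translate (hAB : IsEqualityPair p W A B)
    (hW : IsConicWeight p W) :
    ∃ c, ∀ s, finMarginal (A.indicator W) (s + c) = finMarginal (B.indicator W) s := by
  have hA := hAB.left.isOpen
  have hB := hAB.right.isOpen
  have hsuper := (hW.superadd.indicator A B).finMarginal hW.pos
    (hW.measurable.indicator hA.measurableSet) (hW.measurable.indicator hB.measurableSet)
    (hW.measurable.indicator hA.add_right.measurableSet)
  have hint : ∫ s, (finMarginal (A.indicator W) s).toReal =
      ∫ s, (finMarginal (B.indicator W) s).toReal := by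
    rw [← ENNReal.ofReal_eq_ofReal_iff (integral_nonneg fun _ => ENNReal.toReal_nonneg)
      (integral_nonneg fun _ => ENNReal.toReal_nonneg), hAB.left.ofReal_integral_finMarginal hW,
      hAB.right.ofReal_integral_finMarginal hW, hAB.mass_eq]
  obtain ⟨c, hc⟩ := exists_translate_of_lintegral_le (hAB.left.isIntervalDensity hW)
    (hAB.right.isIntervalDensity hW) hint (inv_pos.2 (hW.exponent_pos k))
    (H := finMarginal ((A + B).indicator W))
    (by simpa only [ENNReal.ofReal_toReal (hAB.left.finMarginal_ne_top hW _),
      ENNReal.ofReal_toReal (hAB.right.finMarginal_ne_top hW _)] using hsuper)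
    (by
      rw [lintegral_finMarginal_indicator hW.measurable hA.add_right.measurableSet,
        hAB.left.ofReal_integral_finMarginal hW, inv_inv, add_assoc, ← Nat.cast_add_one]
      exact hAB.mass_add_le)
  exact ⟨c, fun s => (ENNReal.toReal_eq_toReal_iff' (hAB.left.finMarginal_ne_top hW _)
    (hAB.right.finMarginal_ne_top hW _)).1 (hc s)⟩

end Marginal

end ConicWeight

section Translate

lemma map_add_right_withDensity {G : Type*} [AddGroup G] [MeasurableSpace G] [MeasurableAdd G]
    (μ : Measure G) [μ.IsAddRightInvariant] (f : G → ℝ≥0∞) (b : G) :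
    (μ.withDensity f).map (· + b) = μ.withDensity fun x => f (x - b) := by
  ext E hE
  rw [Measure.map_apply (measurable_add_const b) hE,
    withDensity_apply _ (measurable_add_const b hE), withDensity_apply _ hE]
  simpa only [add_sub_cancel_right] using
    (measurePreserving_add_right μ b).setLIntegral_comp_preimage_emb
      (MeasurableEquiv.addRight b).measurableEmbedding (fun x => f (x - b)) E

lemma map_eval_zero_withDensity {k : ℕ} {f : (Fin (k + 1) → ℝ) → ℝ≥0∞} (hf : Measurable f) :
    (volume.withDensity f).map (Function.eval 0) = volume.withDensity (finMarginal f) := by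
  have hmarginal : ∀ E : Set ℝ, finMarginal ((Function.eval 0 ⁻¹' E).indicator f) =
      E.indicator (finMarginal f) := fun E => by
    ext s
    by_cases hs : s ∈ E <;> simp [finMarginal, indicator, hs]
  ext E hE
  have h0 : Measurable (Function.eval 0 : (Fin (k + 1) → ℝ) → ℝ) := measurable_pi_apply 0
  have hE' := h0 hE
  rw [Measure.map_apply h0 hE, withDensity_apply _ hE,
    withDensity_apply _ hE', ← lintegral_indicator hE, ← lintegral_indicator hE',
    ← lintegral_finMarginal (hf.indicator hE'), hmarginal]

-- As in the Cramér–Wold theorem, with the translation vector read off the barycentres.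
lemma exists_eq_map_add_of_forall_map_eq {E : Type*} [NormedAddCommGroup E] [NormedSpace ℝ E]
    [CompleteSpace E] [SecondCountableTopology E] [MeasurableSpace E] [BorelSpace E]
    {ν₁ ν₂ : Measure E} [IsFiniteMeasure ν₁] [IsFiniteMeasure ν₂] (hν₂ : ν₂ ≠ 0)
    (hint₁ : Integrable (fun x => x) ν₁) (hint₂ : Integrable (fun x => x) ν₂)
    (h : ∀ L : StrongDual ℝ E, ∃ c : ℝ, ν₁.map L = (ν₂.map L).map (· + c)) :
    ∃ b : E, ν₁ = ν₂.map (· + b) := by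
  have hM : ν₂.real univ ≠ 0 := by simpa [Measure.real_def, ENNReal.toReal_eq_zero_iff] using hν₂
  refine ⟨(ν₂.real univ)⁻¹ • ((∫ x, x ∂ν₁) - ∫ x, x ∂ν₂), Measure.ext_of_charFunDual ?_⟩
  ext L
  obtain ⟨c, hc⟩ := h L
  have hL : Measurable L := L.continuous.measurable
  have hbary : L (∫ x, x ∂ν₁) = L (∫ x, x ∂ν₂) + ν₂.real univ * c := by
    have hmean₁ : ∫ s, s ∂ν₁.map L = ∫ x, L x ∂ν₁ :=
      integral_map hL.aemeasurable aestronglyMeasurable_id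
    have hmean₂ : ∫ s, s ∂ν₂.map (fun x => L x + c) = ∫ x, (L x + c) ∂ν₂ :=
      integral_map (hL.add_const c).aemeasurable aestronglyMeasurable_id
    have hmap : ν₁.map L = ν₂.map fun x => L x + c :=
      hc.trans (Measure.map_map (measurable_add_const c) hL)
    rw [← L.integral_comp_comm hint₁, ← L.integral_comp_comm hint₂, ← hmean₁, hmap, hmean₂,
      integral_add (L.integrable_comp hint₂) (integrable_const c), integral_const, smul_eq_mul]
  have hLb : L ((ν₂.real univ)⁻¹ • ((∫ x, x ∂ν₁) - ∫ x, x ∂ν₂)) = c := by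
    rw [map_smul, map_sub, hbary, smul_eq_mul, add_sub_cancel_left, inv_mul_cancel_left₀ hM]
  rw [charFunDual_eq_charFun_map_one, charFunDual_eq_charFun_map_one, hc,
    Measure.map_map (measurable_add_const c) hL, Measure.map_map hL (measurable_add_const _)]
  congr 2
  ext x
  simp only [Function.comp_apply, map_add, hLb]

lemma subset_of_ae_le_of_convex {E : Type*} [NormedAddCommGroup E] [NormedSpace ℝ E]
    [MeasurableSpace E] {μ : Measure E} [μ.IsOpenPosMeasure] {A B : Set E} (hA : IsOpen A)
    (hB : IsOpen B) (hBc : Convex ℝ B) (h : A ≤ᵐ[μ] B) : A ⊆ B := by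
  rcases A.eq_empty_or_nonempty with rfl | hne
  · exact empty_subset _
  have hsub : A ⊆ closure B := by
    have hnull : μ (A \ closure B) = 0 :=
      measure_mono_null (sdiff_subset_sdiff_right subset_closure) (ae_le_set.1 h)
    exact sdiff_eq_empty.1 (((hA.sdiff isClosed_closure).measure_eq_zero_iff μ).1 hnull)
  have hBne : (interior B).Nonempty := hB.interior_eq.symm ▸ closure_nonempty_iff.1 (hne.mono hsub)
  have hint := interior_maximal hsub hA
  rwa [hBc.interior_closure_eq_interior_of_nonempty_interior hBne, hB.interior_eq] at hint

lemma exists_linearEquiv_apply_zero {K : Type*} [Field K] {k : ℕ} {L : (Fin (k + 1) → K) →ₗ[K] K}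
    (hL : L ≠ 0) : ∃ e : (Fin (k + 1) → K) ≃ₗ[K] (Fin (k + 1) → K), ∀ x, e x 0 = L x := by
  obtain ⟨j, hj⟩ : ∃ j, L (Pi.single j 1) ≠ 0 := by
    by_contra! hall
    exact hL (LinearMap.pi_ext' fun j => LinearMap.ext_ring (by simpa using hall j))
  -- Replace the `j`-th coordinate by `L` and move it to the front.
  let f : (Fin (k + 1) → K) →ₗ[K] (Fin (k + 1) → K) :=
    LinearMap.pi fun i => if i = 0 then L else LinearMap.proj (Equiv.swap 0 j i)
  have hf : Function.Injective f := by
    refine (injective_iff_map_eq_zero f).2 fun x hx => ?_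
    have hLx : L x = 0 := by simpa [f] using congrFun hx 0
    have hxi : ∀ i, i ≠ j → x i = 0 := fun i hi => by
      have hi' : Equiv.swap 0 j i ≠ 0 := fun h => hi (by simpa using congrArg (Equiv.swap 0 j) h)
      simpa [f, hi'] using congrFun hx (Equiv.swap 0 j i)
    have hx_single : x = x j • Pi.single j 1 := by
      ext i
      by_cases hi : i = j
      · subst hi; simp
      · simp [hi, hxi i hi]
    rw [hx_single, map_smul, smul_eq_mul, mul_eq_zero] at hLx
    rw [hx_single, hLx.resolve_right hj, zero_smul]
  exact ⟨LinearEquiv.ofInjectiveEndo f hf, fun x => by simp [f]⟩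

lemma withDensity_comp_symm_image {n : ℕ} (e : (Fin n → ℝ) ≃ₗ[ℝ] (Fin n → ℝ))
    (W : (Fin n → ℝ) → ℝ≥0∞) (S : Set (Fin n → ℝ)) :
    volume.withDensity (W ∘ e.symm) (e '' S) =
      ENNReal.ofReal |LinearMap.det (e : (Fin n → ℝ) →ₗ[ℝ] (Fin n → ℝ))| *
        volume.withDensity W S := by
  simp only [withDensity_apply', setLIntegral_image_linearEquiv, Function.comp_apply,
    LinearEquiv.symm_apply_apply]

lemma restrict_withDensity_comp_symm_image {n : ℕ} (e : (Fin n → ℝ) ≃ₗ[ℝ] (Fin n → ℝ))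
    (W : (Fin n → ℝ) → ℝ≥0∞) (S : Set (Fin n → ℝ)) :
    (volume.withDensity (W ∘ e.symm)).restrict (e '' S) =
      ENNReal.ofReal |LinearMap.det (e : (Fin n → ℝ) →ₗ[ℝ] (Fin n → ℝ))| •
        ((volume.withDensity W).restrict S).map e := by
  have he : Measurable e := e.toContinuousLinearEquiv.continuous.measurable
  ext E hE
  rw [Measure.restrict_apply hE, Measure.smul_apply, Measure.map_apply he hE,
    Measure.restrict_apply (he hE), smul_eq_mul, ← withDensity_comp_symm_image,
    image_preimage_inter]

section LinearChange

variable {p : ℝ} {n : ℕ} {W : (Fin n → ℝ) → ℝ≥0∞} {A B S : Set (Fin n → ℝ)}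

lemma IsConicWeight.comp_linearEquiv {E : Type*} [NormedAddCommGroup E] [NormedSpace ℝ E]
    [FiniteDimensional ℝ E] [MeasurableSpace E] [BorelSpace E] {W : E → ℝ≥0∞}
    (hW : IsConicWeight p W) (e : E ≃ₗ[ℝ] E) : IsConicWeight p (W ∘ e) where
  pos := hW.pos
  measurable := hW.measurable.comp e.toContinuousLinearEquiv.continuous.measurable
  ne_top x := hW.ne_top _
  superadd x y hx hy := by simpa using hW.superadd _ _ hx hy
  hom c hc x := by simpa using hW.hom c hc (e x)

lemma IsConvexRegion.image_linearEquiv (hS : IsConvexRegion W S)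
    (e : (Fin n → ℝ) ≃ₗ[ℝ] (Fin n → ℝ)) : IsConvexRegion (W ∘ e.symm) (e '' S) where
  isOpen := e.toContinuousLinearEquiv.toHomeomorph.isOpenMap _ hS.isOpen
  convex := hS.convex.linear_image (e : (Fin n → ℝ) →ₗ[ℝ] (Fin n → ℝ))
  nonempty := hS.nonempty.image _
  ne_zero := by
    rintro _ ⟨x, hx, rfl⟩
    simpa using hS.ne_zero x hx
  ne_top := by
    rw [withDensity_comp_symm_image]
    exact ENNReal.mul_ne_top ENNReal.ofReal_ne_top hS.ne_top

lemma IsEqualityPair.image_linearEquiv (hAB : IsEqualityPair p W A B)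
    (e : (Fin n → ℝ) ≃ₗ[ℝ] (Fin n → ℝ)) :
    IsEqualityPair p (W ∘ e.symm) (e '' A) (e '' B) where
  left := hAB.left.image_linearEquiv e
  right := hAB.right.image_linearEquiv e
  mass_eq := by rw [withDensity_comp_symm_image, withDensity_comp_symm_image, hAB.mass_eq]
  mass_add_le := by
    rw [← image_add, withDensity_comp_symm_image, withDensity_comp_symm_image, mul_left_comm]
    exact mul_le_mul' le_rfl hAB.mass_add_le

lemma IsConvexRegion.bddAbove_image (hS : IsConvexRegion W S) (hW : IsConicWeight p W)
    (L : (Fin n → ℝ) →ₗ[ℝ] ℝ) : BddAbove (L '' S) := by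
  by_cases hL : L = 0
  · refine ⟨0, ?_⟩
    rintro _ ⟨x, -, rfl⟩
    simp [hL]
  · obtain _ | k := n
    · exact absurd (LinearMap.ext fun x => by rw [Subsingleton.elim x 0, map_zero, map_zero]) hL
    obtain ⟨e, he⟩ := exists_linearEquiv_apply_zero hL
    have hbdd := (hS.image_linearEquiv e).bddAbove_image_eval (hW.comp_linearEquiv e.symm)
    simpa only [image_image, Function.eval, he] using hbdd

lemma IsConvexRegion.isBounded (hS : IsConvexRegion W S) (hW : IsConicWeight p W) :
    Bornology.IsBounded S := by
  refine Bornology.forall_isBounded_image_eval_iff.1 fun i => ?_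
  refine isBounded_iff_bddBelow_bddAbove.2
    ⟨bddAbove_neg.1 ?_, hS.bddAbove_image hW (LinearMap.proj i)⟩
  rw [← image_neg_eq_neg, image_image]
  exact hS.bddAbove_image hW (-LinearMap.proj i)

lemma IsConvexRegion.integrable_id (hS : IsConvexRegion W S) (hW : IsConicWeight p W) :
    Integrable (fun x => x) ((volume.withDensity W).restrict S) := by
  obtain ⟨C, hC⟩ := (hS.isBounded hW).exists_norm_le
  exact Measure.integrableOn_of_bounded (M := C) hS.ne_top aestronglyMeasurable_id
    ((ae_restrict_iff' hS.isOpen.measurableSet).2 (Eventually.of_forall hC))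

lemma IsConvexRegion.measure_ne_zero (hS : IsConvexRegion W S) (hW : Measurable W) :
    volume.withDensity W S ≠ 0 := by
  have hsupp : {x | W x ≠ 0} ∩ S = S := inter_eq_right.2 hS.ne_zero
  rw [Ne, withDensity_apply_eq_zero hW, hsupp]
  exact (hS.isOpen.measure_pos volume hS.nonempty).ne'

lemma IsEqualityPair.exists_map_eval_eq {k : ℕ} {W : (Fin (k + 1) → ℝ) → ℝ≥0∞}
    {A B : Set (Fin (k + 1) → ℝ)} (hAB : IsEqualityPair p W A B) (hW : IsConicWeight p W) :
    ∃ c : ℝ, ((volume.withDensity W).restrict A).map (Function.eval 0) =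
      (((volume.withDensity W).restrict B).map (Function.eval 0)).map (· + c) := by
  obtain ⟨c, hc⟩ := hAB.exists_finMarginal_translate hW
  have hA := hAB.left.isOpen.measurableSet
  have hB := hAB.right.isOpen.measurableSet
  refine ⟨c, ?_⟩
  rw [restrict_withDensity hA, restrict_withDensity hB, ← withDensity_indicator hA,
    ← withDensity_indicator hB, map_eval_zero_withDensity (hW.measurable.indicator hA),
    map_eval_zero_withDensity (hW.measurable.indicator hB), map_add_right_withDensity]
  simp only [← hc, sub_add_cancel]

lemma IsEqualityPair.exists_map_eq (hAB : IsEqualityPair p W A B) (hW : IsConicWeight p W)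
    (L : (Fin n → ℝ) →ₗ[ℝ] ℝ) : ∃ c : ℝ, ((volume.withDensity W).restrict A).map L =
      (((volume.withDensity W).restrict B).map L).map (· + c) := by
  by_cases hL : L = 0
  · have hconst : ∀ S : Set (Fin n → ℝ), ((volume.withDensity W).restrict S).map L =
        volume.withDensity W S • Measure.dirac 0 := fun S => by
      rw [hL, show ⇑(0 : (Fin n → ℝ) →ₗ[ℝ] ℝ) = fun _ => 0 from rfl, Measure.map_const,
        Measure.restrict_apply_univ]
    exact ⟨0, by simp [hconst, hAB.mass_eq]⟩
  obtain _ | k := n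
  · exact absurd (LinearMap.ext fun x => by rw [Subsingleton.elim x 0, map_zero, map_zero]) hL
  obtain ⟨e, he⟩ := exists_linearEquiv_apply_zero hL
  obtain ⟨c, hc⟩ := (hAB.image_linearEquiv e).exists_map_eval_eq (hW.comp_linearEquiv e.symm)
  have hcomp : Function.eval 0 ∘ e = L := funext he
  have hdet : ENNReal.ofReal |LinearMap.det
      (e : (Fin (k + 1) → ℝ) →ₗ[ℝ] (Fin (k + 1) → ℝ))| ≠ 0 := by
    simpa using (LinearEquiv.isUnit_det' e).ne_zero
  have hem : Measurable e := e.toContinuousLinearEquiv.continuous.measurable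
  have h0 : Measurable (Function.eval 0 : (Fin (k + 1) → ℝ) → ℝ) := measurable_pi_apply 0
  refine ⟨c, ?_⟩
  rw [restrict_withDensity_comp_symm_image, restrict_withDensity_comp_symm_image,
    Measure.map_smul, Measure.map_smul, Measure.map_smul, Measure.map_map h0 hem,
    Measure.map_map h0 hem, hcomp] at hc
  simpa only [smul_smul, ENNReal.inv_mul_cancel hdet ENNReal.ofReal_ne_top, one_smul] using
    congrArg ((ENNReal.ofReal |LinearMap.det
      (e : (Fin (k + 1) → ℝ) →ₗ[ℝ] (Fin (k + 1) → ℝ))|)⁻¹ • ·) hc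

lemma IsEqualityPair.exists_restrict_eq_map (hAB : IsEqualityPair p W A B)
    (hW : IsConicWeight p W) : ∃ b : Fin n → ℝ, (volume.withDensity W).restrict A =
      ((volume.withDensity W).restrict B).map (· + b) := by
  have : IsFiniteMeasure ((volume.withDensity W).restrict A) :=
    ⟨by simpa using hAB.left.ne_top.lt_top⟩
  have : IsFiniteMeasure ((volume.withDensity W).restrict B) :=
    ⟨by simpa using hAB.right.ne_top.lt_top⟩
  exact exists_eq_map_add_of_forall_map_eq
    (by simpa using hAB.right.measure_ne_zero hW.measurable) (hAB.left.integrable_id hW)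
    (hAB.right.integrable_id hW) fun L => hAB.exists_map_eq hW L

lemma IsEqualityPair.exists_indicator_ae_eq (hAB : IsEqualityPair p W A B)
    (hW : IsConicWeight p W) :
    ∃ b : Fin n → ℝ, A.indicator W =ᵐ[volume] fun x => B.indicator W (x - b) := by
  obtain ⟨b, hb⟩ := hAB.exists_restrict_eq_map hW
  have hA := hAB.left.isOpen.measurableSet
  have hB := hAB.right.isOpen.measurableSet
  rw [restrict_withDensity hA, restrict_withDensity hB, ← withDensity_indicator hA,
    ← withDensity_indicator hB, map_add_right_withDensity] at hb
  refine ⟨b, (withDensity_eq_iff (hW.measurable.indicator hA).aemeasurable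
    ((hW.measurable.indicator hB).comp (measurable_sub_const b)).aemeasurable ?_).1 hb⟩
  rw [lintegral_indicator hA, ← withDensity_apply _ hA]
  exact hAB.left.ne_top

theorem IsEqualityPair.exists_translate (hAB : IsEqualityPair p W A B)
    (hW : IsConicWeight p W) :
    ∃ b : Fin n → ℝ, (∀ x, x + b ∈ A ↔ x ∈ B) ∧ ∀ᵐ x, x ∈ B → W (x + b) = W x := by
  obtain ⟨b, hb⟩ := hAB.exists_indicator_ae_eq hW
  have hb' : ∀ᵐ x, A.indicator W (x + b) = B.indicator W x := by
    simpa only [add_sub_cancel_right] using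
      (measurePreserving_add_right volume b).quasiMeasurePreserving.ae hb
  have hiff : ∀ᵐ x, x + b ∈ A ↔ x ∈ B := by
    filter_upwards [hb'] with x hx
    have hA : A.indicator W (x + b) ≠ 0 ↔ x + b ∈ A := by
      rw [← mem_ofPred_eq (p := fun y => A.indicator W y ≠ 0), hAB.left.support_indicator]
    have hB : B.indicator W x ≠ 0 ↔ x ∈ B := by
      rw [← mem_ofPred_eq (p := fun y => B.indicator W y ≠ 0), hAB.right.support_indicator]
    rw [← hA, hx, hB]
  have hAb : IsOpen ((· + b) ⁻¹' A) := hAB.left.isOpen.preimage (continuous_add_const b)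
  have heq : (· + b) ⁻¹' A = B :=
    (subset_of_ae_le_of_convex hAb hAB.right.isOpen hAB.right.convex
      (hiff.mono fun x hx => hx.1)).antisymm
    (subset_of_ae_le_of_convex hAB.right.isOpen hAb (hAB.left.convex.translate_preimage_left b)
      (hiff.mono fun x hx => hx.2))
  have hmem : ∀ x, x + b ∈ A ↔ x ∈ B := fun x => by rw [← heq, mem_preimage]
  refine ⟨b, hmem, hb'.mono fun x hx hxB => ?_⟩
  rwa [indicator_of_mem ((hmem x).2 hxB), indicator_of_mem hxB] at hx

end LinearChange

end Translate

section WeightCore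

/-- The interior of the part of `X` on which the weight does not vanish: for a conic weight and a
convex set, an open convex set carrying all the mass of `X`. -/
def weightCore {E : Type*} [TopologicalSpace E] (W : E → ℝ≥0∞) (X : Set E) : Set E :=
  interior (X ∩ {x | W x ≠ 0})

lemma weightCore_subset {E : Type*} [TopologicalSpace E] {W : E → ℝ≥0∞} {X : Set E} :
    weightCore W X ⊆ X :=
  interior_subset.trans inter_subset_left

lemma ne_zero_of_mem_weightCore {E : Type*} [TopologicalSpace E] {W : E → ℝ≥0∞} {X : Set E} {x : E}
    (hx : x ∈ weightCore W X) : W x ≠ 0 :=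
  (interior_subset hx).2

namespace IsConicWeight

variable {p : ℝ} {n : ℕ} {W : (Fin n → ℝ) → ℝ≥0∞} {X Y : Set (Fin n → ℝ)}

lemma ae_mem_weightCore (hW : IsConicWeight p W) (hX : Convex ℝ X) :
    ∀ᵐ x, x ∈ X → W x ≠ 0 → x ∈ weightCore W X := by
  have hfr : volume (frontier (X ∩ {x | W x ≠ 0})) = 0 :=
    (hX.inter hW.convex_support).addHaar_frontier volume
  filter_upwards [measure_eq_zero_iff_ae_notMem.1 hfr] with x hx hxX hxW
  by_contra hnot
  exact hx ⟨subset_closure ⟨hxX, hxW⟩, hnot⟩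

lemma withDensity_diff_weightCore (hW : IsConicWeight p W) (hX : Convex ℝ X) :
    volume.withDensity W (X \ weightCore W X) = 0 := by
  rw [withDensity_apply_eq_zero hW.measurable, measure_eq_zero_iff_ae_notMem]
  filter_upwards [hW.ae_mem_weightCore hX] with x hx hx'
  exact hx'.2.2 (hx hx'.2.1 hx'.1)

lemma withDensity_weightCore (hW : IsConicWeight p W) (hX : Convex ℝ X) :
    volume.withDensity W (weightCore W X) = volume.withDensity W X :=
  measure_eq_measure_of_null_sdiff weightCore_subset (hW.withDensity_diff_weightCore hX)

lemma isConvexRegion_weightCore (hW : IsConicWeight p W) (hX : Convex ℝ X)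
    (hX0 : volume.withDensity W X ≠ 0) (hXtop : volume.withDensity W X ≠ ⊤) :
    IsConvexRegion W (weightCore W X) where
  isOpen := isOpen_interior
  convex := (hX.inter hW.convex_support).interior
  nonempty := nonempty_of_measure_ne_zero (by rwa [hW.withDensity_weightCore hX])
  ne_zero _ := ne_zero_of_mem_weightCore
  ne_top := by rwa [hW.withDensity_weightCore hX]

lemma rpow_add_rpow_le_weightCore (hW : IsConicWeight p W) (hX : Convex ℝ X) (hY : Convex ℝ Y)
    (hX0 : volume.withDensity W X ≠ 0) (hY0 : volume.withDensity W Y ≠ 0) :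
    volume.withDensity W X ^ (p⁻¹ + n)⁻¹ + volume.withDensity W Y ^ (p⁻¹ + n)⁻¹ ≤
      volume.withDensity W (weightCore W X + weightCore W Y) ^ (p⁻¹ + n)⁻¹ := by
  rw [← hW.withDensity_weightCore hX] at hX0 ⊢
  rw [← hW.withDensity_weightCore hY] at hY0 ⊢
  exact hW.rpow_add_rpow_le_of_measurableSet isOpen_interior.measurableSet
    isOpen_interior.measurableSet isOpen_interior.add_right.measurableSet hX0 hY0

lemma rpow_add_rpow_le_of_convex (hW : IsConicWeight p W) (hX : Convex ℝ X) (hY : Convex ℝ Y)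
    (hX0 : volume.withDensity W X ≠ 0) (hY0 : volume.withDensity W Y ≠ 0) :
    volume.withDensity W X ^ (p⁻¹ + n)⁻¹ + volume.withDensity W Y ^ (p⁻¹ + n)⁻¹ ≤
      volume.withDensity W (X + Y) ^ (p⁻¹ + n)⁻¹ :=
  (hW.rpow_add_rpow_le_weightCore hX hY hX0 hY0).trans <| ENNReal.rpow_le_rpow
    (measure_mono (add_subset_add weightCore_subset weightCore_subset))
    (inv_nonneg.2 (hW.exponent_pos n).le)

end IsConicWeight

end WeightCore

section ZeroSet

lemma mem_closure_of_forall_midpoint_mem {E : Type*} [NormedAddCommGroup E] [NormedSpace ℝ E]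
    {D : Set E} {z : E} (hD : D.Nonempty) (h : ∀ x ∈ D, midpoint ℝ x z ∈ D) : z ∈ closure D := by
  obtain ⟨x₀, hx₀⟩ := hD
  have hmem : ∀ k : ℕ, z + (2⁻¹ : ℝ) ^ k • (x₀ - z) ∈ D := fun k => by
    induction k with
    | zero => simpa using hx₀
    | succ k ih =>
      convert h _ ih using 1
      rw [midpoint_eq_smul_add, invOf_eq_inv, pow_succ']
      module
  have hpow : Tendsto (fun k : ℕ => (2⁻¹ : ℝ) ^ k) atTop (𝓝 0) :=
    tendsto_pow_atTop_nhds_zero_of_lt_one (by norm_num) (by norm_num)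
  refine mem_closure_of_tendsto (f := fun k : ℕ => z + (2⁻¹ : ℝ) ^ k • (x₀ - z)) (b := atTop) ?_
    (Eventually.of_forall hmem)
  simpa using (hpow.smul_const (x₀ - z)).const_add z

/-- Two convex sets of equal positive finite mass that achieve equality in the Brunn–Minkowski
inequality; unlike in `IsEqualityPair`, the weight may vanish on part of the sets. -/
structure IsExtremalPair {n : ℕ} (p : ℝ) (W : (Fin n → ℝ) → ℝ≥0∞) (X Y : Set (Fin n → ℝ)) :
    Prop where
  convex_left : Convex ℝ X
  convex_right : Convex ℝ Y
  ne_zero : volume.withDensity W X ≠ 0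
  ne_top : volume.withDensity W X ≠ ⊤
  mass_eq : volume.withDensity W X = volume.withDensity W Y
  mass_add_le : volume.withDensity W (X + Y) ≤ 2 ^ (p⁻¹ + n) * volume.withDensity W X

namespace IsExtremalPair

variable {p : ℝ} {n : ℕ} {W : (Fin n → ℝ) → ℝ≥0∞} {X Y : Set (Fin n → ℝ)} {b : Fin n → ℝ}

lemma isEqualityPair_weightCore (hXY : IsExtremalPair p W X Y) (hW : IsConicWeight p W) :
    IsEqualityPair p W (weightCore W X) (weightCore W Y) where
  left := hW.isConvexRegion_weightCore hXY.convex_left hXY.ne_zero hXY.ne_top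
  right := hW.isConvexRegion_weightCore hXY.convex_right (hXY.mass_eq ▸ hXY.ne_zero)
    (hXY.mass_eq ▸ hXY.ne_top)
  mass_eq := by
    rw [hW.withDensity_weightCore hXY.convex_left, hW.withDensity_weightCore hXY.convex_right,
      hXY.mass_eq]
  mass_add_le := by
    rw [hW.withDensity_weightCore hXY.convex_left]
    exact (measure_mono (add_subset_add weightCore_subset weightCore_subset)).trans hXY.mass_add_le

lemma two_rpow_mul_le (hXY : IsExtremalPair p W X Y) (hW : IsConicWeight p W) :
    2 ^ (p⁻¹ + n) * volume.withDensity W X ≤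
      volume.withDensity W (weightCore W X + weightCore W Y) := by
  have hN := hW.exponent_pos n
  have hBM := hW.rpow_add_rpow_le_weightCore hXY.convex_left hXY.convex_right hXY.ne_zero
    (hXY.mass_eq ▸ hXY.ne_zero)
  rwa [← hXY.mass_eq, ← two_mul, ENNReal.le_rpow_inv_iff hN,
    ENNReal.mul_rpow_of_nonneg _ _ hN.le, ENNReal.rpow_inv_rpow hN.ne'] at hBM

lemma withDensity_add_diff_weightCore (hXY : IsExtremalPair p W X Y) (hW : IsConicWeight p W) :
    volume.withDensity W ((X + Y) \ (weightCore W X + weightCore W Y)) = 0 := by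
  have hsub := add_subset_add (weightCore_subset (W := W) (X := X))
    (weightCore_subset (W := W) (X := Y))
  have htop : volume.withDensity W (X + Y) ≠ ⊤ := ne_top_of_le_ne_top
    (ENNReal.mul_ne_top (ENNReal.rpow_ne_top_of_nonneg (hW.exponent_pos n).le
      ENNReal.ofNat_ne_top) hXY.ne_top) hXY.mass_add_le
  exact ae_le_set.1 (ae_eq_of_subset_of_measure_ge hsub
    (hXY.mass_add_le.trans (hXY.two_rpow_mul_le hW))
    isOpen_interior.add_right.nullMeasurableSet htop).symm.le

lemma add_mem_weightCore_add (hXY : IsExtremalPair p W X Y) (hW : IsConicWeight p W)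
    (hb : ∀ x, x + b ∈ weightCore W X ↔ x ∈ weightCore W Y) {x z : Fin n → ℝ}
    (hx : x ∈ weightCore W Y) (hzY : z ∈ Y) (hz : W (z + b) ≠ 0) :
    x + (z + b) ∈ weightCore W X + weightCore W Y := by
  have hcore := hXY.isEqualityPair_weightCore hW
  have hopen : IsOpen ((· - (z + b)) ⁻¹' weightCore W Y) :=
    hcore.right.isOpen.preimage (continuous_sub_right _)
  have hconvex : Convex ℝ (weightCore W X + weightCore W Y) :=
    hcore.left.convex.add hcore.right.convex
  have hae : (· - (z + b)) ⁻¹' weightCore W Y ≤ᵐ[volume] weightCore W X + weightCore W Y := by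
    have hnull := hXY.withDensity_add_diff_weightCore hW
    rw [withDensity_apply_eq_zero hW.measurable] at hnull
    refine ae_le_set.2 (measure_mono_null ?_ hnull)
    rintro v ⟨hv, hvcore⟩
    obtain ⟨u, hu, rfl⟩ : ∃ u ∈ weightCore W Y, v = u + (z + b) :=
      ⟨_, hv, (sub_add_cancel _ _).symm⟩
    refine ⟨hW.add_ne_zero (ne_zero_of_mem_weightCore hu) hz, ?_, hvcore⟩
    rw [← add_assoc, add_right_comm]
    exact add_mem_add (weightCore_subset ((hb u).2 hu)) hzY
  exact subset_of_ae_le_of_convex hopen hcore.left.isOpen.add_right hconvex hae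
    (by rwa [mem_preimage, add_sub_cancel_right])

lemma mem_closure_weightCore (hXY : IsExtremalPair p W X Y) (hW : IsConicWeight p W)
    (hb : ∀ x, x + b ∈ weightCore W X ↔ x ∈ weightCore W Y) {z : Fin n → ℝ}
    (hzY : z ∈ Y) (hz : W (z + b) ≠ 0) : z ∈ closure (weightCore W Y) := by
  have hcoreY := (hXY.isEqualityPair_weightCore hW).right
  refine mem_closure_of_forall_midpoint_mem hcoreY.nonempty fun x hx => ?_
  obtain ⟨u, hu, v, hv, huv : u + v = x + (z + b)⟩ := hXY.add_mem_weightCore_add hW hb hx hzY hz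
  have hu' : u - b ∈ weightCore W Y := (hb _).1 (by simpa using hu)
  have hmid : midpoint ℝ x z = midpoint ℝ (u - b) v := by
    rw [midpoint_eq_smul_add, midpoint_eq_smul_add, sub_add_eq_add_sub, huv, ← add_assoc,
      add_sub_cancel_right]
  rw [hmid]
  exact hcoreY.convex.midpoint_mem hu' hv

lemma ae_mem_weightCore (hXY : IsExtremalPair p W X Y) (hW : IsConicWeight p W)
    (hb : ∀ x, x + b ∈ weightCore W X ↔ x ∈ weightCore W Y) :
    ∀ᵐ z, z ∈ Y → W (z + b) ≠ 0 → z ∈ weightCore W Y := by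
  have hcoreY := (hXY.isEqualityPair_weightCore hW).right
  filter_upwards [measure_eq_zero_iff_ae_notMem.1 (hcoreY.convex.addHaar_frontier volume)]
    with z hfr hzY hz
  have hcl := hXY.mem_closure_weightCore hW hb hzY hz
  by_contra hnot
  exact hfr ⟨hcl, fun hint => hnot (interior_subset hint)⟩

-- The translation matches the cores, and almost everywhere outside them both weights vanish.
theorem exists_translate (hXY : IsExtremalPair p W X Y) (hW : IsConicWeight p W) :
    ∃ b : Fin n → ℝ, volume.withDensity W (X \ (· + b) '' Y) = 0 ∧
      volume.withDensity W ((· + b) '' Y \ X) = 0 ∧ ∀ᵐ z, z ∈ Y → W (z + b) = W z := by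
  obtain ⟨b, hb, hbW⟩ := (hXY.isEqualityPair_weightCore hW).exists_translate hW
  have hcore := hXY.ae_mem_weightCore hW hb
  refine ⟨b, ?_, ?_, ?_⟩
  · refine measure_mono_null (fun y hy => ?_) (hW.withDensity_diff_weightCore hXY.convex_left)
    refine ⟨hy.1, fun hyX => hy.2 ⟨y - b, ?_, sub_add_cancel y b⟩⟩
    exact weightCore_subset ((hb _).1 (by rwa [sub_add_cancel]))
  · rw [withDensity_apply_eq_zero hW.measurable, measure_eq_zero_iff_ae_notMem]
    filter_upwards [(measurePreserving_sub_right volume b).quasiMeasurePreserving.ae hcore]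
    rintro _ hz ⟨hWz, ⟨z, hzY, rfl⟩, hzX⟩
    rw [add_sub_cancel_right] at hz
    exact hzX (weightCore_subset ((hb z).2 (hz hzY hWz)))
  · filter_upwards [hbW, hcore, hW.ae_mem_weightCore hXY.convex_right] with z heq hz hz' hzY
    by_cases hzD : z ∈ weightCore W Y
    · exact heq hzD
    · rw [not_imp_comm.1 (hz hzY) hzD, not_imp_comm.1 (hz' hzY) hzD]

end IsExtremalPair

end ZeroSet

section Isoperimetric

lemma smul_add_smul_add_subset {E : Type*} [AddCommGroup E] [Module ℝ E] {A B : Set E}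
    (hA : Convex ℝ A) {l : ℝ} (hl : l ∈ Icc 0 1) (ε : ℝ) :
    (1 - l) • A + l • (A + ε • B) ⊆ A + (l * ε) • B := by
  rw [smul_add, ← add_assoc, smul_smul]
  exact add_subset_add_right (hA.set_combo_subset (sub_nonneg.2 hl.2) hl.1 (sub_add_cancel 1 l))

lemma mul_rpow_sub_one_mul_le_rpow_sub_rpow {a x N : ℝ} (ha : 0 < a) (hx : 0 ≤ x) (hN : 1 ≤ N) :
    N * a ^ (N - 1) * x ≤ (a + x) ^ N - a ^ N := by
  have hxa : 0 ≤ x / a := by positivity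
  have hbernoulli := one_add_mul_self_le_rpow_one_add (neg_one_lt_zero.le.trans hxa) hN
  have hfactor : (a + x) ^ N = a ^ N * (1 + x / a) ^ N := by
    rw [← Real.mul_rpow ha.le (by positivity), mul_add, mul_one, mul_div_cancel₀ _ ha.ne']
  have hpow : a ^ N = a ^ (N - 1) * a := by rw [← Real.rpow_add_one ha.ne', sub_add_cancel]
  rw [le_sub_iff_add_le']
  calc a ^ N + N * a ^ (N - 1) * x = a ^ N * (1 + N * (x / a)) := by rw [hpow]; field_simp
    _ ≤ a ^ N * (1 + x / a) ^ N := mul_le_mul_of_nonneg_left hbernoulli (by positivity)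
    _ = (a + x) ^ N := hfactor.symm

lemma le_mBoundary_of_eventually_le {n : ℕ} {μ : Measure (Fin n → ℝ)} {A B : Set (Fin n → ℝ)}
    {a κ N : ℝ} (ha : 0 < a) (hκ : 0 ≤ κ) (hN : 1 ≤ N) (hA : μ A = ENNReal.ofReal (a ^ N))
    (h : ∀ᶠ δ : ℝ in 𝓝[>] 0, ENNReal.ofReal ((a + δ * κ) ^ N) ≤ μ (A + δ • B)) :
    ENNReal.ofReal (N * a ^ (N - 1) * κ) ≤ mBoundary μ B A := by
  refine le_liminf_of_le (by isBoundedDefault) ?_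
  filter_upwards [h, self_mem_nhdsWithin] with δ hδ (hδ0 : 0 < δ)
  rw [ENNReal.le_div_iff_mul_le (Or.inl (by simpa using hδ0)) (Or.inl ENNReal.ofReal_ne_top),
    ← ENNReal.ofReal_mul (by positivity)]
  calc ENNReal.ofReal (N * a ^ (N - 1) * κ * δ)
      ≤ ENNReal.ofReal ((a + δ * κ) ^ N - a ^ N) := ENNReal.ofReal_le_ofReal <| by
        rw [mul_assoc, mul_comm κ]
        exact mul_rpow_sub_one_mul_le_rpow_sub_rpow ha (by positivity) hN
    _ = ENNReal.ofReal ((a + δ * κ) ^ N) - μ A := by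
        rw [hA, ENNReal.ofReal_sub _ (by positivity)]
    _ ≤ μ (A + δ • B) - μ A := tsub_le_tsub_right hδ _
    _ ≤ μ ((A + δ • B) \ A) := le_measure_sdiff

namespace IsConicWeight

variable {p : ℝ} {n : ℕ} {W : (Fin n → ℝ) → ℝ≥0∞} {A B : Set (Fin n → ℝ)}

lemma one_le_exponent (hW : IsConicWeight p W) (hn : 1 ≤ n) : 1 ≤ p⁻¹ + n := by
  have hn' : (1 : ℝ) ≤ n := by exact_mod_cast hn
  exact hn'.trans (le_add_of_nonneg_left (inv_nonneg.2 hW.pos.le))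

lemma withDensity_smul_ne_zero (hW : IsConicWeight p W) {c : ℝ} (hc : 0 < c)
    (hA0 : volume.withDensity W A ≠ 0) : volume.withDensity W (c • A) ≠ 0 := by
  rw [hW.withDensity_smul hc]
  exact mul_ne_zero (ENNReal.rpow_pos (ENNReal.ofReal_pos.2 hc) ENNReal.ofReal_ne_top).ne' hA0

lemma rpow_withDensity_add_smul_ge (hW : IsConicWeight p W) (hA : Convex ℝ A) (hB : Convex ℝ B)
    {ε l : ℝ} (hl : l ∈ Ioo 0 1) (hA0 : volume.withDensity W A ≠ 0)
    (hAB0 : volume.withDensity W (A + ε • B) ≠ 0) :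
    ENNReal.ofReal (1 - l) * volume.withDensity W A ^ (p⁻¹ + n)⁻¹ +
        ENNReal.ofReal l * volume.withDensity W (A + ε • B) ^ (p⁻¹ + n)⁻¹ ≤
      volume.withDensity W (A + (l * ε) • B) ^ (p⁻¹ + n)⁻¹ := by
  have hl' : 0 < 1 - l := sub_pos.2 hl.2
  have hABc : Convex ℝ (A + ε • B) := hA.add (hB.smul ε)
  rw [← hW.withDensity_smul_rpow_inv hl', ← hW.withDensity_smul_rpow_inv hl.1]
  exact (hW.rpow_add_rpow_le_of_convex (hA.smul _) (hABc.smul l)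
    (hW.withDensity_smul_ne_zero hl' hA0) (hW.withDensity_smul_ne_zero hl.1 hAB0)).trans <|
    ENNReal.rpow_le_rpow (measure_mono (smul_add_smul_add_subset hA (Ioo_subset_Icc_self hl) ε))
      (inv_nonneg.2 (hW.exponent_pos n).le)

lemma ofReal_le_mBoundary (hW : IsConicWeight p W) (hN : 1 ≤ p⁻¹ + n) (hA : Convex ℝ A)
    (hB : Convex ℝ B) {a κ ε : ℝ} (ha : 0 < a) (hκ : 0 ≤ κ) (hε : 0 < ε)
    (hAa : volume.withDensity W A = ENNReal.ofReal (a ^ (p⁻¹ + n)))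
    (hAB : ENNReal.ofReal (a + ε * κ) ≤ volume.withDensity W (A + ε • B) ^ (p⁻¹ + n)⁻¹) :
    ENNReal.ofReal ((p⁻¹ + n) * a ^ (p⁻¹ + n - 1) * κ) ≤
      mBoundary (volume.withDensity W) B A := by
  have hN0 := hW.exponent_pos n
  have hAq : volume.withDensity W A ^ (p⁻¹ + n)⁻¹ = ENNReal.ofReal a := by
    rw [hAa, ← ENNReal.ofReal_rpow_of_pos ha, ENNReal.rpow_rpow_inv hN0.ne']
  have hA0 : volume.withDensity W A ≠ 0 := by
    rw [hAa]
    exact (ENNReal.ofReal_pos.2 (by positivity)).ne'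
  have hAB0 : volume.withDensity W (A + ε • B) ≠ 0 := fun h0 => by
    rw [h0, ENNReal.zero_rpow_of_pos (inv_pos.2 hN0), nonpos_iff_eq_zero,
      ENNReal.ofReal_eq_zero] at hAB
    exact absurd hAB (not_le.2 (by positivity))
  refine le_mBoundary_of_eventually_le ha hκ hN hAa ?_
  filter_upwards [Ioo_mem_nhdsGT hε] with δ ⟨hδ0, hδε⟩
  have hl : δ / ε ∈ Ioo 0 1 := ⟨by positivity, (div_lt_one hε).2 hδε⟩
  have hl' : 0 ≤ 1 - δ / ε := sub_nonneg.2 hl.2.le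
  rw [← ENNReal.ofReal_rpow_of_pos (by positivity), ← ENNReal.le_rpow_inv_iff hN0]
  calc ENNReal.ofReal (a + δ * κ)
      = ENNReal.ofReal (1 - δ / ε) * ENNReal.ofReal a +
          ENNReal.ofReal (δ / ε) * ENNReal.ofReal (a + ε * κ) := by
        rw [← ENNReal.ofReal_mul hl', ← ENNReal.ofReal_mul hl.1.le,
          ← ENNReal.ofReal_add (by positivity) (by positivity)]
        congr 1
        field_simp
        ring
    _ ≤ ENNReal.ofReal (1 - δ / ε) * volume.withDensity W A ^ (p⁻¹ + n)⁻¹ +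
          ENNReal.ofReal (δ / ε) * volume.withDensity W (A + ε • B) ^ (p⁻¹ + n)⁻¹ := by
        rw [hAq]
        gcongr
    _ ≤ volume.withDensity W (A + (δ / ε * ε) • B) ^ (p⁻¹ + n)⁻¹ :=
        hW.rpow_withDensity_add_smul_ge hA hB hl hA0 hAB0
    _ = volume.withDensity W (A + δ • B) ^ (p⁻¹ + n)⁻¹ := by rw [div_mul_cancel₀ _ hε.ne']

lemma rpow_withDensity_add_smul_le_of_mBoundary_le (hW : IsConicWeight p W) (hN : 1 ≤ p⁻¹ + n)
    (hA : Convex ℝ A) (hB : Convex ℝ B) (hA0 : volume.withDensity W A ≠ 0)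
    (hAtop : volume.withDensity W A ≠ ⊤) (hBtop : volume.withDensity W B ≠ ⊤)
    (hle : mBoundary (volume.withDensity W) B A ≤ ENNReal.ofReal (p⁻¹ + n) *
      volume.withDensity W B ^ (p⁻¹ + n)⁻¹ * volume.withDensity W A ^ (1 - (p⁻¹ + n)⁻¹))
    {ε : ℝ} (hε : 0 < ε) : volume.withDensity W (A + ε • B) ^ (p⁻¹ + n)⁻¹ ≤
      volume.withDensity W A ^ (p⁻¹ + n)⁻¹ +
        ENNReal.ofReal ε * volume.withDensity W B ^ (p⁻¹ + n)⁻¹ := by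
  have hN0 := hW.exponent_pos n
  have hq : 0 < (p⁻¹ + (n : ℝ))⁻¹ := inv_pos.2 hN0
  obtain ⟨a, ha, hAa⟩ : ∃ a : ℝ, 0 < a ∧
      volume.withDensity W A ^ (p⁻¹ + n)⁻¹ = ENNReal.ofReal a := by
    have hne : volume.withDensity W A ^ (p⁻¹ + n)⁻¹ ≠ ⊤ := ENNReal.rpow_ne_top_of_nonneg hq.le hAtop
    exact ⟨_, ENNReal.toReal_pos (ENNReal.rpow_pos (pos_iff_ne_zero.2 hA0) hAtop).ne' hne,
      (ENNReal.ofReal_toReal hne).symm⟩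
  obtain ⟨β, hβ, hBβ⟩ : ∃ β : ℝ, 0 ≤ β ∧
      volume.withDensity W B ^ (p⁻¹ + n)⁻¹ = ENNReal.ofReal β :=
    ⟨_, ENNReal.toReal_nonneg,
      (ENNReal.ofReal_toReal (ENNReal.rpow_ne_top_of_nonneg hq.le hBtop)).symm⟩
  have hAN : volume.withDensity W A = ENNReal.ofReal (a ^ (p⁻¹ + n)) := by
    rw [← ENNReal.ofReal_rpow_of_pos ha, ← hAa, ENNReal.rpow_inv_rpow hN0.ne']
  have hAdual : volume.withDensity W A ^ (1 - (p⁻¹ + n)⁻¹) =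
      ENNReal.ofReal (a ^ (p⁻¹ + n - 1)) := by
    rw [hAN, ENNReal.ofReal_rpow_of_pos (by positivity), ← Real.rpow_mul ha.le, mul_sub, mul_one,
      mul_inv_cancel₀ hN0.ne']
  rw [hAa, hBβ, ← ENNReal.ofReal_mul hε.le, ← ENNReal.ofReal_add ha.le (by positivity)]
  by_contra! hlt
  obtain ⟨r, -, hr, hrAB⟩ := ENNReal.lt_iff_exists_real_btwn.1 hlt
  rw [ENNReal.ofReal_lt_ofReal_iff_of_nonneg (by positivity), ← lt_sub_iff_add_lt',
    ← lt_div_iff₀' hε] at hr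
  have hslope := (hW.ofReal_le_mBoundary hN hA hB ha (hβ.trans hr.le) hε hAN
    (by rw [mul_div_cancel₀ _ hε.ne', add_sub_cancel]; exact hrAB.le)).trans hle
  rw [hAdual, hBβ, mul_right_comm, ← ENNReal.ofReal_mul hN0.le,
    ← ENNReal.ofReal_mul (by positivity), ENNReal.ofReal_le_ofReal_iff (by positivity)] at hslope
  exact hr.not_ge (le_of_mul_le_mul_left (le_of_mul_le_mul_right hslope (by positivity)) hN0)

end IsConicWeight

end Isoperimetric

section Equality

namespace IsConicWeight

variable {p : ℝ} {n : ℕ} {W : (Fin n → ℝ) → ℝ≥0∞} {A B : Set (Fin n → ℝ)}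

lemma exists_withDensity_smul_eq (hW : IsConicWeight p W) (hA0 : volume.withDensity W A ≠ 0)
    (hAtop : volume.withDensity W A ≠ ⊤) (hB0 : volume.withDensity W B ≠ 0)
    (hBtop : volume.withDensity W B ≠ ⊤) :
    ∃ t : ℝ, 0 < t ∧ volume.withDensity W (t • B) = volume.withDensity W A := by
  have hN := hW.exponent_pos n
  have hdiv := ENNReal.div_ne_top hAtop hB0
  have hr : 0 < (volume.withDensity W A / volume.withDensity W B).toReal :=
    ENNReal.toReal_pos (ENNReal.div_ne_zero.2 ⟨hA0, hBtop⟩) hdiv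
  refine ⟨(volume.withDensity W A / volume.withDensity W B).toReal ^ (p⁻¹ + (n : ℝ))⁻¹,
    by positivity, ?_⟩
  rw [hW.withDensity_smul (by positivity), ENNReal.ofReal_rpow_of_pos (by positivity),
    Real.rpow_inv_rpow hr.le hN.ne', ENNReal.ofReal_toReal hdiv, ENNReal.div_mul_cancel hB0 hBtop]

lemma isExtremalPair_smul_of_mBoundary_le (hW : IsConicWeight p W) (hN : 1 ≤ p⁻¹ + n)
    (hA : Convex ℝ A) (hB : Convex ℝ B) (hA0 : volume.withDensity W A ≠ 0)
    (hAtop : volume.withDensity W A ≠ ⊤) (hBtop : volume.withDensity W B ≠ ⊤)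
    (hle : mBoundary (volume.withDensity W) B A ≤ ENNReal.ofReal (p⁻¹ + n) *
      volume.withDensity W B ^ (p⁻¹ + n)⁻¹ * volume.withDensity W A ^ (1 - (p⁻¹ + n)⁻¹))
    {t : ℝ} (ht : 0 < t) (htB : volume.withDensity W (t • B) = volume.withDensity W A) :
    IsExtremalPair p W A (t • B) where
  convex_left := hA
  convex_right := hB.smul t
  ne_zero := hA0
  ne_top := hAtop
  mass_eq := htB.symm
  mass_add_le := by
    have hN0 := hW.exponent_pos n
    have hgrowth :=
      hW.rpow_withDensity_add_smul_le_of_mBoundary_le hN hA hB hA0 hAtop hBtop hle ht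
    rwa [← hW.withDensity_smul_rpow_inv ht, htB, ← two_mul, ENNReal.rpow_inv_le_iff hN0,
      ENNReal.mul_rpow_of_nonneg _ _ hN0.le, ENNReal.rpow_inv_rpow hN0.ne'] at hgrowth

theorem exists_homothety (hW : IsConicWeight p W) (hN : 1 ≤ p⁻¹ + n)
    (hA : Convex ℝ A) (hB : Convex ℝ B) (hA0 : volume.withDensity W A ≠ 0)
    (hAtop : volume.withDensity W A ≠ ⊤) (hB0 : volume.withDensity W B ≠ 0)
    (hBtop : volume.withDensity W B ≠ ⊤)
    (hle : mBoundary (volume.withDensity W) B A ≤ ENNReal.ofReal (p⁻¹ + n) *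
      volume.withDensity W B ^ (p⁻¹ + n)⁻¹ * volume.withDensity W A ^ (1 - (p⁻¹ + n)⁻¹)) :
    ∃ (m : ℝ) (b : Fin n → ℝ), 0 < m ∧
      volume.withDensity W (A \ (fun x => m • x + b) '' B) = 0 ∧
      volume.withDensity W ((fun x => m • x + b) '' B \ A) = 0 ∧
      ∀ᵐ x, x ∈ B → W (m • x + b) = ENNReal.ofReal m ^ p⁻¹ * W x := by
  obtain ⟨t, ht, htB⟩ := hW.exists_withDensity_smul_eq hA0 hAtop hB0 hBtop
  have hpair := hW.isExtremalPair_smul_of_mBoundary_le hN hA hB hA0 hAtop hBtop hle ht htB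
  obtain ⟨b, hAB, hBA, hweight⟩ := hpair.exists_translate hW
  have himage : (fun x => t • x + b) '' B = (· + b) '' (t • B) := by
    rw [← image_smul, image_image]
  have hsmul : Measure.QuasiMeasurePreserving (fun x : Fin n → ℝ => t • x) volume volume :=
    ⟨measurable_const_smul t, by
      rw [Measure.map_addHaar_smul _ ht.ne']
      exact Measure.smul_absolutelyContinuous⟩
  refine ⟨t, b, ht, by rwa [himage], by rwa [himage], ?_⟩
  filter_upwards [hsmul.ae hweight] with x hx hxB
  rw [hx (smul_mem_smul_set hxB), hW.hom t ht]

end IsConicWeight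

lemma isConicWeight_ofReal {E : Type*} [AddCommGroup E] [Module ℝ E] [MeasurableSpace E] {p : ℝ}
    (hp : 0 < p) {w : E → ℝ} (hwm : Measurable w) (hw0 : ∀ x, 0 ≤ w x)
    (hwconc : ∀ x y : E, 0 < w x * w y → ∀ lam ∈ Set.Ioo (0 : ℝ) 1,
      (lam * w x ^ p + (1 - lam) * w y ^ p) ^ (1 / p) ≤ w (lam • x + (1 - lam) • y))
    (hwhom : ∀ c : ℝ, 0 < c → ∀ x, w (c • x) ^ p = c * w x ^ p) :
    IsConicWeight p fun x => ENNReal.ofReal (w x) where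
  pos := hp
  measurable := hwm.ennreal_ofReal
  ne_top _ := ENNReal.ofReal_ne_top
  hom c hc x := by
    rw [ENNReal.ofReal_rpow_of_pos hc, ← ENNReal.ofReal_mul (by positivity),
      ← Real.rpow_rpow_inv (hw0 (c • x)) hp.ne', hwhom c hc x,
      Real.mul_rpow hc.le (Real.rpow_nonneg (hw0 x) p), Real.rpow_rpow_inv (hw0 x) hp.ne']
  superadd x y hx hy := by
    have hx' : 0 < w x := by simpa using hx
    have hy' : 0 < w y := by simpa using hy
    have hscale : ∀ z, (2⁻¹ : ℝ) * w ((2 : ℝ) • z) ^ p = w z ^ p := fun z => by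
      rw [hwhom 2 two_pos, inv_mul_cancel_left₀ two_ne_zero]
    have hpos : ∀ z, 0 < w z → 0 < w ((2 : ℝ) • z) := fun z hz =>
      (hw0 _).lt_of_ne' fun h0 => by
        have hzero := hscale z
        rw [h0, Real.zero_rpow hp.ne', mul_zero] at hzero
        exact (Real.rpow_pos_of_pos hz p).ne hzero
    -- The midpoint of `2 • x` and `2 • y` is `x + y`.
    have hmid := hwconc ((2 : ℝ) • x) ((2 : ℝ) • y) (mul_pos (hpos x hx') (hpos y hy')) 2⁻¹
      ⟨by norm_num, by norm_num⟩
    rw [show (1 : ℝ) - 2⁻¹ = 2⁻¹ by norm_num, hscale, hscale, smul_smul, smul_smul,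
      inv_mul_cancel₀ two_ne_zero, one_smul, one_smul, one_div] at hmid
    rw [ENNReal.ofReal_rpow_of_pos hx', ENNReal.ofReal_rpow_of_pos hy',
      ← ENNReal.ofReal_add (by positivity) (by positivity),
      ENNReal.ofReal_rpow_of_pos (by positivity)]
    exact ENNReal.ofReal_le_ofReal hmid

end Equality

/-- characterization of equality in the isoperimetric inequality for a
`p`-concave `p`-homogeneous density `w`, `p ∈ (0, ∞)`, `1/q = 1/p + n`, among convex sets:
equality forces `A = mB + b` up to zero `μ`-measure, with `w(mx+b) = c w(x)` a.e. on `B`. -/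
theorem stmt6 (n : ℕ) (hn : 1 ≤ n) (p q : ℝ) (hp : 0 < p) (hq : 1 / q = 1 / p + (n : ℝ))
    (w : (Fin n → ℝ) → ℝ) (hwm : Measurable w) (hw0 : ∀ x, 0 ≤ w x)
    (hwconc : ∀ x y : Fin n → ℝ, 0 < w x * w y → ∀ lam ∈ Set.Ioo (0 : ℝ) 1,
      (lam * w x ^ p + (1 - lam) * w y ^ p) ^ (1 / p) ≤ w (lam • x + (1 - lam) • y))
    (hwhom : ∀ c : ℝ, 0 < c → ∀ x, w (c • x) ^ p = c * w x ^ p)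
    (μ : Measure (Fin n → ℝ))
    (hμ : μ = volume.withDensity fun x => ENNReal.ofReal (w x))
    (A B : Set (Fin n → ℝ)) (hAconv : Convex ℝ A) (hBconv : Convex ℝ B)
    (hA0 : 0 < μ A) (hAfin : μ A < ⊤) (hB0 : 0 < μ B) (hBfin : μ B < ⊤)
    (heq : mBoundary μ B A = ENNReal.ofReal (1 / q) * μ B ^ q * μ A ^ (1 - q)) :
    ∃ (m : ℝ) (b : Fin n → ℝ) (c : ℝ), 0 < m ∧ 0 < c ∧
      μ (A \ (fun x => m • x + b) '' B) = 0 ∧ μ ((fun x => m • x + b) '' B \ A) = 0 ∧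
      ∀ᵐ x ∂(volume : Measure (Fin n → ℝ)), x ∈ B → w (m • x + b) = c * w x := by
  have hW := isConicWeight_ofReal hp hwm hw0 hwconc hwhom
  have hq' : q = (p⁻¹ + (n : ℝ))⁻¹ := by rw [← one_div p, ← hq, one_div, inv_inv]
  rw [hq, hq', one_div] at heq
  subst hμ
  obtain ⟨m, b, hm, hAB, hBA, hweight⟩ := hW.exists_homothety (hW.one_le_exponent hn) hAconv hBconv
    hA0.ne' hAfin.ne hB0.ne' hBfin.ne heq.le
  refine ⟨m, b, m ^ p⁻¹, hm, by positivity, hAB, hBA, ?_⟩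
  filter_upwards [hweight] with x hx hxB
  have hx' := hx hxB
  rwa [ENNReal.ofReal_rpow_of_pos hm, ← ENNReal.ofReal_mul (by positivity),
    ENNReal.ofReal_eq_ofReal_iff (hw0 _) (mul_nonneg (by positivity) (hw0 x))] at hx'
end

section
/- Let n ≥ 1 and q < 0, and let μ be a σ-finite q-homogeneous Borel measure on ℝⁿ. Let B ⊆ ℝⁿ be an open bounded convex set containing the origin with μ(ℝⁿ∖B) ∈ (0,∞). If a Borel set C ⊆ ℝⁿ with μ(C) ∈ (0,∞) satisfies μ⁻_B(C) = −(1/q)·μ(ℝⁿ∖B)^q·μ(C)^{1−q}, then there exists t > 0 such that C coincides with ℝⁿ∖(tB) up to a set of zero μ-measure. -/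
open MeasureTheory Set Filter
open scoped Pointwise ENNReal Topology

/-- The inner Minkowski boundary measure `μ⁻_B(C) := μ⁺_B(ℝⁿ \ C)`. -/
noncomputable def mInnerBoundary {n : ℕ} (μ : Measure (Fin n → ℝ)) (B C : Set (Fin n → ℝ)) :
    ℝ≥0∞ :=
  mBoundary μ B Cᶜ

/-!
In the radial coordinate `s = r ^ (1 / q)`, homogeneity of `μ` says that away from the rays of
vanishing gauge `μ` is the product of Lebesgue measure `ds` on `(0, ∞)` and an angular measure `ν`
of total mass `μ Bᶜ`; the complement of `t • B` becomes `{s ≤ t ^ (1 / q)}`. On each ray let `f`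
be the length of the trace of `C` and `g ≥ f` its essential supremum. The mean value theorem
for `s ↦ s ^ q` shows that the inner collar of the trace has length at least about
`ε * g ^ (1 - q) / (-q)`, and Fatou's lemma gives `∫ g ^ (1 - q) ∂ν ≤ -q * μ⁻_B(C)`. If `μ⁻_B(C)`
attains the isoperimetric bound, Jensen's inequality for the strictly convex power `1 - q > 1` is an
equality, so `f = g` is constant and almost every trace is an interval starting at `0`.
-/

section RealLine

lemma rpow_sub_rpow_lt_of_neg {q : ℝ} (hq : q < 0) {U s s' ε : ℝ} (hU : 0 < U) (hUs : U ≤ s)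
    (hss' : s ≤ s') (h : s' - s < U ^ (1 - q) / -q * ε) : s ^ q - s' ^ q < ε := by
  have hmvt : q * U ^ (q - 1) * (s' - s) ≤ s' ^ q - s ^ q := by
    refine (convex_Ici U).mul_sub_le_image_sub_of_le_deriv (f := fun x => x ^ q) ?_ ?_ ?_
      s hUs s' (hUs.trans hss') hss'
    · exact fun x hx => (Real.continuousAt_rpow_const x q
        (Or.inl (hU.trans_le hx).ne')).continuousWithinAt
    · intro x hx
      rw [interior_Ici] at hx
      exact (Real.differentiableAt_rpow_const_of_ne q (hU.trans hx).ne').differentiableWithinAt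
    · intro x hx
      rw [interior_Ici] at hx
      rw [Real.deriv_rpow_const]
      exact mul_le_mul_of_nonpos_left
        (Real.rpow_le_rpow_of_nonpos hU (mem_Ioi.1 hx).le (by linarith)) hq.le
  have hUq : U ^ (q - 1) * U ^ (1 - q) = 1 := by
    rw [← Real.rpow_add hU, sub_add_sub_cancel, sub_self, Real.rpow_zero]
  have hpos : 0 < -q * U ^ (q - 1) := mul_pos (neg_pos.2 hq) (Real.rpow_pos_of_pos hU _)
  calc s ^ q - s' ^ q ≤ -q * U ^ (q - 1) * (s' - s) := by linarith
    _ < -q * U ^ (q - 1) * (U ^ (1 - q) / -q * ε) := mul_lt_mul_of_pos_left h hpos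
    _ = U ^ (q - 1) * U ^ (1 - q) * ε := by field_simp [hq.ne]
    _ = ε := by rw [hUq, one_mul]

lemma eventually_ofReal_le_volume_exists_notMem {P : Set ℝ} (h0 : volume P ≠ 0)
    (hfin : volume P ≠ ⊤) :
    ∀ᶠ δ in 𝓝[>] (0 : ℝ),
      ENNReal.ofReal δ ≤ volume {s ∈ P | ∃ s' ∉ P, s ≤ s' ∧ s' < s + δ} := by
  by_cases hgap : ∃ s₀ ∈ P, ∃ δ₀ > 0, ∀ s' ∉ P, s₀ ≤ s' → s₀ + δ₀ ≤ s'
  · obtain ⟨s₀, -, δ₀, hδ₀, hgap⟩ := hgap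
    set X : Set ℝ := {s' | s' ∉ P ∧ s₀ ≤ s'}
    have hXne : X.Nonempty := by
      by_contra hempty
      have hsub : Ici s₀ ⊆ P := fun s hs => by_contra fun hsP => hempty ⟨s, hsP, hs⟩
      exact hfin (measure_mono_top hsub Real.volume_Ici)
    have hXbdd : BddBelow X := ⟨s₀, fun s hs => hs.2⟩
    have hb : s₀ + δ₀ ≤ sInf X := le_csInf hXne fun s hs => hgap s hs.1 hs.2
    filter_upwards [Ioc_mem_nhdsGT hδ₀] with δ hδ
    calc ENNReal.ofReal δ = volume (Ioo (sInf X - δ) (sInf X)) := by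
          rw [Real.volume_Ioo, sub_sub_cancel]
      _ ≤ _ := measure_mono fun s hs => ?_
    obtain ⟨s', hs'X, hs'⟩ := exists_lt_of_csInf_lt hXne (sub_lt_iff_lt_add.1 hs.1)
    refine ⟨?_, s', hs'X.1, hs.2.le.trans (csInf_le hXbdd hs'X), hs'⟩
    by_contra hsP
    exact (csInf_le hXbdd ⟨hsP, by linarith [hs.1, hδ.2]⟩).not_gt hs.2
  · push Not at hgap
    have hsmall : ∀ᶠ δ in 𝓝[>] (0 : ℝ), ENNReal.ofReal δ < volume P := by
      refine (ENNReal.continuous_ofReal.tendsto 0).mono_left nhdsWithin_le_nhds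
        |>.eventually_lt_const ?_
      simpa only [ENNReal.ofReal_zero] using pos_iff_ne_zero.2 h0
    filter_upwards [hsmall, self_mem_nhdsWithin] with δ hδ hδ0
    exact hδ.le.trans (measure_mono fun s hs => ⟨hs, hgap s hs δ hδ0⟩)

/-- The essential supremum of a set of positive reals: the least `a` such that almost all of `S`
lies below `a`. Valued in `ℝ≥0∞`, hence `0` for a null set. -/
noncomputable def essUpperBound (S : Set ℝ) : ℝ≥0∞ :=
  essSup ENNReal.ofReal (volume.restrict S)

lemma essUpperBound_le_iff {S : Set ℝ} {a : ℝ≥0∞} :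
    essUpperBound S ≤ a ↔ volume ({s | a < ENNReal.ofReal s} ∩ S) = 0 := by
  have hmeas : MeasurableSet {s : ℝ | a < ENNReal.ofReal s} :=
    measurableSet_lt measurable_const ENNReal.measurable_ofReal
  have hae : volume ({s | a < ENNReal.ofReal s} ∩ S) = 0 ↔
      ∀ᵐ s ∂volume.restrict S, ENNReal.ofReal s ≤ a := by
    simp only [ae_iff, not_le, Measure.restrict_apply hmeas]
  rw [hae]
  exact ⟨fun h => (ENNReal.ae_le_essSup _).mono fun s hs => hs.trans h, essSup_le_of_ae_le a⟩

lemma ae_le_Ioc_of_essUpperBound_le {S : Set ℝ} (hS : S ⊆ Ioi 0) {T : ℝ}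
    (hT : essUpperBound S ≤ ENNReal.ofReal T) : S ≤ᵐ[volume] Ioc 0 T := by
  have hmem : S \ Ioc 0 T ⊆ {s | ENNReal.ofReal T < ENNReal.ofReal s} ∩ S := fun s hs => by
    have hs0 : 0 < s := hS hs.1
    exact ⟨(ENNReal.ofReal_lt_ofReal_iff hs0).2 (not_le.1 fun h => hs.2 ⟨hs0, h⟩), hs.1⟩
  exact ae_le_set.2 (measure_mono_null hmem (essUpperBound_le_iff.1 hT))

lemma volume_le_essUpperBound {S : Set ℝ} (hS : S ⊆ Ioi 0) : volume S ≤ essUpperBound S := by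
  rcases eq_or_ne (essUpperBound S) ⊤ with htop | htop
  · exact htop ▸ le_top
  · have hle := ae_le_Ioc_of_essUpperBound_le hS (ENNReal.ofReal_toReal htop).ge
    simpa [ENNReal.ofReal_toReal htop] using measure_mono_ae hle

lemma ae_eq_Ioc_of_volume_eq_essUpperBound {S : Set ℝ} (hSm : MeasurableSet S) (hS : S ⊆ Ioi 0)
    {T : ℝ} (hvol : volume S = ENNReal.ofReal T) (hsup : essUpperBound S = ENNReal.ofReal T) :
    S =ᵐ[volume] Ioc 0 T :=
  ae_eq_of_ae_subset_of_measure_ge (ae_le_Ioc_of_essUpperBound_le hS hsup.le)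
    (by simp [hvol]) hSm.nullMeasurableSet (by simp)

lemma measurable_essUpperBound_section {α : Type*} [MeasurableSpace α] {P : Set (ℝ × α)}
    (hP : MeasurableSet P) : Measurable fun θ => essUpperBound ((·, θ) ⁻¹' P) := by
  refine measurable_of_Iic fun a => ?_
  have hQ : MeasurableSet ({p : ℝ × α | a < ENNReal.ofReal p.1} ∩ P) :=
    (measurableSet_lt measurable_const (ENNReal.measurable_ofReal.comp measurable_fst)).inter hP
  have hset : (fun θ => essUpperBound ((·, θ) ⁻¹' P)) ⁻¹' Iic a =
      {θ | volume ((·, θ) ⁻¹' ({p : ℝ × α | a < ENNReal.ofReal p.1} ∩ P)) = 0} := by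
    ext θ
    exact essUpperBound_le_iff
  rw [hset]
  exact measurable_measure_prodMk_right hQ (measurableSet_singleton 0)

/-- The points of `S` from which the complement of `S` is reached by moving up the line, a distance
less than `ε` in the radial coordinate `r = s ^ q`; for `q < 0` this moves towards `r = 0`. -/
def inwardCollar (q : ℝ) (S : Set ℝ) (ε : ℝ) : Set ℝ :=
  {s ∈ S | ∃ s' ∉ S, s ≤ s' ∧ s ^ q - s' ^ q < ε}

lemma eventually_le_volume_inwardCollar {q : ℝ} (hq : q < 0) {S : Set ℝ} (hfin : volume S ≠ ⊤)
    {U : ℝ} (hU : 0 < U) (hSU : ENNReal.ofReal U < essUpperBound S) :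
    ∀ᶠ ε in 𝓝[>] (0 : ℝ),
      ENNReal.ofReal (U ^ (1 - q) / -q * ε) ≤ volume (inwardCollar q S ε) := by
  set c := U ^ (1 - q) / -q
  have hc : 0 < c := div_pos (Real.rpow_pos_of_pos hU _) (neg_pos.2 hq)
  set P : Set ℝ := {s | ENNReal.ofReal U < ENNReal.ofReal s} ∩ S
  have hP0 : volume P ≠ 0 := essUpperBound_le_iff.not.1 hSU.not_ge
  have hPfin : volume P ≠ ⊤ := measure_ne_top_of_subset inter_subset_right hfin
  have hscale : Tendsto (fun ε : ℝ => c * ε) (𝓝[>] 0) (𝓝[>] 0) := by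
    refine tendsto_nhdsWithin_iff.2 ⟨?_, ?_⟩
    · simpa only [mul_zero] using
        ((continuous_const_mul c).tendsto 0).mono_left nhdsWithin_le_nhds
    · exact eventually_mem_nhdsWithin.mono fun ε hε => mul_pos hc hε
  filter_upwards [hscale.eventually (eventually_ofReal_le_volume_exists_notMem hP0 hPfin)]
    with ε hε
  refine hε.trans (measure_mono ?_)
  rintro s ⟨⟨hUs, hsS⟩, s', hs'P, hss', hs'⟩
  refine ⟨hsS, s', fun hs'S => hs'P ⟨hUs.trans_le (ENNReal.ofReal_le_ofReal hss'), hs'S⟩, hss', ?_⟩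
  have hUs' : U < s := (ENNReal.ofReal_lt_ofReal_iff').1 hUs |>.1
  exact rpow_sub_rpow_lt_of_neg hq hU hUs'.le hss' (sub_lt_iff_lt_add'.2 hs')

lemma essUpperBound_rpow_le_liminf_volume_inwardCollar {q : ℝ} (hq : q < 0) {S : Set ℝ}
    (hfin : volume S ≠ ⊤) :
    essUpperBound S ^ (1 - q) ≤ ENNReal.ofReal (-q) *
      liminf (fun ε : ℝ => volume (inwardCollar q S ε) / ENNReal.ofReal ε) (𝓝[>] 0) := by
  have hp : 0 < 1 - q := by linarith
  rw [← ENNReal.le_rpow_inv_iff hp]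
  refine le_of_forall_lt_imp_le_of_dense fun a ha => ?_
  rw [ENNReal.le_rpow_inv_iff hp]
  rcases eq_or_ne a 0 with rfl | ha0
  · simp [hp]
  obtain ⟨U, hU, rfl⟩ : ∃ U : ℝ, 0 < U ∧ ENNReal.ofReal U = a :=
    ⟨a.toReal, ENNReal.toReal_pos ha0 ha.ne_top, ENNReal.ofReal_toReal ha.ne_top⟩
  have hcU : ENNReal.ofReal (-q) * ENNReal.ofReal (U ^ (1 - q) / -q) =
      ENNReal.ofReal U ^ (1 - q) := by
    rw [← ENNReal.ofReal_mul (neg_nonneg.2 hq.le), mul_div_cancel₀ _ (neg_ne_zero.2 hq.ne),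
      ENNReal.ofReal_rpow_of_pos hU]
  rw [← hcU]
  gcongr
  refine le_liminf_of_le (by isBoundedDefault) ?_
  filter_upwards [eventually_le_volume_inwardCollar hq hfin hU ha, self_mem_nhdsWithin]
    with ε hε (hε0 : 0 < ε)
  rwa [ENNReal.le_div_iff_mul_le (Or.inl (ENNReal.ofReal_pos.2 hε0).ne')
    (Or.inl ENNReal.ofReal_ne_top), ← ENNReal.ofReal_mul' hε0.le]

end RealLine

section Jensen
variable {α : Type*} [MeasurableSpace α] {ν : Measure α} [IsFiniteMeasure ν] {p : ℝ}

lemma lintegral_ne_top_of_lintegral_rpow_ne_top (hp : 1 ≤ p) {f : α → ℝ≥0∞}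
    (hf : ∫⁻ x, f x ^ p ∂ν ≠ ⊤) : ∫⁻ x, f x ∂ν ≠ ⊤ := by
  have hle : ∀ x, f x ≤ 1 + f x ^ p := fun x =>
    (le_total (f x) 1).elim (fun h => h.trans le_self_add)
      fun h => (ENNReal.le_rpow_self_of_one_le h hp).trans le_add_self
  refine ne_top_of_le_ne_top ?_ (lintegral_mono hle)
  rw [lintegral_add_left measurable_const, lintegral_one]
  exact ENNReal.add_ne_top.2 ⟨measure_ne_top ν univ, hf⟩

lemma ae_eq_laverage_of_laverage_rpow_le (hp : 1 < p) {f : α → ℝ≥0∞} (hf : AEMeasurable f ν)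
    (hfp : ∫⁻ x, f x ^ p ∂ν ≠ ⊤) (hle : ⨍⁻ x, f x ^ p ∂ν ≤ (⨍⁻ x, f x ∂ν) ^ p) :
    f =ᵐ[ν] fun _ => ⨍⁻ x, f x ∂ν := by
  have hp0 : 0 ≤ p := by linarith
  have hf1 := lintegral_ne_top_of_lintegral_rpow_ne_top hp.le hfp
  have hfin : ∀ᵐ x ∂ν, f x ≠ ⊤ := (ae_lt_top' hf hf1).mono fun x => LT.lt.ne
  have hfpfin : ∀ᵐ x ∂ν, f x ^ p ≠ ⊤ := hfin.mono fun x => ENNReal.rpow_ne_top_of_nonneg hp0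
  have havg : (⨍⁻ x, f x ∂ν) ≠ ⊤ := (laverage_lt_top hf1).ne
  have hreal : ⨍ x, (f x).toReal ^ p ∂ν ≤ (⨍ x, (f x).toReal ∂ν) ^ p := by
    simp only [ENNReal.toReal_rpow]
    rw [← toReal_laverage hf hfin, ← toReal_laverage (hf.pow_const p) hfpfin, ENNReal.toReal_rpow]
    exact ENNReal.toReal_mono (ENNReal.rpow_ne_top_of_nonneg hp0 havg) hle
  have hconst := ((strictConvexOn_rpow hp).ae_eq_const_or_map_average_lt
    (continuousOn_id.rpow_const fun _ _ => Or.inr hp0) isClosed_Ici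
    (ae_of_all ν fun x => ENNReal.toReal_nonneg (a := f x))
    (integrable_toReal_of_lintegral_ne_top hf hf1) (by
      simpa only [Function.comp_def, ENNReal.toReal_rpow] using
        integrable_toReal_of_lintegral_ne_top (hf.pow_const p) hfp)).resolve_right hreal.not_gt
  filter_upwards [hconst, hfin] with x hx hxfin
  rw [← ENNReal.toReal_eq_toReal_iff' hxfin havg, hx, toReal_laverage hf hfin,
    Function.const_apply]

lemma ae_eq_laverage_of_le_of_laverage_rpow_le [NeZero ν] (hp : 1 < p) {f g : α → ℝ≥0∞}
    (hg : AEMeasurable g ν) (hfg : f ≤ᵐ[ν] g) (hf : ∫⁻ x, f x ∂ν ≠ ⊤)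
    (hle : ⨍⁻ x, g x ^ p ∂ν ≤ (⨍⁻ x, f x ∂ν) ^ p) :
    (f =ᵐ[ν] fun _ => ⨍⁻ x, f x ∂ν) ∧ g =ᵐ[ν] fun _ => ⨍⁻ x, f x ∂ν := by
  have hp0 : 0 < p := by linarith
  have hgp : ∫⁻ x, g x ^ p ∂ν ≠ ⊤ := by
    rw [← measure_mul_laverage]
    exact ENNReal.mul_ne_top (measure_ne_top ν univ) (ne_top_of_le_ne_top
      (ENNReal.rpow_ne_top_of_nonneg hp0.le (laverage_lt_top hf).ne) hle)
  have hmono : ⨍⁻ x, f x ∂ν ≤ ⨍⁻ x, g x ∂ν := laverage_mono_ae hfg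
  have hgc := ae_eq_laverage_of_laverage_rpow_le hp hg hgp
    (hle.trans (ENNReal.rpow_le_rpow hmono hp0.le))
  have havg : ⨍⁻ x, g x ∂ν ≤ ⨍⁻ x, f x ∂ν := by
    rw [← ENNReal.rpow_le_rpow_iff hp0]
    calc (⨍⁻ x, g x ∂ν) ^ p = ⨍⁻ _, (⨍⁻ x, g x ∂ν) ^ p ∂ν := (laverage_const ν _).symm
      _ = ⨍⁻ x, g x ^ p ∂ν := laverage_congr (hgc.symm.fun_comp (· ^ p))
      _ ≤ _ := hle
  have hfg' : f =ᵐ[ν] g := ae_eq_of_ae_le_of_lintegral_le hfg hf hg (by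
    rw [← measure_mul_laverage ν g, ← measure_mul_laverage ν f]
    gcongr)
  rw [← hmono.antisymm havg] at hgc
  exact ⟨hfg'.trans hgc, hgc⟩

end Jensen

/-- `q`-homogeneity of a measure: a dilation by `c > 0` multiplies it by `c ^ (1 / q)`. -/
def IsHomogeneousMeasure {E : Type*} [SMul ℝ E] [MeasurableSpace E] (μ : Measure E) (q : ℝ) :
    Prop :=
  ∀ A : Set E, MeasurableSet A → ∀ c : ℝ, 0 < c → μ (c • A) = ENNReal.ofReal (c ^ (1 / q)) * μ A

/-- The inner boundary measure `μ⁻_B(C)`: the lower Minkowski content, relative to the gauge body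
`B`, of the boundary of `C` as seen from inside `C`. -/
noncomputable def innerMinkowskiContent {E : Type*} [Add E] [SMul ℝ E] [MeasurableSpace E]
    (μ : Measure E) (B C : Set E) : ℝ≥0∞ :=
  liminf (fun ε : ℝ => μ ((Cᶜ + ε • B) \ Cᶜ) / ENNReal.ofReal ε) (𝓝[>] 0)

lemma innerMinkowskiContent_eq_top {E : Type*} [Add E] [SMul ℝ E] [MeasurableSpace E]
    {μ : Measure E} {B C A : Set E} (hA : μ A ≠ 0)
    (hsub : ∀ ε > (0 : ℝ), A ⊆ (Cᶜ + ε • B) \ Cᶜ) : innerMinkowskiContent μ B C = ⊤ := by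
  have hzero : Tendsto (fun ε : ℝ => ENNReal.ofReal ε) (𝓝[>] 0) (𝓝 0) := by
    simpa only [ENNReal.ofReal_zero] using
      (ENNReal.continuous_ofReal.tendsto 0).mono_left nhdsWithin_le_nhds
  have htop : Tendsto (fun ε : ℝ => μ A / ENNReal.ofReal ε) (𝓝[>] 0) (𝓝 ⊤) := by
    have h := ENNReal.Tendsto.div (tendsto_const_nhds (x := μ A)) (Or.inl hA) hzero
      (Or.inl ENNReal.zero_ne_top)
    rwa [ENNReal.div_zero hA] at h
  rw [eq_top_iff, ← htop.liminf_eq]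
  refine liminf_le_liminf (eventually_mem_nhdsWithin.mono fun ε hε => ?_)
  gcongr
  exact hsub ε hε

lemma measurableSet_add_smul_diff {E : Type*} [AddCommGroup E] [Module ℝ E] [TopologicalSpace E]
    [ContinuousAdd E] [ContinuousConstSMul ℝ E] [MeasurableSpace E] [OpensMeasurableSpace E]
    {A B : Set E} (hA : MeasurableSet A) (hB : IsOpen B) (ε : ℝ) :
    MeasurableSet ((A + ε • B) \ A) := by
  rcases eq_or_ne ε 0 with rfl | hε
  · rcases B.eq_empty_or_nonempty with rfl | hBne
    · simp
    · simp [zero_smul_set hBne]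
  · exact (hB.smul₀ hε).add_left.measurableSet.diff hA

/-- An open set which contains the origin and is star-shaped about it, so that it is the open unit
ball of its gauge. It need not be bounded: the gauge may vanish on some rays. -/
structure IsOpenStarBody {E : Type*} [AddCommGroup E] [Module ℝ E] [TopologicalSpace E]
    (B : Set E) : Prop where
  isOpen : IsOpen B
  starConvex : StarConvex ℝ 0 B
  zero_mem : (0 : E) ∈ B

/-- The trace of `S` on the ray spanned by `θ`, in the coordinate `s > 0` of the point `s ^ q • θ`;
in this coordinate a `q`-homogeneous measure is Lebesgue measure on each ray. -/
def radialTrace {E : Type*} [SMul ℝ E] (q : ℝ) (S : Set E) (θ : E) : Set ℝ :=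
  {s | 0 < s ∧ s ^ q • θ ∈ S}

/-- The projection along rays onto the level set `gauge B = 1`. Points of vanishing gauge go
to `0`. -/
noncomputable def radialProjection {E : Type*} [AddCommGroup E] [Module ℝ E] (B : Set E) (x : E) :
    E :=
  (gauge B x)⁻¹ • x

section Gauge

variable {E : Type*} [AddCommGroup E] [Module ℝ E] {B : Set E}

lemma gauge_radialProjection {x : E} (hx : gauge B x ≠ 0) :
    gauge B (radialProjection B x) = 1 := by
  rw [radialProjection, gauge_smul_of_nonneg (inv_nonneg.2 (gauge_nonneg x)), smul_eq_mul,
    inv_mul_cancel₀ hx]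

lemma radialProjection_smul {c : ℝ} (hc : 0 < c) (x : E) :
    radialProjection B (c • x) = radialProjection B x := by
  rw [radialProjection, radialProjection, gauge_smul_of_nonneg hc.le, smul_eq_mul, smul_smul,
    mul_inv_rev, inv_mul_cancel_right₀ hc.ne']

lemma rpow_one_div_rpow_smul_radialProjection {q : ℝ} (hq : q ≠ 0) {x : E} (hx : gauge B x ≠ 0) :
    (gauge B x ^ (1 / q)) ^ q • radialProjection B x = x := by
  rw [← Real.rpow_mul (gauge_nonneg x), one_div_mul_cancel hq, Real.rpow_one, radialProjection,
    smul_inv_smul₀ hx]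

end Gauge

namespace IsOpenStarBody

variable {E : Type*} [AddCommGroup E] [Module ℝ E] [TopologicalSpace E] [ContinuousSMul ℝ E]
  {B : Set E}

lemma gauge_lt_iff_mem_smul (hB : IsOpenStarBody B) {t : ℝ} (ht : 0 < t) {x : E} :
    gauge B x < t ↔ x ∈ t • B := by
  refine ⟨fun h => ?_, gauge_lt_of_mem_smul x t ht hB.isOpen⟩
  obtain ⟨r, hr, hrt, y, hy, rfl⟩ :=
    exists_lt_of_gauge_lt (absorbent_nhds_zero (hB.isOpen.mem_nhds hB.zero_mem)) h
  rw [mem_smul_set_iff_inv_smul_mem₀ ht.ne', smul_smul]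
  exact hB.starConvex.smul_mem hy (by positivity) ((inv_mul_le_one₀ ht).2 hrt.le)

lemma notMem_iff_one_le_gauge (hB : IsOpenStarBody B) {x : E} : x ∉ B ↔ 1 ≤ gauge B x := by
  rw [← not_lt, hB.gauge_lt_iff_mem_smul one_pos, one_smul]

lemma measurable_gauge [MeasurableSpace E] [OpensMeasurableSpace E] (hB : IsOpenStarBody B) :
    Measurable (gauge B) := by
  refine measurable_of_Iio fun t => ?_
  rcases le_or_gt t 0 with ht | ht
  · convert MeasurableSet.empty
    exact eq_empty_of_forall_notMem fun x hx => (hx.trans_le ht).not_ge (gauge_nonneg x)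
  · convert (hB.isOpen.smul₀ ht.ne').measurableSet
    exact ext fun x => hB.gauge_lt_iff_mem_smul ht

lemma polar_preimage_inter_support (hB : IsOpenStarBody B) {q : ℝ} (hq : q < 0)
    {t : ℝ} (ht : 0 < t) (D : Set E) :
    (fun x => (gauge B x ^ (1 / q), radialProjection B x)) ⁻¹' (Iic t ×ˢ D) ∩
      Function.support (gauge B) = t ^ q • (radialProjection B ⁻¹' D ∩ Bᶜ) := by
  have htq : 0 < t ^ q := Real.rpow_pos_of_pos ht q
  ext x
  have hout : (t ^ q)⁻¹ • x ∈ Bᶜ ↔ t ^ q ≤ gauge B x := by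
    rw [mem_compl_iff, hB.notMem_iff_one_le_gauge, gauge_smul_of_nonneg (inv_nonneg.2 htq.le),
      smul_eq_mul, one_le_inv_mul₀ htq]
  have hradius (hx : 0 < gauge B x) : gauge B x ^ (1 / q) ≤ t ↔ t ^ q ≤ gauge B x := by
    rw [one_div, Real.rpow_inv_le_iff_of_neg hx ht hq]
  rw [mem_smul_set_iff_inv_smul_mem₀ htq.ne', mem_inter_iff _ (radialProjection B ⁻¹' D), hout,
    mem_preimage (s := D), radialProjection_smul (inv_pos.2 htq)]
  constructor
  · rintro ⟨⟨hxt, hxD⟩, hx⟩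
    exact ⟨hxD, (hradius ((gauge_nonneg x).lt_of_ne' hx)).1 hxt⟩
  · rintro ⟨hxD, hxt⟩
    have hx : 0 < gauge B x := htq.trans_le hxt
    exact ⟨⟨(hradius hx).2 hxt, hxD⟩, hx.ne'⟩

lemma radialTrace_compl_smul (hB : IsOpenStarBody B) {q : ℝ} (hq : q < 0) {T : ℝ} (hT : 0 < T)
    {θ : E} (hθ : gauge B θ = 1) : radialTrace q (T ^ q • B)ᶜ θ = Ioc 0 T := by
  ext s
  refine and_congr_right fun hs => ?_
  rw [mem_compl_iff, ← hB.gauge_lt_iff_mem_smul (Real.rpow_pos_of_pos hT q),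
    gauge_smul_of_nonneg (Real.rpow_nonneg hs.le q), hθ, smul_eq_mul, mul_one,
    Real.rpow_lt_rpow_iff_of_neg hs hT hq, not_lt]

lemma inwardCollar_radialTrace_subset (hB : IsOpenStarBody B) {q : ℝ} (hq : q ≤ 0) {θ : E}
    (hθ : gauge B θ = 1) {ε : ℝ} (hε : 0 < ε) (C : Set E) :
    inwardCollar q (radialTrace q C θ) ε ⊆ radialTrace q ((Cᶜ + ε • B) \ Cᶜ) θ := by
  rintro s ⟨⟨hs, hsC⟩, s', hs'C, hss', hlt⟩
  have hs' : s' ^ q • θ ∈ Cᶜ := fun h => hs'C ⟨hs.trans_le hss', h⟩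
  refine ⟨hs, mem_add.2 ⟨_, hs', (s ^ q - s' ^ q) • θ, ?_, ?_⟩, fun h => h hsC⟩
  · have hnonneg : 0 ≤ s ^ q - s' ^ q :=
      sub_nonneg.2 (Real.rpow_le_rpow_of_nonpos hs hss' hq)
    rwa [← hB.gauge_lt_iff_mem_smul hε, gauge_smul_of_nonneg hnonneg, hθ, smul_eq_mul, mul_one]
  · rw [← add_smul, add_sub_cancel]

end IsOpenStarBody

section GaugeZero

variable {E : Type*} [AddCommGroup E] [Module ℝ E] [MeasurableSpace E]

lemma IsHomogeneousMeasure.measure_eq_zero_of_smul_subset {μ : Measure E} {q : ℝ}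
    (hμ : IsHomogeneousMeasure μ q) (hq : q < 0) {D : Set E} (hD : MeasurableSet D)
    (hfin : μ D ≠ ⊤) {c : ℝ} (hc0 : 0 < c) (hc1 : c < 1) (hsub : c • D ⊆ D) : μ D = 0 := by
  have hle : ENNReal.ofReal (c ^ (1 / q)) * μ D ≤ 1 * μ D := by
    rw [← hμ D hD c hc0, one_mul]
    exact measure_mono hsub
  have hlt : 1 < ENNReal.ofReal (c ^ (1 / q)) :=
    ENNReal.one_lt_ofReal.2 (Real.one_lt_rpow_of_pos_of_lt_one_of_neg hc0 hc1 (one_div_neg.2 hq))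
  by_contra h0
  exact hlt.not_ge ((ENNReal.mul_le_mul_iff_left h0 hfin).1 hle)

variable [TopologicalSpace E] [ContinuousSMul ℝ E] [BorelSpace E]

/- A ray of vanishing gauge which leaves `C` towards the origin lies in `Cᶜ + ε • B` for every
`ε > 0`; a set of rays staying in `C` is contracted into itself. -/
lemma IsHomogeneousMeasure.measure_diff_support_gauge_eq_zero {μ : Measure E} {q : ℝ}
    (hμ : IsHomogeneousMeasure μ q) (hq : q < 0) {B : Set E} (hB : IsOpenStarBody B)
    {C : Set E} (hC : MeasurableSet C) (hCfin : μ C ≠ ⊤)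
    (hcontent : innerMinkowskiContent μ B C ≠ ⊤) : μ (C \ Function.support (gauge B)) = 0 := by
  set K := (Function.support (gauge B))ᶜ
  have hK : MeasurableSet K := (measurableSet_support hB.measurable_gauge).compl
  have hsmulK : ∀ c : ℝ, 0 ≤ c → ∀ x ∈ K, gauge B (c • x) = 0 := fun c hc x hx => by
    rw [gauge_smul_of_nonneg hc, Function.notMem_support.1 hx, smul_zero]
  set D : Set E := K ∩ ⋂ k : ℕ, (fun x => (2⁻¹ : ℝ) ^ k • x) ⁻¹' C
  have hD : MeasurableSet D :=
    hK.inter (MeasurableSet.iInter fun k => measurable_const_smul _ hC)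
  have hDC : D ⊆ C := fun x hx => by simpa using mem_iInter.1 hx.2 0
  have hDsub : (2⁻¹ : ℝ) • D ⊆ D := by
    rintro _ ⟨x, ⟨hxK, hxC⟩, rfl⟩
    refine ⟨Function.notMem_support.2 (hsmulK _ (by norm_num) x hxK), mem_iInter.2 fun k => ?_⟩
    simpa only [mem_preimage, smul_smul, ← pow_succ] using mem_iInter.1 hxC (k + 1)
  have hD0 : μ D = 0 := hμ.measure_eq_zero_of_smul_subset hq hD
    (measure_ne_top_of_subset hDC hCfin) (by norm_num) (by norm_num) hDsub
  have hreach : ∀ ε > (0 : ℝ), (C ∩ K) \ D ⊆ (Cᶜ + ε • B) \ Cᶜ := by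
    rintro ε hε x ⟨⟨hxC, hxK⟩, hxD⟩
    obtain ⟨k, hk⟩ : ∃ k : ℕ, (2⁻¹ : ℝ) ^ k • x ∉ C := by
      simpa [D, hxK] using hxD
    have hle : (2⁻¹ : ℝ) ^ k ≤ 1 := pow_le_one₀ (by norm_num) (by norm_num)
    refine ⟨mem_add.2 ⟨_, hk, (1 - (2⁻¹ : ℝ) ^ k) • x, ?_, ?_⟩, not_not.2 hxC⟩
    · rwa [← hB.gauge_lt_iff_mem_smul hε, hsmulK _ (sub_nonneg.2 hle) x hxK]
    · rw [← add_smul, add_sub_cancel, one_smul]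
  have hCKD : μ ((C ∩ K) \ D) = 0 :=
    by_contra fun h => hcontent (innerMinkowskiContent_eq_top h hreach)
  rw [sdiff_eq, ← nonpos_iff_eq_zero, ← hCKD]
  exact (measure_sdiff_null hD0).ge

end GaugeZero

section Polar

variable {E : Type*} [AddCommGroup E] [Module ℝ E] [MeasurableSpace E]

/-- The image of the restriction of `μ` to `Bᶜ` under the projection along rays: the factor of `μ`
in polar coordinates which records directions. -/
noncomputable def angularMeasure (μ : Measure E) (B : Set E) : Measure E :=
  (μ.restrict Bᶜ).map (radialProjection B)

variable [TopologicalSpace E] [ContinuousSMul ℝ E] [BorelSpace E] [SecondCountableTopology E]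
  {μ : Measure E} {q : ℝ} {B S : Set E}

lemma IsOpenStarBody.measurable_radialProjection (hB : IsOpenStarBody B) :
    Measurable (radialProjection B) :=
  hB.measurable_gauge.inv.smul measurable_id

lemma IsOpenStarBody.measurable_polar (hB : IsOpenStarBody B) (q : ℝ) :
    Measurable fun x => (gauge B x ^ (1 / q), radialProjection B x) :=
  (hB.measurable_gauge.pow_const _).prodMk hB.measurable_radialProjection

lemma IsOpenStarBody.angularMeasure_apply (hB : IsOpenStarBody B) (μ : Measure E)
    (hS : MeasurableSet S) : angularMeasure μ B S = μ (radialProjection B ⁻¹' S ∩ Bᶜ) := by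
  have hpre := hB.measurable_radialProjection hS
  rw [angularMeasure, Measure.map_apply hB.measurable_radialProjection hS,
    Measure.restrict_apply hpre]

lemma IsOpenStarBody.angularMeasure_univ (hB : IsOpenStarBody B) (μ : Measure E) :
    angularMeasure μ B univ = μ Bᶜ := by
  rw [hB.angularMeasure_apply μ MeasurableSet.univ, preimage_univ, univ_inter]

lemma IsOpenStarBody.ae_gauge_eq_one (hB : IsOpenStarBody B) (μ : Measure E) :
    ∀ᵐ θ ∂angularMeasure μ B, gauge B θ = 1 := by
  refine (ae_map_iff hB.measurable_radialProjection.aemeasurable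
    (hB.measurable_gauge (measurableSet_singleton 1))).2 ?_
  filter_upwards [ae_restrict_mem hB.isOpen.measurableSet.compl] with x hx
  exact gauge_radialProjection (one_pos.trans_le (hB.notMem_iff_one_le_gauge.1 hx)).ne'

theorem IsHomogeneousMeasure.map_polar (hμ : IsHomogeneousMeasure μ q) (hq : q < 0)
    (hB : IsOpenStarBody B) [IsFiniteMeasure (angularMeasure μ B)] :
    (μ.restrict (Function.support (gauge B))).map
        (fun x => (gauge B x ^ (1 / q), radialProjection B x)) =
      (volume.restrict (Ioi 0)).prod (angularMeasure μ B) := by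
  have hpolar := hB.measurable_polar q
  have hspan : (volume.restrict (Ioi (0 : ℝ))).FiniteSpanningSetsIn (range Iic) :=
    { set := fun k => Iic (k : ℝ)
      set_mem := fun k => mem_range_self _
      finite := fun k => by simp [Measure.restrict_apply measurableSet_Iic, Iic_inter_Ioi]
      spanning := iUnion_eq_univ_iff.2 fun x => exists_nat_ge x }
  refine (Measure.prod_eq_generateFrom
    ((borel_eq_generateFrom_Iic ℝ).symm.trans BorelSpace.measurable_eq.symm)
    MeasurableSpace.generateFrom_measurableSet isPiSystem_Iic
    MeasurableSpace.isPiSystem_measurableSet hspan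
    (angularMeasure μ B).toFiniteSpanningSetsIn ?_).symm
  rintro _ ⟨t, rfl⟩ D (hD : MeasurableSet D)
  have hbox : MeasurableSet (Iic t ×ˢ D) := measurableSet_Iic.prod hD
  rw [Measure.map_apply hpolar hbox, Measure.restrict_apply (hpolar hbox),
    Measure.restrict_apply measurableSet_Iic, Iic_inter_Ioi, Real.volume_Ioc, sub_zero]
  rcases le_or_gt t 0 with ht | ht
  · rw [ENNReal.ofReal_of_nonpos ht, zero_mul]
    convert measure_empty (μ := μ)
    refine eq_empty_of_forall_notMem fun x ⟨hxt, hx⟩ => ?_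
    have hpos : 0 < gauge B x ^ (1 / q) :=
      Real.rpow_pos_of_pos ((gauge_nonneg x).lt_of_ne' hx) _
    exact (hpos.trans_le hxt.1).not_ge ht
  · have hpre : MeasurableSet (radialProjection B ⁻¹' D ∩ Bᶜ) :=
      (hB.measurable_radialProjection hD).inter hB.isOpen.measurableSet.compl
    rw [hB.polar_preimage_inter_support hq ht, hμ _ hpre _ (Real.rpow_pos_of_pos ht q),
      ← Real.rpow_mul ht.le, mul_one_div_cancel hq.ne, Real.rpow_one, hB.angularMeasure_apply μ hD]

lemma measurableSet_setOf_rpow_smul_mem (q : ℝ) (hS : MeasurableSet S) :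
    MeasurableSet {p : ℝ × E | 0 < p.1 ∧ p.1 ^ q • p.2 ∈ S} :=
  (measurableSet_lt measurable_const measurable_fst).inter
    (((measurable_fst.pow_const q).smul measurable_snd) hS)

lemma measurableSet_radialTrace (q : ℝ) (hS : MeasurableSet S) (θ : E) :
    MeasurableSet (radialTrace q S θ) :=
  measurable_prodMk_right (measurableSet_setOf_rpow_smul_mem q hS)

lemma measurable_volume_radialTrace (q : ℝ) (hS : MeasurableSet S) :
    Measurable fun θ => volume (radialTrace q S θ) :=
  measurable_measure_prodMk_right (measurableSet_setOf_rpow_smul_mem q hS)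

lemma measurable_essUpperBound_radialTrace (q : ℝ) (hS : MeasurableSet S) :
    Measurable fun θ => essUpperBound (radialTrace q S θ) := by
  have hsection (θ : E) : radialTrace q S θ =
      (·, θ) ⁻¹' {p : ℝ × E | 0 < p.1 ∧ p.1 ^ q • p.2 ∈ S} := rfl
  simp only [hsection]
  exact measurable_essUpperBound_section (measurableSet_setOf_rpow_smul_mem q hS)

theorem IsHomogeneousMeasure.lintegral_volume_radialTrace (hμ : IsHomogeneousMeasure μ q)
    (hq : q < 0) (hB : IsOpenStarBody B) [IsFiniteMeasure (angularMeasure μ B)]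
    (hS : MeasurableSet S) :
    ∫⁻ θ, volume (radialTrace q S θ) ∂angularMeasure μ B =
      μ (S ∩ Function.support (gauge B)) := by
  set P := {p : ℝ × E | 0 < p.1 ∧ p.1 ^ q • p.2 ∈ S}
  have hP : MeasurableSet P := measurableSet_setOf_rpow_smul_mem q hS
  have hpolar := hB.measurable_polar q
  have hpre : (fun x => (gauge B x ^ (1 / q), radialProjection B x)) ⁻¹' P ∩
      Function.support (gauge B) = S ∩ Function.support (gauge B) := by
    ext x
    refine and_congr_left fun hx => ?_
    have hpos : 0 < gauge B x ^ (1 / q) :=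
      Real.rpow_pos_of_pos ((gauge_nonneg x).lt_of_ne' hx) _
    simp only [P, mem_preimage, mem_ofPred_eq, hpos, true_and,
      rpow_one_div_rpow_smul_radialProjection hq.ne hx]
  calc ∫⁻ θ, volume (radialTrace q S θ) ∂angularMeasure μ B
      = ∫⁻ θ, volume.restrict (Ioi 0) (radialTrace q S θ) ∂angularMeasure μ B :=
        lintegral_congr fun θ => (Measure.restrict_eq_self _ fun _ hs => hs.1).symm
    _ = (volume.restrict (Ioi 0)).prod (angularMeasure μ B) P := (Measure.prod_apply_symm hP).symm
    _ = μ (S ∩ Function.support (gauge B)) := by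
        rw [← hμ.map_polar hq hB, Measure.map_apply hpolar hP, Measure.restrict_apply (hpolar hP),
          hpre]

lemma IsHomogeneousMeasure.ae_eq_restrict_of_radialTrace_ae_eq (hμ : IsHomogeneousMeasure μ q)
    (hq : q < 0) (hB : IsOpenStarBody B) [IsFiniteMeasure (angularMeasure μ B)] {C D : Set E}
    (hC : MeasurableSet C) (hD : MeasurableSet D)
    (h : ∀ᵐ θ ∂angularMeasure μ B, radialTrace q C θ =ᵐ[volume] radialTrace q D θ) :
    C =ᵐ[μ.restrict (Function.support (gauge B))] D := by
  have hCD := hC.symmDiff hD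
  rw [← measure_symmDiff_eq_zero_iff, Measure.restrict_apply hCD,
    ← hμ.lintegral_volume_radialTrace hq hB hCD,
    lintegral_eq_zero_iff (measurable_volume_radialTrace q hCD)]
  filter_upwards [h] with θ hθ
  refine measure_mono_null (fun s hs => ?_) (measure_symmDiff_eq_zero_iff.2 hθ)
  exact hs.2.imp (fun h => ⟨⟨hs.1, h.1⟩, fun h' => h.2 h'.2⟩)
    fun h => ⟨⟨hs.1, h.1⟩, fun h' => h.2 h'.2⟩

lemma IsHomogeneousMeasure.ae_eq_compl_smul_of_radialTrace_ae_eq (hμ : IsHomogeneousMeasure μ q)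
    (hq : q < 0) (hB : IsOpenStarBody B) [IsFiniteMeasure (angularMeasure μ B)] {C : Set E}
    (hC : MeasurableSet C) (hCgauge : μ (C \ Function.support (gauge B)) = 0) {T : ℝ} (hT : 0 < T)
    (h : ∀ᵐ θ ∂angularMeasure μ B, radialTrace q C θ =ᵐ[volume] Ioc 0 T) :
    C =ᵐ[μ] ((T ^ q • B)ᶜ : Set E) := by
  have ht : 0 < T ^ q := Real.rpow_pos_of_pos hT q
  have hsupp : C =ᵐ[μ.restrict (Function.support (gauge B))] ((T ^ q • B)ᶜ : Set E) := by
    refine hμ.ae_eq_restrict_of_radialTrace_ae_eq hq hB hC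
      (hB.isOpen.smul₀ ht.ne').measurableSet.compl ?_
    filter_upwards [h, hB.ae_gauge_eq_one μ] with θ hCθ hθ
    rwa [hB.radialTrace_compl_smul hq hT hθ]
  refine eventuallyEq_set.2 ?_
  filter_upwards [ae_imp_of_ae_restrict hsupp.mem_iff, measure_eq_zero_iff_ae_notMem.1 hCgauge]
    with x hx hxC
  by_cases hx0 : gauge B x = 0
  · have hxC' : x ∉ C := fun h => hxC ⟨h, not_not.2 hx0⟩
    have hxB : x ∈ T ^ q • B := (hB.gauge_lt_iff_mem_smul ht).1 (hx0 ▸ ht)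
    exact iff_of_false hxC' (not_not.2 hxB)
  · exact hx hx0

end Polar

section Equality

lemma ofReal_neg_mul_rpow_mul_rpow_div {q : ℝ} (hq : q < 0) {V : ℝ≥0∞} (hV0 : V ≠ 0)
    (hV : V ≠ ⊤) (M : ℝ≥0∞) :
    ENNReal.ofReal (-q) * (ENNReal.ofReal (-(1 / q)) * V ^ q * M ^ (1 - q)) / V =
      (M / V) ^ (1 - q) := by
  have hcancel : ENNReal.ofReal (-q) * ENNReal.ofReal (-(1 / q)) = 1 := by
    rw [← ENNReal.ofReal_mul (neg_nonneg.2 hq.le), neg_mul_neg, mul_one_div_cancel hq.ne,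
      ENNReal.ofReal_one]
  have hpow : V ^ q / V = (V ^ (1 - q))⁻¹ := by
    rw [← ENNReal.rpow_neg, neg_sub, ENNReal.rpow_sub _ _ hV0 hV, ENNReal.rpow_one]
  calc ENNReal.ofReal (-q) * (ENNReal.ofReal (-(1 / q)) * V ^ q * M ^ (1 - q)) / V
      = ENNReal.ofReal (-q) * ENNReal.ofReal (-(1 / q)) * (M ^ (1 - q) * (V ^ q / V)) := by
        simp only [div_eq_mul_inv]
        ring
    _ = (M / V) ^ (1 - q) := by
        rw [hcancel, one_mul, hpow, ENNReal.div_rpow_of_nonneg _ _ (by linarith), div_eq_mul_inv]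

variable {E : Type*} [AddCommGroup E] [Module ℝ E] [TopologicalSpace E] [ContinuousAdd E]
  [ContinuousSMul ℝ E] [MeasurableSpace E] [BorelSpace E] [SecondCountableTopology E]
  {μ : Measure E} {q : ℝ} {B C : Set E}

lemma IsHomogeneousMeasure.lintegral_essUpperBound_rpow_le (hμ : IsHomogeneousMeasure μ q)
    (hq : q < 0) (hB : IsOpenStarBody B) [IsFiniteMeasure (angularMeasure μ B)]
    (hC : MeasurableSet C) (hCfin : μ C ≠ ⊤) :
    ∫⁻ θ, essUpperBound (radialTrace q C θ) ^ (1 - q) ∂angularMeasure μ B ≤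
      ENNReal.ofReal (-q) * innerMinkowskiContent μ B C := by
  set A : ℝ → Set E := fun ε => (Cᶜ + ε • B) \ Cᶜ
  have hA : ∀ ε, MeasurableSet (A ε) := measurableSet_add_smul_diff hC.compl hB.isOpen
  have htrace : ∀ᵐ θ ∂angularMeasure μ B, volume (radialTrace q C θ) < ⊤ := by
    refine ae_lt_top (measurable_volume_radialTrace q hC) ?_
    rw [hμ.lintegral_volume_radialTrace hq hB hC]
    exact measure_ne_top_of_subset inter_subset_left hCfin
  have hray : ∀ᵐ θ ∂angularMeasure μ B, essUpperBound (radialTrace q C θ) ^ (1 - q) ≤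
      ENNReal.ofReal (-q) *
        liminf (fun ε => volume (radialTrace q (A ε) θ) / ENNReal.ofReal ε) (𝓝[>] 0) := by
    filter_upwards [htrace, hB.ae_gauge_eq_one μ] with θ hfin hθ
    refine (essUpperBound_rpow_le_liminf_volume_inwardCollar hq hfin.ne).trans ?_
    gcongr ENNReal.ofReal (-q) * ?_
    refine liminf_le_liminf (eventually_mem_nhdsWithin.mono fun ε hε => ?_)
    gcongr
    exact hB.inwardCollar_radialTrace_subset hq.le hθ hε C
  have hint (ε : ℝ) : ∫⁻ θ, volume (radialTrace q (A ε) θ) / ENNReal.ofReal ε ∂angularMeasure μ B ≤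
      μ (A ε) / ENNReal.ofReal ε := by
    simp only [div_eq_mul_inv]
    rw [lintegral_mul_const _ (measurable_volume_radialTrace q (hA ε)),
      hμ.lintegral_volume_radialTrace hq hB (hA ε)]
    gcongr
    exact inter_subset_left
  refine (lintegral_mono_ae hray).trans ?_
  rw [lintegral_const_mul' _ _ ENNReal.ofReal_ne_top]
  gcongr
  exact (lintegral_liminf_le fun ε =>
    (measurable_volume_radialTrace q (hA ε)).div_const _).trans
      (liminf_le_liminf (Eventually.of_forall hint))

lemma IsHomogeneousMeasure.ae_radialTrace_eq_Ioc (hμ : IsHomogeneousMeasure μ q) (hq : q < 0)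
    (hB : IsOpenStarBody B) (hB0 : μ Bᶜ ≠ 0) [IsFiniteMeasure (angularMeasure μ B)]
    (hC : MeasurableSet C) (hCfin : μ C ≠ ⊤) (hCgauge : μ (C \ Function.support (gauge B)) = 0)
    {T : ℝ} (hT : ENNReal.ofReal T = μ C / μ Bᶜ) (hle : innerMinkowskiContent μ B C ≤
      ENNReal.ofReal (-(1 / q)) * μ Bᶜ ^ q * μ C ^ (1 - q)) :
    ∀ᵐ θ ∂angularMeasure μ B, radialTrace q C θ =ᵐ[volume] Ioc 0 T := by
  have hang := hB.angularMeasure_univ μ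
  have hne : NeZero (angularMeasure μ B) := ⟨fun h => hB0 (by rw [← hang, h]; rfl)⟩
  have hBfin : μ Bᶜ ≠ ⊤ := hang ▸ measure_ne_top _ _
  have hvol : ∫⁻ θ, volume (radialTrace q C θ) ∂angularMeasure μ B = μ C := by
    rw [hμ.lintegral_volume_radialTrace hq hB hC, measure_inter_conull' hCgauge]
  have havg : ⨍⁻ θ, volume (radialTrace q C θ) ∂angularMeasure μ B = ENNReal.ofReal T := by
    rw [laverage_eq, hang, hvol, hT]
  have hjensen : ⨍⁻ θ, essUpperBound (radialTrace q C θ) ^ (1 - q) ∂angularMeasure μ B ≤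
      (⨍⁻ θ, volume (radialTrace q C θ) ∂angularMeasure μ B) ^ (1 - q) := by
    rw [havg, hT, ← ofReal_neg_mul_rpow_mul_rpow_div hq hB0 hBfin, laverage_eq, hang]
    gcongr
    exact (hμ.lintegral_essUpperBound_rpow_le hq hB hC hCfin).trans (by gcongr)
  obtain ⟨hvolT, hsupT⟩ := ae_eq_laverage_of_le_of_laverage_rpow_le (by linarith)
    (measurable_essUpperBound_radialTrace q hC).aemeasurable
    (ae_of_all _ fun θ => volume_le_essUpperBound fun _ hs => hs.1) (hvol ▸ hCfin) hjensen
  filter_upwards [hvolT, hsupT] with θ hvolθ hsupθ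
  exact ae_eq_Ioc_of_volume_eq_essUpperBound (measurableSet_radialTrace q hC θ) (fun _ hs => hs.1)
    (hvolθ.trans havg) (hsupθ.trans havg)

end Equality

theorem stmt14_general {E : Type*} [AddCommGroup E] [Module ℝ E] [TopologicalSpace E]
    [ContinuousAdd E] [ContinuousSMul ℝ E] [MeasurableSpace E] [BorelSpace E]
    [SecondCountableTopology E] {μ : Measure E} {q : ℝ} (hq : q < 0)
    (hμ : IsHomogeneousMeasure μ q) {B : Set E} (hB : IsOpenStarBody B) (hB0 : μ Bᶜ ≠ 0)
    (hBfin : μ Bᶜ ≠ ⊤) {C : Set E} (hC : MeasurableSet C) (hC0 : μ C ≠ 0) (hCfin : μ C ≠ ⊤)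
    (hle : innerMinkowskiContent μ B C ≤
      ENNReal.ofReal (-(1 / q)) * μ Bᶜ ^ q * μ C ^ (1 - q)) :
    ∃ t : ℝ, 0 < t ∧ C =ᵐ[μ] ((t • B)ᶜ : Set E) := by
  have hfin : IsFiniteMeasure (angularMeasure μ B) :=
    ⟨(hB.angularMeasure_univ μ).trans_lt hBfin.lt_top⟩
  have hCgauge : μ (C \ Function.support (gauge B)) = 0 := by
    refine hμ.measure_diff_support_gauge_eq_zero hq hB hC hCfin (ne_top_of_le_ne_top ?_ hle)
    have hp : 0 ≤ 1 - q := by linarith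
    finiteness
  have hratio : μ C / μ Bᶜ ≠ ⊤ := ENNReal.div_ne_top hCfin hB0
  set T := (μ C / μ Bᶜ).toReal
  have hT : 0 < T := ENNReal.toReal_pos (ENNReal.div_ne_zero.2 ⟨hC0, hBfin⟩) hratio
  exact ⟨T ^ q, Real.rpow_pos_of_pos hT q, hμ.ae_eq_compl_smul_of_radialTrace_ae_eq hq hB hC
    hCgauge hT (hμ.ae_radialTrace_eq_Ioc hq hB hB0 hC hCfin hCgauge
      (ENNReal.ofReal_toReal hratio) hle)⟩

/-- equality case in the isoperimetric inequality for a σ-finite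
`q`-homogeneous measure, `q < 0`: an equality set `C` must coincide with the complement of
a homothetic copy of `B` up to zero `μ`-measure. -/
theorem stmt14 (n : ℕ) (hn : 1 ≤ n) (q : ℝ) (hq : q < 0)
    (μ : Measure (Fin n → ℝ)) (hσ : SigmaFinite μ)
    (hhom : ∀ A : Set (Fin n → ℝ), MeasurableSet A → ∀ c : ℝ, 0 < c →
      μ (c • A) = ENNReal.ofReal (c ^ (1 / q)) * μ A)
    (B : Set (Fin n → ℝ)) (hBopen : IsOpen B) (hBbdd : Bornology.IsBounded B)
    (hBconv : Convex ℝ B) (h0B : (0 : Fin n → ℝ) ∈ B)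
    (hBc0 : 0 < μ Bᶜ) (hBcfin : μ Bᶜ < ⊤)
    (C : Set (Fin n → ℝ)) (hC : MeasurableSet C) (hC0 : 0 < μ C) (hCfin : μ C < ⊤)
    (heq : mInnerBoundary μ B C = ENNReal.ofReal (-(1 / q)) * μ Bᶜ ^ q * μ C ^ (1 - q)) :
    ∃ t : ℝ, 0 < t ∧ μ (C \ (t • B)ᶜ) = 0 ∧ μ ((t • B)ᶜ \ C) = 0 := by
  obtain ⟨t, ht, hCt⟩ := stmt14_general hq hhom ⟨hBopen, hBconv.starConvex h0B, h0B⟩ hBc0.ne'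
    hBcfin.ne hC hC0.ne' hCfin.ne heq.le
  exact ⟨t, ht, ae_eq_set.1 hCt⟩
end

section
/- Let φ : (0,∞) → [0,∞) be non-increasing, lower semi-continuous, non-integrable at the origin (∫₀¹ φ = ∞) and integrable at infinity (∫₁^∞ φ < ∞), and let μ be the measure φ(t)dt on ℝ₊ = [0,∞). Set Φ(t) := ∫_t^∞ φ(s)ds for t > 0, with generalized inverse Φ⁻¹(v) := inf{t > 0 : Φ(t) ≤ v}, and let B = [0,b] for some b > 0. Then for every t ≥ 0 and every Borel set A ⊆ ℝ₊ with μ(ℝ₊∖A) < ∞, μ(ℝ₊∖(A+tB)) ≤ Φ(Φ⁻¹(μ(ℝ₊∖A)) + t·Φ⁻¹(μ(ℝ₊∖B))); i.e., μ is B-one-sided Φ⁻¹-complemented concave. -/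
open MeasureTheory Set Filter
open scoped Pointwise ENNReal Topology

/-- Generalized inverse `Φ⁻¹(v) = inf {t > 0 : Φ(t) ≤ v}`, valued in `ℝ≥0∞`
(so an empty set gives `∞`). -/
noncomputable def genInvE (Φ : ℝ → ℝ) (v : ℝ) : ℝ≥0∞ :=
  ⨅ (t : ℝ) (_ : 0 < t) (_ : Φ t ≤ v), ENNReal.ofReal t

/-- Extension of a function `Φ : ℝ → ℝ` to `ℝ≥0∞` arguments, with the convention
`Φ(∞) = 0`. -/
noncomputable def phiE (Φ : ℝ → ℝ) (s : ℝ≥0∞) : ℝ :=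
  if s = ⊤ then 0 else Φ s.toReal

/-!
Write `D = ℝ₊ ∖ A`, `h = tb` and `a = Φ⁻¹(μ(D))`; left continuity of the tail `Φ` gives
`μ(D) ≤ μ((a, ∞))`. Since `μ` is infinite near `0` and `μ(D)` is finite, `D` contains no interval
`(0, x]`, so up to the origin the complement of `A + [0, h]` is the erosion
`E = {x | [x - h, x] ⊆ D}`. Let `d + h = inf E`. If `d ≥ a`, then `E ⊆ [a + h, ∞)`. If `d ≤ a`, then
`D` contains the interval `(d, d + h)` as well as `E`, and as the density is non-increasing this
interval weighs at least as much as `(a, a + h]`; removing these two intervals from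
`μ(D) ≤ μ((a, ∞))` leaves `μ(E) ≤ μ((a + h, ∞))`.
-/

section Intervals

lemma smul_Icc_zero {K : Type*} [Field K] [LinearOrder K] [IsStrictOrderedRing K] {t b : K}
    (ht : 0 ≤ t) (hb : 0 ≤ b) : t • Icc 0 b = Icc 0 (t * b) := by
  rcases ht.eq_or_lt with rfl | ht
  · rw [zero_smul_set (nonempty_Icc.2 hb), zero_mul, Icc_self, singleton_zero]
  · rw [LinearOrderedField.smul_Icc ht, mul_zero]

lemma Ici_sdiff_Icc {X : Type*} [LinearOrder X] {a b : X} (hab : a ≤ b) :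
    Ici a \ Icc a b = Ioi b := by
  ext x
  simp only [Set.mem_sdiff, mem_Ici, mem_Icc, mem_Ioi, not_and, not_le]
  exact ⟨fun hx => hx.2 hx.1, fun hx => ⟨(hab.trans_lt hx).le, fun _ => hx⟩⟩

end Intervals

section Erosion

/-- The erosion of `D` by the segment `[0, h]`, whose complement is the Minkowski sum
`Dᶜ + [0, h]`. -/
def erosion (D : Set ℝ) (h : ℝ) : Set ℝ :=
  {x | Icc (x - h) x ⊆ D}

variable {D A : Set ℝ} {h : ℝ}

lemma add_Icc_zero_eq_compl_erosion (A : Set ℝ) (h : ℝ) : A + Icc 0 h = (erosion Aᶜ h)ᶜ := by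
  ext x
  simp only [erosion, mem_compl_iff, mem_ofPred_eq, not_subset, Set.mem_add, not_not]
  constructor
  · rintro ⟨y, hy, s, hs, rfl⟩
    exact ⟨y, ⟨by linarith [hs.2], by linarith [hs.1]⟩, hy⟩
  · rintro ⟨y, hy, hyA⟩
    exact ⟨y, hyA, x - y, ⟨by linarith [hy.2], by linarith [hy.1]⟩, by ring⟩

lemma Ici_sdiff_add_Icc_zero_subset (hA : ∀ x : ℝ, 0 < x → ¬ Ioc 0 x ⊆ Ici 0 \ A) :
    Ici 0 \ (A + Icc 0 h) ⊆ insert 0 (erosion (Ici 0 \ A) h) := by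
  rintro x ⟨hx0, hx⟩
  rw [add_Icc_zero_eq_compl_erosion, mem_compl_iff, not_not] at hx
  rcases (mem_Ici.1 hx0).eq_or_lt with rfl | hx0
  · exact mem_insert _ _
  have hhx : h ≤ x := by
    by_contra! hxh
    exact hA x hx0 fun y hy => ⟨hy.1.le, hx ⟨by linarith [hy.1], hy.2⟩⟩
  exact mem_insert_of_mem _ fun y hy => ⟨(sub_nonneg.2 hhx).trans hy.1, hx hy⟩

lemma exists_union_Ioo_subset_of_erosion_nonempty (hD : D ⊆ Ici 0) (hh : 0 ≤ h)
    (hne : (erosion D h).Nonempty) :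
    ∃ d, 0 ≤ d ∧ erosion D h ⊆ Ici (d + h) ∧ erosion D h ∪ Ioo d (d + h) ⊆ D := by
  have hge : ∀ x ∈ erosion D h, h ≤ x := fun x hx =>
    sub_nonneg.1 (hD (hx ⟨le_rfl, sub_le_self x hh⟩))
  have hinf : ∀ x ∈ erosion D h, sInf (erosion D h) ≤ x := fun x hx => csInf_le ⟨h, hge⟩ hx
  refine ⟨sInf (erosion D h) - h, sub_nonneg.2 (le_csInf hne hge), ?_, union_subset ?_ ?_⟩
  · exact fun x hx => mem_Ici.2 ((sub_add_cancel _ _).trans_le (hinf x hx))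
  · exact fun x hx => hx ⟨sub_le_self x hh, le_rfl⟩
  · rintro y ⟨hdy, hyd⟩
    obtain ⟨x, hx, hxy⟩ := exists_lt_of_csInf_lt hne (sub_lt_iff_lt_add.1 hdy)
    exact hx ⟨by linarith, by linarith [hinf x hx]⟩

variable {μ : Measure ℝ}

lemma not_Ioc_subset_of_measure_ne_top {c x : ℝ} (hcx : c ≤ x) (hc : μ (Ioi c) = ⊤)
    (hx : μ (Ioi x) ≠ ⊤) (hD : μ D ≠ ⊤) : ¬ Ioc c x ⊆ D := fun hsub =>
  (measure_union_lt_top (measure_lt_top_of_subset hsub hD) hx.lt_top).ne <| by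
    rw [Ioc_union_Ioi_eq_Ioi hcx, hc]

variable [NullSingletonClass μ]

lemma measure_erosion_le (hh : 0 ≤ h)
    (hshift : ∀ d a, 0 ≤ d → d ≤ a → μ (Ioc a (a + h)) ≤ μ (Ioc d (d + h)))
    (hD : D ⊆ Ici 0) {a : ℝ} (ha : μ (Ioi a) ≠ ⊤) (hDa : μ D ≤ μ (Ioi a)) :
    μ (erosion D h) ≤ μ (Ioi (a + h)) := by
  rcases (erosion D h).eq_empty_or_nonempty with hE | hE
  · simp only [hE, measure_empty, zero_le]
  obtain ⟨d, hd, hEd, hsub⟩ := exists_union_Ioo_subset_of_erosion_nonempty hD hh hE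
  rcases le_total a d with had | hda
  · calc μ (erosion D h) ≤ μ (Ici (a + h)) :=
          measure_mono (hEd.trans (Ici_subset_Ici.2 (by gcongr)))
      _ = μ (Ioi (a + h)) := measure_congr Ioi_ae_eq_Ici.symm
  · have hIoc : μ (Ioc a (a + h)) ≠ ⊤ := measure_ne_top_of_subset Ioc_subset_Ioi_self ha
    have hdisj : Disjoint (erosion D h) (Ioo d (d + h)) :=
      disjoint_left.2 fun x hx hx' => (hEd hx).not_gt hx'.2
    refine (ENNReal.add_le_add_iff_right hIoc).1 ?_
    calc μ (erosion D h) + μ (Ioc a (a + h))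
      _ ≤ μ (erosion D h) + μ (Ioo d (d + h)) := by
          rw [measure_congr (Ioo_ae_eq_Ioc (μ := μ))]
          exact add_le_add_right (hshift d a hd hda) _
      _ = μ (erosion D h ∪ Ioo d (d + h)) := (measure_union hdisj measurableSet_Ioo).symm
      _ ≤ μ (Ioi a) := (measure_mono hsub).trans hDa
      _ = μ (Ioi (a + h)) + μ (Ioc a (a + h)) := by
          rw [← Ioc_union_Ioi_eq_Ioi (le_add_of_nonneg_right hh),
            measure_union Ioc_disjoint_Ioi_same measurableSet_Ioi, add_comm]

lemma measure_Ici_sdiff_add_Icc_zero_le (hh : 0 ≤ h)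
    (hshift : ∀ d a, 0 ≤ d → d ≤ a → μ (Ioc a (a + h)) ≤ μ (Ioc d (d + h)))
    (hzero : μ (Ioi 0) = ⊤) (hfin : ∀ x, 0 < x → μ (Ioi x) ≠ ⊤) {a : ℝ} (ha : 0 < a)
    (hAa : μ (Ici 0 \ A) ≤ μ (Ioi a)) :
    μ (Ici 0 \ (A + Icc 0 h)) ≤ μ (Ioi (a + h)) :=
  calc μ (Ici 0 \ (A + Icc 0 h))
    _ ≤ μ (insert 0 (erosion (Ici 0 \ A) h)) :=
        measure_mono <| Ici_sdiff_add_Icc_zero_subset fun x hx =>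
          not_Ioc_subset_of_measure_ne_top hx.le hzero (hfin x hx)
            (ne_top_of_le_ne_top (hfin a ha) hAa)
    _ = μ (erosion (Ici 0 \ A) h) := measure_congr (insert_ae_eq_self 0 _)
    _ ≤ μ (Ioi (a + h)) := measure_erosion_le hh hshift sdiff_subset (hfin a ha) hAa

end Erosion

section GeneralizedInverse

variable {Φ : ℝ → ℝ} {v t : ℝ}

lemma genInvE_le (ht : 0 < t) (htv : Φ t ≤ v) : genInvE Φ v ≤ ENNReal.ofReal t :=
  iInf₂_le_of_le t ht (iInf_le _ htv)

lemma lt_of_ofReal_lt_genInvE (ht : 0 < t) (htv : ENNReal.ofReal t < genInvE Φ v) : v < Φ t :=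
  not_le.1 fun hle => htv.not_ge (genInvE_le ht hle)

lemma genInvE_pos (hΦ : Tendsto Φ (𝓝[>] 0) atTop) (v : ℝ) : 0 < genInvE Φ v := by
  obtain ⟨ε, hε, hΦε⟩ := mem_nhdsGT_iff_exists_Ioo_subset.1 (hΦ.eventually_gt_atTop v)
  have hle : ENNReal.ofReal ε ≤ genInvE Φ v :=
    le_iInf₂ fun t ht => le_iInf fun htv =>
      ENNReal.ofReal_le_ofReal <| not_lt.1 fun htε => (hΦε ⟨ht, htε⟩).not_ge htv
  exact (ENNReal.ofReal_pos.2 hε).trans_le hle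

lemma phiE_top (Φ : ℝ → ℝ) : phiE Φ ⊤ = 0 :=
  if_pos rfl

lemma phiE_ofReal (Φ : ℝ → ℝ) (ht : 0 ≤ t) : phiE Φ (ENNReal.ofReal t) = Φ t := by
  rw [phiE, if_neg ENNReal.ofReal_ne_top, ENNReal.toReal_ofReal ht]

lemma antitoneOn_phiE (hΦ : AntitoneOn Φ (Ioi 0)) (hΦ0 : ∀ t, 0 < t → 0 ≤ Φ t) :
    AntitoneOn (phiE Φ) (Ioi 0) := by
  intro r hr s hs hrs
  have htoReal : ∀ {x : ℝ≥0∞}, x ∈ Ioi 0 → x ≠ ⊤ → 0 < x.toReal := fun hx hx' =>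
    ENNReal.toReal_pos (mem_Ioi.1 hx).ne' hx'
  unfold phiE
  split_ifs with hs' hr' hr'
  · rfl
  · exact hΦ0 _ (htoReal hr hr')
  · exact absurd (top_unique (hr' ▸ hrs)) hs'
  · exact hΦ (htoReal hr hr') (htoReal hs hs') (ENNReal.toReal_mono hs' hrs)

lemma le_phiE_genInvE (hcont : ContinuousOn Φ (Ioi 0)) (hlim : Tendsto Φ atTop (𝓝 0))
    (hpos : 0 < genInvE Φ v) : v ≤ phiE Φ (genInvE Φ v) := by
  rcases eq_or_ne (genInvE Φ v) ⊤ with htop | htop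
  · rw [htop, phiE_top]
    refine ge_of_tendsto hlim ?_
    filter_upwards [eventually_gt_atTop 0] with t ht
    exact (lt_of_ofReal_lt_genInvE ht (htop ▸ ENNReal.ofReal_lt_top)).le
  · have ha : 0 < (genInvE Φ v).toReal := ENNReal.toReal_pos hpos.ne' htop
    rw [phiE, if_neg htop]
    have hleft : Tendsto Φ (𝓝[<] (genInvE Φ v).toReal) (𝓝 (Φ (genInvE Φ v).toReal)) :=
      (hcont.continuousAt (Ioi_mem_nhds ha)).continuousWithinAt
    refine ge_of_tendsto hleft ?_
    filter_upwards [Ioo_mem_nhdsLT ha] with t ht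
    exact (lt_of_ofReal_lt_genInvE ht.1 ((ENNReal.ofReal_lt_iff_lt_toReal ht.1.le htop).2 ht.2)).le

end GeneralizedInverse

section TailIntegral

variable {φ : ℝ → ℝ} {a : ℝ}

lemma integrableOn_Ioi_of_antitoneOn (hφ : AntitoneOn φ (Ioi a)) (hφ0 : ∀ t, a < t → 0 ≤ φ t)
    {c : ℝ} (hac : a ≤ c) (hc : ∫⁻ t in Ioi c, ENNReal.ofReal (φ t) < ⊤) {t : ℝ} (ht : a < t) :
    IntegrableOn φ (Ioi t) := by
  have hIcc : IntegrableOn φ (Icc t c) :=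
    (hφ.mono fun _ hx => ht.trans_le hx.1).integrableOn_isCompact isCompact_Icc
  have hIoi : IntegrableOn φ (Ioi c) := by
    have hsub : Ioi c ⊆ Ioi a := Ioi_subset_Ioi hac
    refine (lintegral_ofReal_ne_top_iff_integrable
      (aemeasurable_restrict_of_antitoneOn measurableSet_Ioi
        (hφ.mono hsub)).aestronglyMeasurable ?_).1 hc.ne
    exact ae_restrict_of_forall_mem measurableSet_Ioi fun x hx => hφ0 x (hsub hx)
  refine (hIcc.union hIoi).mono_set fun x hx => ?_
  exact (le_or_gt x c).imp (fun hxc => ⟨hx.le, hxc⟩) id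

lemma continuousOn_integral_Ioi (hφ : ∀ t, a < t → IntegrableOn φ (Ioi t)) :
    ContinuousOn (fun t => ∫ s in Ioi t, φ s) (Ioi a) := by
  intro t ht
  obtain ⟨c, hac, hct⟩ := exists_between (mem_Ioi.1 ht)
  exact ((hφ c hac).continuousOn_Ici_primitive_Ioi.continuousAt
    (Ici_mem_nhds hct)).continuousWithinAt

lemma antitoneOn_integral_Ioi (hφ : ∀ t, a < t → IntegrableOn φ (Ioi t))
    (hφ0 : ∀ t, a < t → 0 ≤ φ t) : AntitoneOn (fun t => ∫ s in Ioi t, φ s) (Ioi a) :=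
  fun s hs _ _ hst => setIntegral_mono_set (hφ s hs)
    (ae_restrict_of_forall_mem measurableSet_Ioi fun x hx => hφ0 x (hs.trans hx))
    (Ioi_subset_Ioi hst).eventuallyLE

lemma ofReal_integral_Ioi {t : ℝ} (hφ : IntegrableOn φ (Ioi t)) (hφ0 : ∀ s, t < s → 0 ≤ φ s) :
    ENNReal.ofReal (∫ s in Ioi t, φ s) = ∫⁻ s in Ioi t, ENNReal.ofReal (φ s) :=
  ofReal_integral_eq_lintegral_ofReal hφ (ae_restrict_of_forall_mem measurableSet_Ioi hφ0)

lemma tendsto_integral_Ioi_atTop (hφ : ∀ t, a < t → IntegrableOn φ (Ioi t))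
    (hφ0 : ∀ t, a < t → 0 ≤ φ t) (htop : ∫⁻ t in Ioi a, ENNReal.ofReal (φ t) = ⊤) :
    Tendsto (fun t => ∫ s in Ioi t, φ s) (𝓝[>] a) atTop := by
  rw [← ENNReal.tendsto_ofReal_nhds_top, ← htop]
  have hcover : AECover (volume.restrict (Ioi a)) (𝓝[>] a) fun t => Ioi t :=
    aecover_Ioi_of_Ioi (tendsto_id.mono_left nhdsWithin_le_nhds)
  obtain ⟨u, -, hau, hu⟩ := exists_seq_strictAnti_tendsto a
  have hmeas : AEMeasurable φ (volume.restrict (Ioi a)) :=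
    (aecover_Ioi_of_Ioi hu).aemeasurable fun n => (hφ (u n) (hau n)).aemeasurable.mono_measure <|
      Measure.restrict_mono_measure Measure.restrict_le_self _
  refine (hcover.lintegral_tendsto_of_countably_generated hmeas.ennreal_ofReal).congr' ?_
  filter_upwards [self_mem_nhdsWithin] with t ht
  rw [Measure.restrict_restrict measurableSet_Ioi, Ioi_inter_Ioi, sup_eq_left.2 (le_of_lt ht),
    ofReal_integral_Ioi (hφ t ht) fun s hs => hφ0 s (lt_trans ht hs)]

end TailIntegral

section HalfLine

lemma withDensity_Ioc_le_of_antitoneOn {g : ℝ → ℝ≥0∞} {d a : ℝ} (hg : AntitoneOn g (Ioi d))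
    (hda : d ≤ a) (h : ℝ) :
    volume.withDensity g (Ioc a (a + h)) ≤ volume.withDensity g (Ioc d (d + h)) := by
  rw [withDensity_apply _ measurableSet_Ioc, withDensity_apply _ measurableSet_Ioc]
  calc ∫⁻ x in Ioc a (a + h), g x
    _ = ∫⁻ x in Ioc d (d + h), g (x + (a - d)) := by
        rw [← (measurePreserving_add_right volume (a - d)).setLIntegral_comp_preimage_emb
          (measurableEmbedding_addRight _), preimage_add_const_Ioc]
        congr 3 <;> ring
    _ ≤ ∫⁻ x in Ioc d (d + h), g x := setLIntegral_mono' measurableSet_Ioc fun x hx =>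
        hg hx.1 (mem_Ioi.2 (by linarith [hx.1])) (by linarith)

/-- The measure `φ(t)dt` on the half-line `ℝ₊`, as a measure on `ℝ` with density `0` on
`(-∞, 0]`. -/
noncomputable def halfLineMeasure (φ : ℝ → ℝ) : Measure ℝ :=
  volume.withDensity fun t => if 0 < t then ENNReal.ofReal (φ t) else 0

variable {φ : ℝ → ℝ}

instance : NullSingletonClass (halfLineMeasure φ) :=
  nullSingletonClass_withDensity _

lemma halfLineMeasure_Ioi {t : ℝ} (ht : 0 ≤ t) :
    halfLineMeasure φ (Ioi t) = ∫⁻ s in Ioi t, ENNReal.ofReal (φ s) := by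
  rw [halfLineMeasure, withDensity_apply _ measurableSet_Ioi]
  exact setLIntegral_congr_fun measurableSet_Ioi fun s hs => if_pos (ht.trans_lt hs)

lemma halfLineMeasure_Ioc_le (hφ : AntitoneOn φ (Ioi 0)) {d a : ℝ} (h : ℝ) (hd : 0 ≤ d)
    (hda : d ≤ a) : halfLineMeasure φ (Ioc a (a + h)) ≤ halfLineMeasure φ (Ioc d (d + h)) := by
  refine withDensity_Ioc_le_of_antitoneOn (fun s hs t ht hst => ?_) hda h
  have hs0 : 0 < s := hd.trans_lt hs
  have ht0 : 0 < t := hd.trans_lt ht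
  simp only [hs0, ht0, if_true]
  exact ENNReal.ofReal_le_ofReal (hφ hs0 ht0 hst)

end HalfLine

lemma measure_Ici_sdiff_add_Icc_zero_le_phiE {μ : Measure ℝ} [NullSingletonClass μ] {Φ : ℝ → ℝ}
    {A : Set ℝ} {h : ℝ} {α : ℝ≥0∞} (hh : 0 ≤ h)
    (hshift : ∀ d a, 0 ≤ d → d ≤ a → μ (Ioc a (a + h)) ≤ μ (Ioc d (d + h)))
    (hzero : μ (Ioi 0) = ⊤) (hμΦ : ∀ s, 0 < s → μ (Ioi s) = ENNReal.ofReal (Φ s))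
    (hα : 0 < α) (hAα : μ (Ici 0 \ A) ≤ ENNReal.ofReal (phiE Φ α)) :
    μ (Ici 0 \ (A + Icc 0 h)) ≤ ENNReal.ofReal (phiE Φ (α + ENNReal.ofReal h)) := by
  rcases eq_or_ne α ⊤ with rfl | hα_top
  · rw [top_add]
    have hsub : A ⊆ A + Icc 0 h := subset_add_left A (left_mem_Icc.2 hh)
    exact (measure_mono (sdiff_subset_sdiff_right hsub)).trans hAα
  · have ha : 0 < α.toReal := ENNReal.toReal_pos hα.ne' hα_top
    have hah : 0 < α.toReal + h := add_pos_of_pos_of_nonneg ha hh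
    rw [← ENNReal.ofReal_toReal hα_top] at hAα ⊢
    rw [← ENNReal.ofReal_add ha.le hh, phiE_ofReal Φ hah.le, ← hμΦ _ hah]
    refine measure_Ici_sdiff_add_Icc_zero_le hh hshift hzero
      (fun s hs => hμΦ s hs ▸ ENNReal.ofReal_ne_top) ha ?_
    rwa [hμΦ _ ha, ← phiE_ofReal Φ ha.le]

lemma measure_Ici_sdiff_add_smul_Icc_zero_le {μ : Measure ℝ} [NullSingletonClass μ] {Φ : ℝ → ℝ}
    (hshift : ∀ d a h : ℝ, 0 ≤ d → d ≤ a → μ (Ioc a (a + h)) ≤ μ (Ioc d (d + h)))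
    (hμΦ : ∀ s, 0 < s → μ (Ioi s) = ENNReal.ofReal (Φ s)) (hanti : AntitoneOn Φ (Ioi 0))
    (hcont : ContinuousOn Φ (Ioi 0)) (hΦ_zero : Tendsto Φ (𝓝[>] 0) atTop)
    (hΦ_top : Tendsto Φ atTop (𝓝 0)) {b t : ℝ} (hb : 0 < b) (ht : 0 ≤ t) {A : Set ℝ}
    (hA : μ (Ici 0 \ A) < ⊤) :
    μ (Ici 0 \ (A + t • Icc 0 b)) ≤
      ENNReal.ofReal (phiE Φ (genInvE Φ (μ (Ici 0 \ A)).toReal +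
        ENNReal.ofReal t * genInvE Φ (μ (Ici 0 \ Icc 0 b)).toReal)) := by
  set α := genInvE Φ (μ (Ici 0 \ A)).toReal
  have hΦ_nonneg : ∀ s, 0 < s → 0 ≤ Φ s := fun s hs => le_of_tendsto hΦ_top <|
    (eventually_ge_atTop s).mono fun r hsr => hanti hs (hs.trans_le hsr) hsr
  have hzero : μ (Ioi 0) = ⊤ := by
    refine top_unique (le_of_tendsto (ENNReal.tendsto_ofReal_nhds_top.2 hΦ_zero) ?_)
    filter_upwards [self_mem_nhdsWithin] with s hs
    exact (hμΦ s hs).ge.trans (measure_mono (Ioi_subset_Ioi (le_of_lt hs)))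
  have hα : 0 < α := genInvE_pos hΦ_zero _
  have hAα : μ (Ici 0 \ A) ≤ ENNReal.ofReal (phiE Φ α) :=
    (ENNReal.ofReal_toReal hA.ne).ge.trans <|
      ENNReal.ofReal_le_ofReal (le_phiE_genInvE hcont hΦ_top hα)
  have hβ : genInvE Φ (μ (Ici 0 \ Icc 0 b)).toReal ≤ ENNReal.ofReal b := by
    rw [Ici_sdiff_Icc hb.le, hμΦ b hb]
    exact genInvE_le hb (ENNReal.toReal_ofReal (hΦ_nonneg b hb)).ge
  calc μ (Ici 0 \ (A + t • Icc 0 b))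
    _ = μ (Ici 0 \ (A + Icc 0 (t * b))) := by rw [smul_Icc_zero ht hb.le]
    _ ≤ ENNReal.ofReal (phiE Φ (α + ENNReal.ofReal (t * b))) :=
        measure_Ici_sdiff_add_Icc_zero_le_phiE (mul_nonneg ht hb.le)
          (fun d a => hshift d a (t * b)) hzero hμΦ hα hAα
    _ ≤ _ := by
        refine ENNReal.ofReal_le_ofReal <| antitoneOn_phiE hanti hΦ_nonneg
          (hα.trans_le le_self_add) (hα.trans_le le_self_add) ?_
        rw [ENNReal.ofReal_mul ht]
        gcongr

theorem stmt16_general {φ : ℝ → ℝ} (hφ0 : ∀ t, 0 < t → 0 ≤ φ t) (hφ : AntitoneOn φ (Ioi 0))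
    (hint0 : ∫⁻ t in Ioo (0 : ℝ) 1, ENNReal.ofReal (φ t) = ⊤)
    (hintinf : ∫⁻ t in Ioi (1 : ℝ), ENNReal.ofReal (φ t) < ⊤)
    {Φ : ℝ → ℝ} (hΦ : EqOn Φ (fun t => ∫ s in Ioi t, φ s) (Ioi 0))
    {b t : ℝ} (hb : 0 < b) (ht : 0 ≤ t) {A : Set ℝ} (hA : halfLineMeasure φ (Ici 0 \ A) < ⊤) :
    halfLineMeasure φ (Ici 0 \ (A + t • Icc 0 b)) ≤
      ENNReal.ofReal (phiE Φ (genInvE Φ (halfLineMeasure φ (Ici 0 \ A)).toReal +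
        ENNReal.ofReal t * genInvE Φ (halfLineMeasure φ (Ici 0 \ Icc 0 b)).toReal)) := by
  have hφint : ∀ s, 0 < s → IntegrableOn φ (Ioi s) := fun s =>
    integrableOn_Ioi_of_antitoneOn hφ hφ0 zero_le_one hintinf
  have hμΦ : ∀ s, 0 < s → halfLineMeasure φ (Ioi s) = ENNReal.ofReal (Φ s) := fun s hs => by
    rw [halfLineMeasure_Ioi hs.le, hΦ hs,
      ofReal_integral_Ioi (hφint s hs) fun x hx => hφ0 x (hs.trans hx)]
  have hφ_top : ∫⁻ s in Ioi (0 : ℝ), ENNReal.ofReal (φ s) = ⊤ :=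
    top_unique (hint0.ge.trans (lintegral_mono_set Ioo_subset_Ioi_self))
  have hΦ_zero : Tendsto Φ (𝓝[>] 0) atTop :=
    (tendsto_integral_Ioi_atTop hφint hφ0 hφ_top).congr' hΦ.eventuallyEq_nhdsWithin.symm
  have hΦ_top : Tendsto Φ atTop (𝓝 0) :=
    (tendsto_congr' (hΦ.eventuallyEq_of_mem (Ioi_mem_atTop 0))).2
      (tendsto_integral_Ioi_zero tendsto_id)
  exact measure_Ici_sdiff_add_smul_Icc_zero_le (fun _ _ h => halfLineMeasure_Ioc_le hφ h) hμΦ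
    ((antitoneOn_integral_Ioi hφint hφ0).congr hΦ.symm)
    ((continuousOn_integral_Ioi hφint).congr hΦ) hΦ_zero hΦ_top hb ht hA

/-- one-dimensional one-sided complemented Brunn--Minkowski inequality: for
`μ = φ(t)dt` on `ℝ₊` with `φ` non-increasing, lower semi-continuous, non-integrable at `0`
and integrable at `∞`, and `B = [0,b]`,
`μ(ℝ₊∖(A+tB)) ≤ Φ(Φ⁻¹(μ(ℝ₊∖A)) + tΦ⁻¹(μ(ℝ₊∖B)))`. -/
theorem stmt16 (φ : ℝ → ℝ) (hφm : Measurable φ) (hφ0 : ∀ t : ℝ, 0 < t → 0 ≤ φ t)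
    (hφmono : ∀ s t : ℝ, 0 < s → s ≤ t → φ t ≤ φ s)
    (hφlsc : LowerSemicontinuousOn φ (Set.Ioi 0))
    (hint0 : ∫⁻ t in Set.Ioo (0 : ℝ) 1, ENNReal.ofReal (φ t) = ⊤)
    (hintinf : ∫⁻ t in Set.Ioi (1 : ℝ), ENNReal.ofReal (φ t) < ⊤)
    (μ : Measure ℝ)
    (hμ : μ = volume.withDensity fun t => if 0 < t then ENNReal.ofReal (φ t) else 0)
    (Φ : ℝ → ℝ) (hΦ : ∀ t : ℝ, 0 < t → Φ t = ∫ s in Set.Ioi t, φ s)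
    (b : ℝ) (hb : 0 < b) :
    ∀ t : ℝ, 0 ≤ t → ∀ A : Set ℝ, MeasurableSet A → A ⊆ Set.Ici 0 →
      μ (Set.Ici 0 \ A) < ⊤ →
      μ (Set.Ici 0 \ (A + t • Set.Icc (0 : ℝ) b)) ≤
        ENNReal.ofReal (phiE Φ
          (genInvE Φ (μ (Set.Ici 0 \ A)).toReal +
            ENNReal.ofReal t * genInvE Φ (μ (Set.Ici 0 \ Set.Icc (0 : ℝ) b)).toReal)) := by
  subst hμ
  exact fun t ht A _ _ hA => stmt16_general hφ0 (fun s hs t _ hst => hφmono s t hs hst)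
    hint0 hintinf hΦ hb ht hA
end
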